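/- arXiv:2603.26038 — 4 statements merged into one kernel-verified Lean document; each statement's English description precedes it below -/
import Mathlib

section
/- There exist R* > 0, c* > 0 and a continuously differentiable function θ* : ℝ → ℝ with the following properties: θ* is strictly increasing on ℝ; θ*(0) = θ_ig and θ*(R*) = θ_hl; θ* is twice continuously differentiable on each of (−∞,0), (0,R*), (R*,+∞) and satisfies θ*'' − c*·θ*' = 0 on (−∞,0), θ*'' − c*·θ*' + q = 0 on (0,R*), and θ*'' − c*·θ*' + q − h((1+θ*)⁴ − 1) = 0 on (R*,+∞); θ*(x) → 0 as x → −∞ and θ*(x) → θ₊ as x → +∞. Moreover the pair (R*, c*) is unique, and θ* is the unique such profile normalized by θ*(0) = θ_ig (i.e. unique up to translation). -/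
open Set Filter

/-- The free-interface traveling-front conditions: `θ` is a globally `C¹`, strictly
increasing profile with ignition interface at `0`, heat-loss interface at `R`,
which is `C²` and satisfies the appropriate ODE on each of the three regions,
and has the prescribed limits at `±∞`. -/
def IsAutoignitionFront (q h θig θhl θp : ℝ) (R c : ℝ) (θ : ℝ → ℝ) : Prop :=
  ContDiff ℝ 1 θ ∧
  StrictMono θ ∧
  θ 0 = θig ∧
  θ R = θhl ∧
  ContDiffOn ℝ 2 θ (Iio 0) ∧
  ContDiffOn ℝ 2 θ (Ioo 0 R) ∧
  ContDiffOn ℝ 2 θ (Ioi R) ∧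
  (∀ x ∈ Iio (0 : ℝ), deriv (deriv θ) x - c * deriv θ x = 0) ∧
  (∀ x ∈ Ioo (0 : ℝ) R, deriv (deriv θ) x - c * deriv θ x + q = 0) ∧
  (∀ x ∈ Ioi R, deriv (deriv θ) x - c * deriv θ x + q - h * ((1 + θ x) ^ 4 - 1) = 0) ∧
  Tendsto θ atBot (nhds 0) ∧
  Tendsto θ atTop (nhds θp)

/-- A bounded Lipschitz autonomous vector field has a global integral curve through each point. -/
theorem exists_global_integral_curve {E : Type*} [NormedAddCommGroup E] [NormedSpace ℝ E]
    [CompleteSpace E] {W : E → E} {K L : NNReal} (hK : LipschitzWith K W)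
    (hL : ∀ x, ‖W x‖ ≤ L) (x : E) :
    ∃ α : ℝ → E, α 0 = x ∧ ∀ t, HasDerivAt α (W (α t)) t := by
  have key : ∀ n : ℕ, ∃ α : ℝ → E, α 0 = x ∧
      ∀ t ∈ Ioo (-((n : ℝ) + 1)) ((n : ℝ) + 1), HasDerivAt α (W (α t)) t := by
    intro n
    have hn : (0 : ℝ) ≤ n := n.cast_nonneg
    have hp : IsPicardLindelof (fun _ => W) (tmin := -((n : ℝ) + 1)) (tmax := (n : ℝ) + 1)
        ⟨0, by constructor <;> linarith⟩ x (L * (n + 1)) 0 L K := by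
      apply IsPicardLindelof.of_time_independent
      · exact fun y _ => hL y
      · exact hK.lipschitzOnWith
      · simp
    obtain ⟨α, h0, hα⟩ := hp.exists_eq_forall_mem_Icc_hasDerivWithinAt₀
    exact ⟨α, h0, fun t ht => (hα t (Ioo_subset_Icc_self ht)).hasDerivAt
      (Icc_mem_nhds ht.1 ht.2)⟩
  choose α h0 hα using key
  have huniq : ∀ n m : ℕ, n ≤ m → EqOn (α n) (α m) (Ioo (-((n : ℝ) + 1)) ((n : ℝ) + 1)) := by
    intro n m hnm
    have hnm' : (n : ℝ) ≤ m := by exact_mod_cast hnm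
    have hn : (0 : ℝ) ≤ n := n.cast_nonneg
    exact ODE_solution_unique_of_mem_Ioo (v := fun _ => W) (s := fun _ => univ) (t₀ := 0)
      (fun t _ => hK.lipschitzOnWith) (by constructor <;> linarith)
      (fun t ht => ⟨hα n t ht, trivial⟩)
      (fun t ht => ⟨hα m t ⟨by linarith [ht.1], by linarith [ht.2]⟩, trivial⟩)
      (by rw [h0, h0])
  refine ⟨fun t => α ⌈|t|⌉₊ t, by simp [h0], fun t => ?_⟩
  have hloc : ∀ s ∈ Ioo (-((⌈|t|⌉₊ : ℝ) + 1)) ((⌈|t|⌉₊ : ℝ) + 1),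
      α ⌈|s|⌉₊ s = α ⌈|t|⌉₊ s := by
    intro s hs
    rcases le_total ⌈|s|⌉₊ ⌈|t|⌉₊ with h | h
    · apply huniq _ _ h
      have := abs_le.1 (Nat.le_ceil |s|)
      constructor <;> linarith [this.1, this.2]
    · exact (huniq _ _ h hs).symm
  have ht : t ∈ Ioo (-((⌈|t|⌉₊ : ℝ) + 1)) ((⌈|t|⌉₊ : ℝ) + 1) := by
    have := abs_le.1 (Nat.le_ceil |t|)
    constructor <;> linarith [this.1, this.2]
  exact (hα _ t ht).congr_of_eventuallyEq
    (eventually_of_mem (Ioo_mem_nhds ht.1 ht.2) hloc)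

/-- Integral curves of a Lipschitz field depend continuously on the initial point. -/
theorem continuous_integral_curve_apply {E : Type*} [NormedAddCommGroup E] [NormedSpace ℝ E]
    {W : E → E} {K : NNReal} (hK : LipschitzWith K W) {Φ : E → ℝ → E}
    (h0 : ∀ x, Φ x 0 = x) (hΦ : ∀ x t, HasDerivAt (Φ x) (W (Φ x t)) t) {t : ℝ} (ht : 0 ≤ t) :
    Continuous fun x => Φ x t := by
  have h : LipschitzWith (Real.exp (K * t)).toNNReal fun x => Φ x t := by
    refine LipschitzWith.of_dist_le_mul fun x y => ?_
    have hc : ∀ z, Continuous (Φ z) := fun z =>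
      continuous_iff_continuousAt.2 fun s => (hΦ z s).continuousAt
    have := dist_le_of_trajectories_ODE (v := fun _ => W) (a := 0) (b := t) (δ := dist x y)
      (fun _ => hK) (hc x).continuousOn (fun s _ => (hΦ x s).hasDerivWithinAt)
      (hc y).continuousOn (fun s _ => (hΦ y s).hasDerivWithinAt) (by rw [h0, h0]) t ⟨ht, le_rfl⟩
    rw [Real.coe_toNNReal _ (Real.exp_pos _).le, mul_comm]
    simpa using this
  exact h.continuous

/-- The first-order system for `(θ, θ', c)` with heat loss, truncated to the box
`[0, M] × [-P, P] × [0, C]`. -/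
noncomputable def clampedField (f : ℝ → ℝ) (M P C : ℝ) (x : ℝ × ℝ × ℝ) : ℝ × ℝ × ℝ :=
  (max (-P) (min P x.2.1),
    max 0 (min C x.2.2) * max (-P) (min P x.2.1) + f (max 0 (min M x.1)), 0)

theorem clampedField_lipschitz_bounded {f : ℝ → ℝ} (hf : ContDiff ℝ 1 f) (M P C : ℝ) :
    ∃ K L : NNReal, LipschitzWith K (clampedField f M P C) ∧
      ∀ x, ‖clampedField f M P C x‖ ≤ L := by
  let V : ℝ × ℝ × ℝ → ℝ × ℝ × ℝ := fun x => (x.2.1, x.2.2 * x.2.1 + f x.1, 0)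
  let π : ℝ × ℝ × ℝ → ℝ × ℝ × ℝ := fun x =>
    (max 0 (min M x.1), max (-P) (min P x.2.1), max 0 (min C x.2.2))
  let S : Set (ℝ × ℝ × ℝ) := Icc 0 (max 0 M) ×ˢ Icc (-P) (max (-P) P) ×ˢ Icc 0 (max 0 C)
  have hS : IsCompact S := isCompact_Icc.prod (isCompact_Icc.prod isCompact_Icc)
  have hπ : ∀ x, π x ∈ S := by
    intro x
    simp only [π, S, mem_prod, mem_Icc]
    refine ⟨⟨le_max_left _ _, max_le_max le_rfl (min_le_left _ _)⟩,
      ⟨le_max_left _ _, max_le_max le_rfl (min_le_left _ _)⟩,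
      ⟨le_max_left _ _, max_le_max le_rfl (min_le_left _ _)⟩⟩
  have hV : ContDiff ℝ 1 V := by
    simp only [V]
    fun_prop
  obtain ⟨K, hK⟩ := LocallyLipschitzOn.exists_lipschitzOnWith_of_compact hS
    (hV.locallyLipschitz.locallyLipschitzOn (s := S))
  obtain ⟨L, hL⟩ := hS.exists_bound_of_continuousOn hV.continuous.continuousOn
  have hπL : LipschitzWith 1 π := by
    have h := ((LipschitzWith.prod_fst (α := ℝ) (β := ℝ × ℝ)).const_min M).const_max 0 |>.prodMk
      ((((LipschitzWith.prod_fst (α := ℝ) (β := ℝ)).comp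
        (LipschitzWith.prod_snd (α := ℝ) (β := ℝ × ℝ))).const_min P).const_max (-P) |>.prodMk
      ((((LipschitzWith.prod_snd (α := ℝ) (β := ℝ)).comp
        (LipschitzWith.prod_snd (α := ℝ) (β := ℝ × ℝ))).const_min C).const_max 0))
    simpa using h
  refine ⟨K, L.toNNReal, ?_, fun x => (hL _ (hπ x)).trans (Real.le_coe_toNNReal L)⟩
  have := hK.comp (hπL.lipschitzOnWith (s := univ)) (fun x _ => hπ x)
  rw [lipschitzOnWith_univ, mul_one] at this
  exact this
/-- If `D` starts positive and is nondecreasing wherever it is positive, it stays above its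
initial value. -/
theorem le_of_deriv_nonneg_of_pos {D D' : ℝ → ℝ} {a b : ℝ} (hc : ContinuousOn D (Icc a b))
    (hd : ∀ x ∈ Ioo a b, HasDerivAt D (D' x) x) (ha : 0 < D a)
    (h : ∀ x ∈ Ioo a b, 0 < D x → 0 ≤ D' x) : ∀ x ∈ Icc a b, D a ≤ D x := by
  have mono : ∀ y ∈ Icc a b, (∀ x ∈ Ioo a y, 0 < D x) → D a ≤ D y := by
    intro y hy hpos
    have hm : MonotoneOn D (Icc a y) := by
      apply monotoneOn_of_deriv_nonneg (convex_Icc a y) (hc.mono (Icc_subset_Icc_right hy.2))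
      · rw [interior_Icc]
        exact fun x hx => (hd x ⟨hx.1, hx.2.trans_le hy.2⟩).differentiableAt.differentiableWithinAt
      · rw [interior_Icc]
        intro x hx
        rw [(hd x ⟨hx.1, hx.2.trans_le hy.2⟩).deriv]
        exact h x ⟨hx.1, hx.2.trans_le hy.2⟩ (hpos x hx)
    exact hm (left_mem_Icc.2 hy.1) (right_mem_Icc.2 hy.1) hy.1
  have hpos : ∀ x ∈ Icc a b, 0 < D x := by
    by_contra! hcon
    let S := {x ∈ Icc a b | D x ≤ 0}
    have hS : IsClosed S := hc.preimage_isClosed_of_isClosed isClosed_Icc isClosed_Iic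
    have hne : S.Nonempty := hcon
    have hbd : BddBelow S := ⟨a, fun x hx => hx.1.1⟩
    have hz := hS.csInf_mem hne hbd
    have := mono _ hz.1 fun x hx => by
      by_contra! hx0
      exact absurd (csInf_le hbd (show x ∈ S from ⟨⟨hx.1.le, hx.2.le.trans hz.1.2⟩, hx0⟩))
        (not_le.2 hx.2)
    linarith [hz.2]
  exact fun x hx => mono x hx fun y hy => hpos y ⟨hy.1.le, hy.2.le.trans hx.2⟩

/-- A function whose derivative is at least `δ` on `[a, ∞)` grows at least linearly there. -/
theorem add_mul_le_of_le_deriv {g g' : ℝ → ℝ} {a δ : ℝ} (hd : ∀ x, a ≤ x → HasDerivAt g (g' x) x)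
    (h : ∀ x, a ≤ x → δ ≤ g' x) {x : ℝ} (hx : a ≤ x) : g a + δ * (x - a) ≤ g x := by
  have := (convex_Ici a).mul_sub_le_image_sub_of_le_deriv (f := g) (C := δ)
    (fun y hy => (hd y hy).continuousAt.continuousWithinAt)
    (fun y hy => (hd y (interior_subset hy)).differentiableAt.differentiableWithinAt)
    (fun y hy => by rw [(hd y (interior_subset hy)).deriv]; exact h y (interior_subset hy))
    a self_mem_Ici x hx hx
  linarith

theorem exists_gt_of_le_deriv {g g' : ℝ → ℝ} {a δ : ℝ} (hδ : 0 < δ)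
    (hd : ∀ x, a ≤ x → HasDerivAt g (g' x) x) (h : ∀ x, a ≤ x → δ ≤ g' x) (B : ℝ) :
    ∃ x, a ≤ x ∧ B < g x := by
  refine ⟨a + (|B - g a| + 1) / δ, by have := abs_nonneg (B - g a); simp; positivity, ?_⟩
  have := add_mul_le_of_le_deriv hd h (x := a + (|B - g a| + 1) / δ)
    (by have := abs_nonneg (B - g a); simp; positivity)
  rw [add_sub_cancel_left, mul_div_cancel₀ _ hδ.ne'] at this
  linarith [le_abs_self (B - g a)]

/-- A continuous function without zeros on `[T, ∞)` keeps its positive sign. -/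
theorem pos_on_Ici_of_ne_zero {g : ℝ → ℝ} {T : ℝ} (hg : Continuous g) (h0 : ∀ t, T ≤ t → g t ≠ 0)
    (hT : 0 < g T) {t : ℝ} (ht : T ≤ t) : 0 < g t := by
  by_contra! hcon
  obtain ⟨s, hs, hs0⟩ := intermediate_value_Icc' ht hg.continuousOn ⟨hcon, hT.le⟩
  exact h0 s hs.1 hs0

section ClampedTrajectory

variable {f : ℝ → ℝ} {b M P κ : ℝ} {v p : ℝ → ℝ}

theorem clamp_pos (hP : 0 < P) {y : ℝ} (hy : 0 < y) : 0 < max (-P) (min P y) :=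
  lt_max_of_lt_right (lt_min hP hy)

theorem clamp_neg (hP : 0 < P) {y : ℝ} (hy : y < 0) : max (-P) (min P y) < 0 :=
  max_lt (neg_lt_zero.2 hP) (min_lt_of_right_lt hy)

theorem source_neg (hmono : StrictMonoOn f (Ici 0)) (hb : 0 < b) (hfb : f b = 0) {y : ℝ}
    (hy : y < b) : f (max 0 (min M y)) < 0 :=
  (hmono (mem_Ici.2 (le_max_left _ _)) hb.le
    (max_lt hb (min_lt_of_right_lt hy))).trans_eq hfb

theorem source_pos (hmono : StrictMonoOn f (Ici 0)) (hb : 0 < b) (hM : b < M) (hfb : f b = 0)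
    {y : ℝ} (hy : b < y) : 0 < f (max 0 (min M y)) :=
  hfb.symm.trans_lt (hmono hb.le (mem_Ici.2 (le_max_left _ _))
    (lt_max_of_lt_right (lt_min hM hy)))

theorem hasDerivAt_sub_mul (hv : ∀ t, HasDerivAt v (max (-P) (min P (p t))) t)
    (hp : ∀ t, HasDerivAt p (κ * max (-P) (min P (p t)) + f (max 0 (min M (v t)))) t) (t : ℝ) :
    HasDerivAt (fun t => (v t - b) * p t) (max (-P) (min P (p t)) * p t +
      (v t - b) * (κ * max (-P) (min P (p t)) + f (max 0 (min M (v t))))) t :=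
  ((hv t).sub_const b).mul (hp t)

/-- Once `(v - b) p` is positive it stays positive. -/
theorem sub_mul_pos_of_pos (hmono : StrictMonoOn f (Ici 0)) (hb : 0 < b) (hM : b < M)
    (hfb : f b = 0) (hP : 0 < P) (hκ : 0 ≤ κ)
    (hv : ∀ t, HasDerivAt v (max (-P) (min P (p t))) t)
    (hp : ∀ t, HasDerivAt p (κ * max (-P) (min P (p t)) + f (max 0 (min M (v t)))) t)
    {T : ℝ} (hT : 0 < (v T - b) * p T) {t : ℝ} (ht : T ≤ t) : 0 < (v t - b) * p t := by
  have hz := hasDerivAt_sub_mul (b := b) hv hp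
  refine hT.trans_le (le_of_deriv_nonneg_of_pos (D := fun t => (v t - b) * p t)
    (fun s _ => (hz s).continuousAt.continuousWithinAt) (fun s _ => hz s) hT ?_ t ⟨ht, le_rfl⟩)
  intro s _ hs
  rcases mul_pos_iff.1 hs with ⟨h1, h2⟩ | ⟨h1, h2⟩
  · have h3 := clamp_pos hP h2
    have h4 := source_pos hmono hb hM hfb (sub_pos.1 h1)
    positivity
  · have h3 := clamp_neg hP h2
    have h4 := source_neg (M := M) hmono hb hfb (sub_neg.1 h1)
    have h5 := mul_nonneg_of_nonpos_of_nonpos h3.le h2.le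
    have h6 := mul_nonpos_of_nonneg_of_nonpos hκ h3.le
    have h7 := mul_nonneg_of_nonpos_of_nonpos h1.le (add_nonpos h6 h4.le)
    linarith

/-- The regions `{v > b, p > 0}` and `{v < b, p < 0}` are not both visited. -/
theorem not_both_exits (hmono : StrictMonoOn f (Ici 0)) (hb : 0 < b) (hM : b < M)
    (hfb : f b = 0) (hP : 0 < P) (hκ : 0 ≤ κ)
    (hv : ∀ t, HasDerivAt v (max (-P) (min P (p t))) t)
    (hp : ∀ t, HasDerivAt p (κ * max (-P) (min P (p t)) + f (max 0 (min M (v t)))) t)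
    {T₁ T₂ : ℝ} (h1 : b < v T₁) (h1' : 0 < p T₁) (h2 : v T₂ < b) (h2' : p T₂ < 0) : False := by
  have hvc : Continuous v := continuous_iff_continuousAt.2 fun t => (hv t).continuousAt
  rcases le_total T₁ T₂ with h | h
  · have := pos_on_Ici_of_ne_zero (g := fun t => v t - b) (by fun_prop) (fun t ht =>
      left_ne_zero_of_mul (sub_mul_pos_of_pos hmono hb hM hfb hP hκ hv hp
        (mul_pos (sub_pos.2 h1) h1') ht).ne') (sub_pos.2 h1) h
    linarith
  · have := pos_on_Ici_of_ne_zero (g := fun t => b - v t) (by fun_prop) (fun t ht => by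
      have := left_ne_zero_of_mul (sub_mul_pos_of_pos hmono hb hM hfb hP hκ hv hp
        (mul_pos_of_neg_of_neg (sub_neg.2 h2) h2') ht).ne'
      rwa [← neg_sub, neg_ne_zero]) (sub_pos.2 h2) h
    linarith

/-- A trajectory starting below `b`, visiting neither exit region and avoiding the equilibrium,
stays in `{v < b, p > 0}`. -/
theorem trapped (hmono : StrictMonoOn f (Ici 0)) (hb : 0 < b) (hM : b < M)
    (hfb : f b = 0) (hP : 0 < P)
    (hv : ∀ t, HasDerivAt v (max (-P) (min P (p t))) t)
    (hp : ∀ t, HasDerivAt p (κ * max (-P) (min P (p t)) + f (max 0 (min M (v t)))) t)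
    (h0 : v 0 < b) (hA : ∀ T, 0 ≤ T → b < v T → p T ≤ 0) (hB : ∀ T, 0 ≤ T → v T < b → 0 ≤ p T)
    (heq : ∀ t, ¬ (v t = b ∧ p t = 0)) {t : ℝ} (ht : 0 ≤ t) : v t < b ∧ 0 < p t := by
  have hvc : Continuous v := continuous_iff_continuousAt.2 fun t => (hv t).continuousAt
  have hle : ∀ t, 0 ≤ t → (v t - b) * p t ≤ 0 := by
    intro t ht
    rcases lt_trichotomy (v t) b with h | h | h
    · exact mul_nonpos_of_nonpos_of_nonneg (sub_neg.2 h).le (hB t ht h)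
    · simp [h]
    · exact mul_nonpos_of_nonneg_of_nonpos (sub_pos.2 h).le (hA t ht h)
  have hne : ∀ t, 0 ≤ t → (v t - b) * p t ≠ 0 := by
    intro t ht h
    have hd := hasDerivAt_sub_mul (b := b) hv hp t
    have hpos : 0 < max (-P) (min P (p t)) * p t +
        (v t - b) * (κ * max (-P) (min P (p t)) + f (max 0 (min M (v t)))) := by
      rcases mul_eq_zero.1 h with h1 | h1
      · have hpt : p t ≠ 0 := fun h2 => heq t ⟨sub_eq_zero.1 h1, h2⟩
        rw [h1, zero_mul, add_zero]
        rcases lt_or_gt_of_ne hpt with h2 | h2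
        · exact mul_pos_of_neg_of_neg (clamp_neg hP h2) h2
        · exact mul_pos (clamp_pos hP h2) h2
      · have hvt : v t ≠ b := fun h2 => heq t ⟨h2, h1⟩
        have hcl : max (-P) (min P (0 : ℝ)) = 0 := by
          rw [min_eq_right hP.le, max_eq_right (neg_nonpos.2 hP.le)]
        rw [h1, hcl, mul_zero, mul_zero, zero_add, zero_add]
        rcases lt_or_gt_of_ne hvt with h2 | h2
        · exact mul_pos_of_neg_of_neg (sub_neg.2 h2) (source_neg hmono hb hfb h2)
        · exact mul_pos (sub_pos.2 h2) (source_pos hmono hb hM hfb h2)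
    have hev := (hasDerivAt_iff_tendsto_slope.1 hd).eventually (lt_mem_nhds hpos)
    have hev' := hev.filter_mono (nhdsWithin_mono t (s := Ioi t) fun x hx => ne_of_gt hx)
    obtain ⟨s, hs, hts⟩ := (hev'.and self_mem_nhdsWithin).exists
    rw [slope_def_field, h, sub_zero] at hs
    have hts' : t < s := hts
    have := (div_pos_iff_of_pos_right (sub_pos.2 hts')).1 hs
    linarith [hle s (ht.trans hts'.le)]
  have h1 := pos_on_Ici_of_ne_zero (g := fun t => b - v t) (by fun_prop) (fun t ht => by
      have := left_ne_zero_of_mul (hne t ht)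
      rwa [← neg_sub, neg_ne_zero]) (sub_pos.2 h0) ht
  have h1' : v t < b := sub_pos.1 h1
  exact ⟨h1', (hB t ht h1').lt_of_ne' (right_ne_zero_of_mul (hne t ht))⟩

end ClampedTrajectory

/-- Shooting: among a connected family of initial slopes and speeds, ranging from overshooting to
undershooting, some trajectory stays below the equilibrium with positive slope. -/
theorem exists_trapped_trajectory {f : ℝ → ℝ} (hf : ContDiff ℝ 1 f)
    (hmono : StrictMonoOn f (Ici 0)) {a b : ℝ} (ha : 0 < a) (hab : a < b) (hfb : f b = 0)
    {s c : ℝ → ℝ} {r₁ r₂ : ℝ} (hr : r₁ ≤ r₂) (hs : ContinuousOn s (Icc r₁ r₂))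
    (hc : ContinuousOn c (Icc r₁ r₂)) (hcpos : ∀ r ∈ Icc r₁ r₂, 0 < c r)
    (h1 : 0 < c r₁ * s r₁ + f 0) (h2 : s r₂ < 0) :
    ∃ r ∈ Icc r₁ r₂, ∃ v p : ℝ → ℝ, v 0 = a ∧ p 0 = s r ∧ ∀ t, 0 ≤ t →
      v t < b ∧ 0 < p t ∧ HasDerivAt v (p t) t ∧ HasDerivAt p (c r * p t + f (v t)) t := by
  have hb : 0 < b := ha.trans hab
  have hM : b < b + 1 := lt_add_one b
  have hf0 : f 0 < 0 := (hmono self_mem_Ici hb.le hb).trans_eq hfb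
  obtain ⟨C, hC⟩ := isCompact_Icc.exists_bound_of_continuousOn hc
  obtain ⟨P, hP⟩ := isCompact_Icc.exists_bound_of_continuousOn
    (hs.add (hc.mul (continuousOn_const (c := b))))
  have hl := left_mem_Icc.2 hr
  have hcC : ∀ r ∈ Icc r₁ r₂, max 0 (min C (c r)) = c r := fun r hr => by
    rw [min_eq_right ((le_abs_self _).trans (hC r hr)), max_eq_right (hcpos r hr).le]
  have hsP : ∀ r ∈ Icc r₁ r₂, s r + c r * b ≤ P := fun r hr => (le_abs_self _).trans (hP r hr)
  have hs1 : 0 < s r₁ := pos_of_mul_pos_right (a := c r₁) (by linarith) (hcpos _ hl).le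
  have hP0 : 0 < P := (add_pos hs1 (mul_pos (hcpos _ hl) hb)).trans_le (hsP _ hl)
  obtain ⟨K, L, hK, hL⟩ := clampedField_lipschitz_bounded hf (b + 1) P C
  choose Φ hΦ0 hΦ using exists_global_integral_curve hK hL
  have hv : ∀ x t, HasDerivAt (fun t => (Φ x t).1) (max (-P) (min P (Φ x t).2.1)) t :=
    fun x t => (hΦ x t).fst
  have hp : ∀ x t, HasDerivAt (fun t => (Φ x t).2.1) (max 0 (min C (Φ x t).2.2) *
      max (-P) (min P (Φ x t).2.1) + f (max 0 (min (b + 1) (Φ x t).1))) t :=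
    fun x t => (hΦ x t).snd.fst
  have hκ : ∀ x t, HasDerivAt (fun t => (Φ x t).2.2) 0 t :=
    fun x t => (hΦ x t).snd.snd
  have hκc : ∀ x t, (Φ x t).2.2 = x.2.2 := by
    intro x t
    have := is_const_of_deriv_eq_zero (fun t => (hκ x t).differentiableAt)
      (fun t => (hκ x t).deriv) t 0
    simpa [hΦ0] using this
  have hp' : ∀ x t, HasDerivAt (fun t => (Φ x t).2.1) (max 0 (min C x.2.2) *
      max (-P) (min P (Φ x t).2.1) + f (max 0 (min (b + 1) (Φ x t).1))) t := fun x t => by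
    have := hp x t
    rwa [hκc] at this
  have hcont : ∀ T, 0 ≤ T → Continuous fun x => Φ x T := fun T hT =>
    continuous_integral_curve_apply hK hΦ0 hΦ hT
  let A : Set (ℝ × ℝ × ℝ) := {x | ∃ T, 0 ≤ T ∧ b < (Φ x T).1 ∧ 0 < (Φ x T).2.1}
  let B : Set (ℝ × ℝ × ℝ) := {x | ∃ T, 0 ≤ T ∧ (Φ x T).1 < b ∧ (Φ x T).2.1 < 0}
  have hA : IsOpen A := by
    have : A = ⋃ T ∈ Ici (0 : ℝ), (fun x => Φ x T) ⁻¹' (Ioi b ×ˢ Ioi 0 ×ˢ univ) := by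
      ext x; simp [A, and_left_comm]
    rw [this]
    exact isOpen_biUnion fun T hT =>
      (isOpen_Ioi.prod (isOpen_Ioi.prod isOpen_univ)).preimage (hcont T hT)
  have hB : IsOpen B := by
    have : B = ⋃ T ∈ Ici (0 : ℝ), (fun x => Φ x T) ⁻¹' (Iio b ×ˢ Iio 0 ×ˢ univ) := by
      ext x; simp [B, and_left_comm]
    rw [this]
    exact isOpen_biUnion fun T hT =>
      (isOpen_Iio.prod (isOpen_Iio.prod isOpen_univ)).preimage (hcont T hT)
  let γ : ℝ → ℝ × ℝ × ℝ := fun r => (a, s r, c r)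
  have hγ : ContinuousOn γ (Icc r₁ r₂) := continuousOn_const.prodMk (hs.prodMk hc)
  have hγA : γ r₁ ∈ A := by
    have hvx := hv (γ r₁)
    have hpx := hp' (γ r₁)
    have hcc : max 0 (min C (γ r₁).2.2) = c r₁ := hcC _ hl
    rw [hcc] at hpx
    have hcp := hcpos _ hl
    set σ := -f 0 / c r₁ with hσ
    have hσ0 : 0 < σ := div_pos (neg_pos.2 hf0) hcp
    have hσc : c r₁ * σ = -f 0 := by rw [hσ]; field_simp
    have hσs : σ < s r₁ := by rw [hσ, div_lt_iff₀ hcp]; linarith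
    have hσP : σ ≤ P := by have := hsP _ hl; nlinarith
    have hclamp : ∀ y, σ ≤ y → σ ≤ max (-P) (min P y) := fun y hy =>
      le_max_of_le_right (le_min hσP hy)
    have hstay : ∀ t, 0 ≤ t → σ ≤ (Φ (γ r₁) t).2.1 := by
      intro t ht
      have hD : ∀ t, HasDerivAt (fun t => (Φ (γ r₁) t).2.1 - σ) _ t :=
        fun t => (hpx t).sub_const σ
      have := le_of_deriv_nonneg_of_pos (a := 0) (b := t)
        (fun y _ => (hD y).continuousAt.continuousWithinAt) (fun y _ => hD y)
        (by simp [hΦ0, γ, hσs]) (fun y _ hy => by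
          have h3 := hclamp _ (sub_pos.1 hy).le
          have h4 : f 0 ≤ f (max 0 (min (b + 1) (Φ (γ r₁) y).1)) :=
            hmono.monotoneOn self_mem_Ici (mem_Ici.2 (le_max_left _ _)) (le_max_left _ _)
          nlinarith) t ⟨ht, le_rfl⟩
      simp only [hΦ0, γ] at this
      linarith
    obtain ⟨T, hT, hTb⟩ := exists_gt_of_le_deriv hσ0 (fun t (_ : 0 ≤ t) => hvx t)
      (fun t ht => hclamp _ (hstay t ht)) b
    exact ⟨T, hT, hTb, hσ0.trans_le (hstay T hT)⟩
  have hγB : γ r₂ ∈ B := ⟨0, le_rfl, by simpa [hΦ0, γ] using hab, by simpa [hΦ0, γ] using h2⟩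
  have hex : ∃ r ∈ Icc r₁ r₂, γ r ∉ A ∪ B := by
    by_contra! hcon
    obtain ⟨x, -, ⟨T₁, -, hx1, hx1'⟩, T₂, -, hx2, hx2'⟩ :=
      isPreconnected_Icc.image γ hγ A B hA hB (image_subset_iff.2 hcon)
      ⟨_, mem_image_of_mem _ hl, hγA⟩ ⟨_, mem_image_of_mem _ (right_mem_Icc.2 hr), hγB⟩
    exact not_both_exits hmono hb hM hfb hP0 (le_max_left _ _) (hv x) (hp' x) hx1 hx1' hx2 hx2'
  obtain ⟨r, hrm, hrAB⟩ := hex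
  have hrA : γ r ∉ A := fun h => hrAB (Or.inl h)
  have hrB : γ r ∉ B := fun h => hrAB (Or.inr h)
  have hvx := hv (γ r)
  have hpx := hp' (γ r)
  have hcc : max 0 (min C (γ r).2.2) = c r := hcC _ hrm
  rw [hcc] at hpx
  have hcl0 : max (-P) (min P (0 : ℝ)) = 0 := by
    rw [min_eq_right hP0.le, max_eq_right (neg_nonpos.2 hP0.le)]
  have heq : ∀ t, ¬ ((Φ (γ r) t).1 = b ∧ (Φ (γ r) t).2.1 = 0) := by
    rintro t ⟨hb1, hb2⟩
    have hW : clampedField f (b + 1) P C (b, 0, c r) = 0 := by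
      simp only [clampedField, hcl0, mul_zero, zero_add]
      rw [min_eq_right hM.le, max_eq_right hb.le, hfb]
      rfl
    have := ODE_solution_unique_univ (v := fun _ => clampedField f (b + 1) P C)
      (s := fun _ => univ) (f := Φ (γ r)) (g := fun _ => (b, 0, c r)) (t₀ := t)
      (fun _ => hK.lipschitzOnWith) (fun t => ⟨hΦ _ t, trivial⟩)
      (fun t => ⟨by rw [hW]; exact hasDerivAt_const _ _, trivial⟩)
      (Prod.ext hb1 (Prod.ext hb2 (hκc _ _)))
    have h0 := congrArg Prod.fst (congrFun this 0)
    simp only [hΦ0, γ] at h0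
    exact hab.ne h0
  have htrap : ∀ t, 0 ≤ t → (Φ (γ r) t).1 < b ∧ 0 < (Φ (γ r) t).2.1 := fun t ht =>
    trapped hmono hb hM hfb hP0 hvx hpx (by simpa [hΦ0, γ] using hab)
      (fun T hT h => not_lt.1 fun h' => hrA ⟨T, hT, h, h'⟩)
      (fun T hT h => not_lt.1 fun h' => hrB ⟨T, hT, h, h'⟩) heq ht
  have hva : ∀ t, 0 ≤ t → a ≤ (Φ (γ r) t).1 := fun t ht => by
    have := add_mul_le_of_le_deriv (δ := 0) (fun t (_ : 0 ≤ t) => hvx t)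
      (fun t ht => (clamp_pos hP0 (htrap t ht).2).le) ht
    simpa [hΦ0, γ] using this
  have hpP : ∀ t, 0 ≤ t → (Φ (γ r) t).2.1 ≤ P := fun t ht => by
    have := add_mul_le_of_le_deriv (δ := 0)
      (fun t (_ : 0 ≤ t) => ((hvx t).const_mul (c r)).sub (hpx t))
      (fun t ht => by linarith [source_neg (M := b + 1) hmono hb hfb (htrap t ht).1]) ht
    simp only [Pi.sub_apply, hΦ0, γ, zero_mul, add_zero] at this
    have h3 := hsP r hrm
    have h4 := mul_le_mul_of_nonneg_left (htrap t ht).1.le (hcpos r hrm).le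
    have h5 := mul_pos (hcpos r hrm) ha
    simp only [γ] at h4
    linarith
  refine ⟨r, hrm, fun t => (Φ (γ r) t).1, fun t => (Φ (γ r) t).2.1, by simp [hΦ0, γ],
    by simp [hΦ0, γ], fun t ht => ?_⟩
  obtain ⟨hvb, hp0⟩ := htrap t ht
  have hclp : max (-P) (min P (Φ (γ r) t).2.1) = (Φ (γ r) t).2.1 := by
    rw [min_eq_right (hpP t ht), max_eq_right (by linarith)]
  have hclv : max 0 (min (b + 1) (Φ (γ r) t).1) = (Φ (γ r) t).1 := by
    rw [min_eq_right (by linarith), max_eq_right (ha.le.trans (hva t ht))]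
  have h3 := hvx t
  have h4 := hpx t
  rw [hclp] at h3 h4
  rw [hclv] at h4
  exact ⟨hvb, hp0, h3, h4⟩

/-- A trapped trajectory converges to the equilibrium. -/
theorem tendsto_of_trapped {f : ℝ → ℝ} (hmono : StrictMonoOn f (Ici 0)) {b κ : ℝ}
    (hfb : f b = 0) (hκ : 0 ≤ κ) {v p : ℝ → ℝ} (h0 : 0 < v 0)
    (h : ∀ t, 0 ≤ t →
      v t < b ∧ 0 < p t ∧ HasDerivAt v (p t) t ∧ HasDerivAt p (κ * p t + f (v t)) t) :
    Tendsto v atTop (nhds b) := by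
  have hm : ∀ t u, 0 ≤ t → t ≤ u → v t ≤ v u := fun t u ht htu => by
    have := add_mul_le_of_le_deriv (δ := 0) (fun y (hy : t ≤ y) => (h y (ht.trans hy)).2.2.1)
      (fun y hy => (h y (ht.trans hy)).2.1.le) htu
    linarith
  have hmem : ∀ t, 0 ≤ t → 0 ≤ v t := fun t ht => h0.le.trans (hm 0 t le_rfl ht)
  refine tendsto_order.2 ⟨fun l hl => ?_, fun l hl => ?_⟩
  · by_contra hcon
    have hle : ∀ t, 0 ≤ t → v t ≤ l := by
      intro t ht
      by_contra! hlt
      exact hcon (eventually_atTop.2 ⟨t, fun u hu => hlt.trans_le (hm t u ht hu)⟩)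
    have hl0 : 0 ≤ l := h0.le.trans (hle 0 le_rfl)
    have hfl : 0 < -f l := neg_pos.2 ((hmono hl0 (hl0.trans hl.le) hl).trans_eq hfb)
    obtain ⟨x, hx, hx'⟩ := exists_gt_of_le_deriv (a := 0) hfl
      (fun y hy => ((h y hy).2.2.1.const_mul κ).sub (h y hy).2.2.2)
      (fun y hy => by linarith [hmono.monotoneOn (hmem y hy) hl0 (hle y hy)]) (κ * b)
    simp only [Pi.sub_apply] at hx'
    have := mul_le_mul_of_nonneg_left (h x hx).1.le hκ
    linarith [(h x hx).2.1]
  · filter_upwards [eventually_ge_atTop 0] with t ht using (h t ht).1.trans hl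

section Gluing

variable {f f' g g' : ℝ → ℝ} {a : ℝ}

theorem ite_eventuallyEq_left {x : ℝ} (hx : x < a) :
    (fun x => if x ≤ a then f x else g x) =ᶠ[nhds x] f := by
  filter_upwards [Iio_mem_nhds hx] with y hy
  exact if_pos (le_of_lt hy)

theorem ite_eventuallyEq_right {x : ℝ} (hx : a < x) :
    (fun x => if x ≤ a then f x else g x) =ᶠ[nhds x] g := by
  filter_upwards [Ioi_mem_nhds hx] with y hy
  exact if_neg (not_le.2 hy)

theorem ite_eqOn_Ici (h : f a = g a) :
    EqOn (fun x => if x ≤ a then f x else g x) g (Ici a) := by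
  intro x hx
  by_cases hxa : x ≤ a
  · simp [le_antisymm hxa hx, h]
  · exact if_neg hxa

theorem hasDerivAt_ite (hf : ∀ x ≤ a, HasDerivAt f (f' x) x)
    (hg : ∀ x, a ≤ x → HasDerivAt g (g' x) x) (h : f a = g a) (h' : f' a = g' a) (x : ℝ) :
    HasDerivAt (fun x => if x ≤ a then f x else g x) (if x ≤ a then f' x else g' x) x := by
  rcases lt_trichotomy x a with hx | rfl | hx
  · rw [if_pos hx.le]
    exact (hf x hx.le).congr_of_eventuallyEq (ite_eventuallyEq_left hx)
  · rw [if_pos le_rfl, ← hasDerivWithinAt_univ, ← Iic_union_Ici (a := x)]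
    have hl : HasDerivWithinAt (fun y => if y ≤ x then f y else g y) (f' x) (Iic x) x :=
      (hf x le_rfl).hasDerivWithinAt.congr (fun y hy => if_pos hy) (if_pos le_rfl)
    refine hl.union ?_
    rw [h']
    exact (hg x le_rfl).hasDerivWithinAt.congr (ite_eqOn_Ici h) (ite_eqOn_Ici h self_mem_Ici)
  · rw [if_neg (not_le.2 hx)]
    exact (hg x hx.le).congr_of_eventuallyEq (ite_eventuallyEq_right hx)

theorem continuous_ite (hf : ∀ x ≤ a, ContinuousAt f x)
    (hg : ∀ x, a ≤ x → ContinuousAt g x) (h : f a = g a) :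
    Continuous (fun x => if x ≤ a then f x else g x) := by
  refine continuous_iff_continuousAt.2 fun x => ?_
  rcases lt_trichotomy x a with hx | rfl | hx
  · exact (hf x hx.le).congr (ite_eventuallyEq_left hx).symm
  · rw [continuousAt_iff_continuous_left_right]
    exact ⟨(hf x le_rfl).continuousWithinAt.congr (fun y hy => if_pos hy) (if_pos le_rfl),
      (hg x le_rfl).continuousWithinAt.congr (ite_eqOn_Ici h) (ite_eqOn_Ici h self_mem_Ici)⟩
  · exact (hg x hx.le).congr (ite_eventuallyEq_right hx).symm

end Gluing

theorem contDiffOn_two_of_hasDerivAt {θ p p' : ℝ → ℝ} {U : Set ℝ} (hU : IsOpen U)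
    (hθ : ∀ x ∈ U, HasDerivAt θ (p x) x) (hp : ∀ x ∈ U, HasDerivAt p (p' x) x)
    (hp' : ContinuousOn p' U) : ContDiffOn ℝ 2 θ U := by
  have h1 : ContDiffOn ℝ 1 p U := by
    rw [show (1 : WithTop ℕ∞) = 0 + 1 by simp, contDiffOn_succ_iff_deriv_of_isOpen hU]
    refine ⟨fun x hx => (hp x hx).differentiableAt.differentiableWithinAt, by simp, ?_⟩
    exact contDiffOn_zero.2 (hp'.congr fun x hx => (hp x hx).deriv)
  rw [show (2 : WithTop ℕ∞) = 1 + 1 by norm_num, contDiffOn_succ_iff_deriv_of_isOpen hU]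
  exact ⟨fun x hx => (hθ x hx).differentiableAt.differentiableWithinAt, by simp,
    h1.congr fun x hx => (hθ x hx).deriv⟩

/-- Speed `c r` and slope `s r` at the heat-loss interface, parametrized by `r = c R`. -/
theorem exists_burning_zone_family {q a b : ℝ} (hq : 0 < q) (ha : 0 < a) (hab : a < b) :
    ∃ (c s : ℝ → ℝ) (r₁ r₂ : ℝ), 0 < r₁ ∧ r₁ ≤ r₂ ∧ ContinuousOn s (Icc r₁ r₂) ∧
      ContinuousOn c (Icc r₁ r₂) ∧ (∀ r ∈ Icc r₁ r₂, 0 < c r ∧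
        c r ^ 2 * (a * Real.exp r - b) = q * (Real.exp r - 1 - r) ∧
        s r = c r * b - q * (r / c r)) ∧ q < c r₁ * s r₁ ∧ s r₂ < 0 := by
  have hτ : 1 < b / a := (one_lt_div ha).2 hab
  have hlog : Real.log (b / a) < b / a - 1 :=
    Real.log_lt_sub_one_of_pos (by linarith) hτ.ne'
  obtain ⟨r₁, hr₁, hr₁'⟩ := exists_between hlog
  have hr₁0 : 0 < r₁ := (Real.log_pos hτ).trans hr₁
  have hden : ∀ r, r₁ ≤ r → 0 < a * Real.exp r - b := by
    intro r hr
    have := (Real.log_lt_iff_lt_exp (by linarith)).1 (hr₁.trans_le hr)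
    rw [div_lt_iff₀ ha] at this
    linarith
  have hnum : ∀ r, r₁ ≤ r → 0 < Real.exp r - 1 - r := fun r hr => by
    linarith [Real.add_one_lt_exp (hr₁0.trans_le hr).ne']
  let c : ℝ → ℝ := fun r => √(q * (Real.exp r - 1 - r) / (a * Real.exp r - b))
  have hc0 : ∀ r, r₁ ≤ r → 0 < c r := fun r hr => by
    have h1 := hden r hr
    have h2 := hnum r hr
    exact Real.sqrt_pos.2 (by positivity)
  have hc2 : ∀ r, r₁ ≤ r → c r ^ 2 * (a * Real.exp r - b) = q * (Real.exp r - 1 - r) := by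
    intro r hr
    have h1 := hden r hr
    have h2 := hnum r hr
    rw [Real.sq_sqrt (by positivity), div_mul_cancel₀ _ h1.ne']
  have hc : ContinuousOn c (Icc r₁ (b / a)) := by
    refine ContinuousOn.sqrt (ContinuousOn.div (by fun_prop) (by fun_prop) ?_)
    exact fun r hr => (hden r hr.1).ne'
  have hr₁₂ : r₁ ≤ b / a := by linarith
  refine ⟨c, fun r => c r * b - q * (r / c r), r₁, b / a, hr₁0, hr₁₂, ?_, hc,
    fun r hr => ⟨hc0 r hr.1, hc2 r hr.1, rfl⟩, ?_, ?_⟩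
  · exact (hc.mul continuousOn_const).sub (continuousOn_const.mul
      (continuousOn_id.div hc fun r hr => (hc0 r hr.1).ne'))
  · have h1 := hc0 r₁ le_rfl
    have h2 := hden r₁ le_rfl
    have h3 := hc2 r₁ le_rfl
    rw [lt_sub_iff_add_lt, lt_div_iff₀ ha] at hr₁'
    have h4 : c r₁ * (c r₁ * b - q * (r₁ / c r₁)) = c r₁ ^ 2 * b - q * r₁ := by
      field_simp
    rw [h4]
    have h5 : (q * (r₁ + 1)) * (a * Real.exp r₁ - b) < c r₁ ^ 2 * b * (a * Real.exp r₁ - b) := by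
      have h6 : c r₁ ^ 2 * b * (a * Real.exp r₁ - b) = b * (q * (Real.exp r₁ - 1 - r₁)) := by
        rw [← h3]; ring
      rw [h6]
      have := mul_lt_mul_of_pos_left hr₁' (mul_pos hq (Real.exp_pos r₁))
      nlinarith
    linarith [lt_of_mul_lt_mul_right h5 h2.le]
  · have h1 := hc0 _ hr₁₂
    have h2 := hden _ hr₁₂
    have h3 := hc2 _ hr₁₂
    have h7 : b / a * a = b := div_mul_cancel₀ b ha.ne'
    set r := b / a
    have h4 : c r * (c r * b - q * (r / c r)) = c r ^ 2 * b - q * r := by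
      field_simp
    have h5 : c r ^ 2 * b * (a * Real.exp r - b) < q * r * (a * Real.exp r - b) := by
      have h6 : c r ^ 2 * b * (a * Real.exp r - b) = b * (q * (Real.exp r - 1 - r)) := by
        rw [← h3]; ring
      rw [h6]
      have h8 : q * r * (a * Real.exp r - b) = q * (r * a * Real.exp r - r * b) := by ring
      rw [h8, h7]
      have := mul_pos hq (ha.trans hab)
      nlinarith
    have h6 := lt_of_mul_lt_mul_right h5 h2.le
    exact neg_of_mul_neg_right (a := c r)
      (by show c r * (c r * b - q * (r / c r)) < 0; linarith) h1.le

theorem exists_front {q h a b e : ℝ} (hq : 0 < q) (hh : 0 < h)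
    (he : h * ((1 + e) ^ 4 - 1) = q) (ha : 0 < a) (hab : a < b) (hbe : b < e) :
    ∃ R c : ℝ, ∃ θ : ℝ → ℝ, 0 < R ∧ 0 < c ∧ IsAutoignitionFront q h a b e R c θ := by
  obtain ⟨c, s, r₁, r₂, hr₁, hr₁₂, hs, hc, hcs, h1, h2⟩ := exists_burning_zone_family hq ha hab
  let f : ℝ → ℝ := fun y => h * ((1 + y) ^ 4 - 1) - q
  have hf : ContDiff ℝ 1 f := by simp only [f]; fun_prop
  have hfmono : StrictMonoOn f (Ici 0) := by
    intro x hx y _ hxy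
    have hx' : (0 : ℝ) ≤ x := hx
    have : (1 + x) ^ 4 < (1 + y) ^ 4 := pow_lt_pow_left₀ (by linarith) (by linarith) (by norm_num)
    have := mul_lt_mul_of_pos_left this hh
    simp only [f]
    linarith
  have hfe : f e = 0 := by simp only [f]; linarith
  obtain ⟨r, hr, v, p, hv0, hp0, hvp⟩ := exists_trapped_trajectory hf hfmono (ha.trans hab) hbe hfe
    hr₁₂ hs hc (fun r hr => (hcs r hr).1) (by simp only [f]; linarith) h2
  obtain ⟨hc0, hc2, hsr⟩ := hcs r hr
  generalize c r = κ at *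
  have hr0 : 0 < r := hr₁.trans_le hr.1
  have hR : 0 < r / κ := div_pos hr0 hc0
  have hκR : κ * (r / κ) = r := by field_simp
  generalize r / κ = R at *
  let A : ℝ → ℝ := fun x => a * Real.exp (κ * x)
  have hA : ∀ x, HasDerivAt A (κ * A x) x := fun x => by
    refine (((hasDerivAt_id' x).const_mul κ).exp.const_mul a).congr_deriv ?_
    simp only [A]
    ring
  let B : ℝ → ℝ := fun x => q / κ ^ 2 + q / κ * x + (a - q / κ ^ 2) * Real.exp (κ * x)
  have hB : ∀ x, HasDerivAt B (κ * B x - q * x) x := fun x => by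
    refine ((((hasDerivAt_id' x).const_mul (q / κ)).const_add (q / κ ^ 2)).add
      (((hasDerivAt_id' x).const_mul κ).exp.const_mul (a - q / κ ^ 2))).congr_deriv ?_
    simp only [B]
    field_simp
    ring
  have hB' : ∀ x, HasDerivAt (fun x => κ * B x - q * x) (κ * (κ * B x - q * x) - q) x :=
    fun x => (((hB x).const_mul κ).sub ((hasDerivAt_id' x).const_mul q)).congr_deriv (by ring)
  have hB0 : B 0 = a := by simp [B]
  have hBR : B R = b := by
    simp only [B, hκR]
    have hRr : R = r / κ := by field_simp; linarith
    rw [hRr]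
    field_simp
    nlinarith
  let Vt : ℝ → ℝ := fun x => v (x - R)
  let Vp : ℝ → ℝ := fun x => p (x - R)
  have hVt : ∀ x, R ≤ x → HasDerivAt Vt (Vp x) x := fun x hx => by
    simpa using (hvp (x - R) (sub_nonneg.2 hx)).2.2.1.comp_sub_const x R
  have hVp : ∀ x, R ≤ x → HasDerivAt Vp (κ * Vp x + f (Vt x)) x := fun x hx => by
    simpa using (hvp (x - R) (sub_nonneg.2 hx)).2.2.2.comp_sub_const x R
  have hBV : B R = Vt R := by simp [Vt, hBR, hv0]
  have hBV' : κ * B R - q * R = Vp R := by simp [Vp, hBR, hp0, hsr]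
  let m : ℝ → ℝ := fun x => if x ≤ R then B x else Vt x
  let m' : ℝ → ℝ := fun x => if x ≤ R then κ * B x - q * x else Vp x
  let θ : ℝ → ℝ := fun x => if x ≤ 0 then A x else m x
  let θ' : ℝ → ℝ := fun x => if x ≤ 0 then κ * A x else m' x
  have hm : ∀ x, HasDerivAt m (m' x) x :=
    hasDerivAt_ite (fun x _ => hB x) hVt hBV hBV'
  have hm' : Continuous m' := continuous_ite (fun x _ => (hB' x).continuousAt)
    (fun x hx => (hVp x hx).continuousAt) hBV'
  have hAm : A 0 = m 0 := by simp [A, m, hR.le, hB0]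
  have hAm' : κ * A 0 = m' 0 := by simp [A, m', hR.le, hB0]
  have hθ : ∀ x, HasDerivAt θ (θ' x) x :=
    hasDerivAt_ite (fun x _ => hA x) (fun x _ => hm x) hAm hAm'
  have hθ' : Continuous θ' := continuous_ite (fun x _ => ((hA x).const_mul κ).continuousAt)
    (fun x _ => hm'.continuousAt) hAm'
  have hθc : Continuous θ := continuous_iff_continuousAt.2 fun x => (hθ x).continuousAt
  have hderiv : deriv θ = θ' := funext fun x => (hθ x).deriv
  have hs0 : 0 < s r := hp0 ▸ (hvp 0 le_rfl).2.1
  have hpos : ∀ x, 0 < θ' x := by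
    intro x
    by_cases hx : x ≤ 0
    · simp only [θ', if_pos hx, A]
      have := Real.exp_pos (κ * x)
      positivity
    by_cases hx' : x ≤ R
    · simp only [θ', m', if_neg hx, if_pos hx', B]
      have hform : ∀ x, κ * (q / κ ^ 2 + q / κ * x + (a - q / κ ^ 2) * Real.exp (κ * x)) - q * x
          = q / κ + (κ * a - q / κ) * Real.exp (κ * x) := fun x => by
        field_simp
        ring
      have hend : 0 < q / κ + (κ * a - q / κ) * Real.exp (κ * R) := by
        rw [← hform]
        change 0 < κ * B R - q * R
        rw [hBR, ← hsr]
        exact hs0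
      rw [hform]
      have hE1 : 1 ≤ Real.exp (κ * x) := Real.one_le_exp (by push Not at hx; positivity)
      have hE2 : Real.exp (κ * x) ≤ Real.exp (κ * R) :=
        Real.exp_le_exp.2 (mul_le_mul_of_nonneg_left hx' hc0.le)
      have hqκ : 0 < q / κ := div_pos hq hc0
      rcases le_total 0 (κ * a - q / κ) with h0 | h0
      · have := mul_nonneg h0 (zero_le_one.trans hE1)
        linarith
      · have := mul_le_mul_of_nonpos_left hE2 h0
        linarith
    · simp only [θ', m', if_neg hx, if_neg hx', Vp]
      exact (hvp _ (by linarith)).2.1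
  have hleft : ∀ x ∈ Iio (0 : ℝ), HasDerivAt θ' (κ * θ' x) x := fun x hx => by
    have hx' : x < 0 := hx
    have := ((hA x).const_mul κ).congr_of_eventuallyEq
      (ite_eventuallyEq_left (f := fun x => κ * A x) (g := m') hx')
    simpa only [θ', if_pos hx'.le] using this
  have hmid : ∀ x ∈ Ioo 0 R, HasDerivAt θ' (κ * θ' x - q) x := fun x hx => by
    have := (hB' x).congr_of_eventuallyEq
      ((ite_eventuallyEq_right (f := fun x => κ * A x) (g := m') hx.1).trans
        (ite_eventuallyEq_left hx.2))
    simpa only [θ', m', if_neg (not_le.2 hx.1), if_pos hx.2.le] using this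
  have hright : ∀ x ∈ Ioi R, HasDerivAt θ' (κ * θ' x + f (θ x)) x := fun x hx => by
    have hx' : R < x := hx
    have := (hVp x hx'.le).congr_of_eventuallyEq
      ((ite_eventuallyEq_right (f := fun x => κ * A x) (g := m') (hR.trans hx')).trans
        (ite_eventuallyEq_right hx'))
    simpa only [θ', m', θ, m, if_neg (not_le.2 (hR.trans hx')), if_neg (not_le.2 hx')] using this
  refine ⟨R, κ, θ, hR, hc0, ?_, strictMono_of_deriv_pos fun x => ?_, by simp [θ, A],
    by simp [θ, m, not_le.2 hR, hBR], ?_, ?_, ?_, ?_, ?_, ?_, ?_, ?_⟩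
  · rw [contDiff_one_iff_deriv, hderiv]
    exact ⟨fun x => (hθ x).differentiableAt, hθ'⟩
  · rw [hderiv]
    exact hpos x
  · exact contDiffOn_two_of_hasDerivAt isOpen_Iio (fun x _ => hθ x) hleft
      (by fun_prop)
  · exact contDiffOn_two_of_hasDerivAt isOpen_Ioo (fun x _ => hθ x) hmid
      (by fun_prop)
  · exact contDiffOn_two_of_hasDerivAt isOpen_Ioi (fun x _ => hθ x) hright
      (((hθ'.const_mul κ).add (hf.continuous.comp hθc)).continuousOn)
  · intro x hx
    rw [hderiv, (hleft x hx).deriv, sub_self]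
  · intro x hx
    rw [hderiv, (hmid x hx).deriv]
    ring
  · intro x hx
    rw [hderiv, (hright x hx).deriv]
    simp only [f]
    ring
  · have hlim : Tendsto A atBot (nhds (a * 0)) :=
      (Real.tendsto_exp_atBot.comp (tendsto_id.const_mul_atBot hc0)).const_mul a
    rw [mul_zero] at hlim
    refine hlim.congr' ?_
    filter_upwards [eventually_le_atBot 0] with x hx using (if_pos hx).symm
  · have hlim := (tendsto_of_trapped hfmono hfe hc0.le (by rw [hv0]; exact ha.trans hab) hvp).comp
      (tendsto_atTop_add_const_right atTop (-R) tendsto_id)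
    refine hlim.congr' ?_
    filter_upwards [eventually_gt_atTop R] with x hx
    simp [θ, m, Vt, not_le.2 hx, not_le.2 (hR.trans hx), sub_eq_add_neg]

theorem eq_of_hasDerivAt_zero {g : ℝ → ℝ} {u v : ℝ} (huv : u ≤ v)
    (hc : ContinuousOn g (Icc u v)) (hd : ∀ x ∈ Ioo u v, HasDerivAt g 0 x) : g v = g u := by
  rcases huv.eq_or_lt with rfl | huv
  · rfl
  obtain ⟨x, _, hx⟩ := exists_hasDerivAt_eq_slope g (fun _ => 0) huv hc hd
  rw [eq_comm, div_eq_zero_iff] at hx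
  rcases hx with hx | hx <;> linarith

theorem eq_mul_exp_of_hasDerivAt {g : ℝ → ℝ} {c u v : ℝ} (huv : u ≤ v)
    (hc : ContinuousOn g (Icc u v)) (hd : ∀ x ∈ Ioo u v, HasDerivAt g (c * g x) x) :
    g v = g u * Real.exp (c * (v - u)) := by
  have h := eq_of_hasDerivAt_zero (g := fun x => g x * Real.exp (-c * x)) huv
    (hc.mul (by fun_prop)) fun x hx => by
      refine ((hd x hx).mul ((hasDerivAt_id' x).const_mul (-c)).exp).congr_deriv ?_
      ring
  have h' := congrArg (· * Real.exp (c * v)) h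
  simp only [mul_assoc, ← Real.exp_add] at h'
  rw [show -c * v + c * v = 0 by ring, Real.exp_zero, mul_one] at h'
  rw [h']
  ring_nf

theorem eqOn_Ici_of_locallyLipschitz {E : Type*} [NormedAddCommGroup E] [NormedSpace ℝ E]
    {V : E → E} (hV : LocallyLipschitz V) {γ₁ γ₂ : ℝ → E} {a : ℝ}
    (hc₁ : Continuous γ₁) (hc₂ : Continuous γ₂)
    (h₁ : ∀ t, a ≤ t → HasDerivWithinAt γ₁ (V (γ₁ t)) (Ici t) t)
    (h₂ : ∀ t, a ≤ t → HasDerivWithinAt γ₂ (V (γ₂ t)) (Ici t) t) (h : γ₁ a = γ₂ a) :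
    EqOn γ₁ γ₂ (Ici a) := by
  intro T hT
  let S := γ₁ '' Icc a T ∪ γ₂ '' Icc a T
  have hS : IsCompact S := (isCompact_Icc.image hc₁).union (isCompact_Icc.image hc₂)
  obtain ⟨K, hK⟩ := LocallyLipschitzOn.exists_lipschitzOnWith_of_compact hS
    (hV.locallyLipschitzOn (s := S))
  exact ODE_solution_unique_of_mem_Icc_right (v := fun _ => V) (s := fun _ => S)
    (fun _ _ => hK) hc₁.continuousOn (fun t ht => h₁ t ht.1)
    (fun t ht => Or.inl (mem_image_of_mem _ (Ico_subset_Icc_self ht)))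
    hc₂.continuousOn (fun t ht => h₂ t ht.1)
    (fun t ht => Or.inr (mem_image_of_mem _ (Ico_subset_Icc_self ht))) h ⟨hT, le_rfl⟩

/-- First-order form of the front equations, with slope `p = θ'` and net heat loss `f`
behind the heat-loss interface. -/
structure FrontSystem (f : ℝ → ℝ) (q a b e R c : ℝ) (θ p : ℝ → ℝ) : Prop where
  hasDerivAt : ∀ x, HasDerivAt θ (p x) x
  continuous_slope : Continuous p
  strictMono : StrictMono θ
  map_zero : θ 0 = a
  map_interface : θ R = b
  left : ∀ x < 0, HasDerivAt p (c * p x) x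
  middle : ∀ x, 0 < x → x < R → HasDerivAt p (c * p x - q) x
  right : ∀ x, R < x → HasDerivAt p (c * p x + f (θ x)) x
  tendsto_atBot : Tendsto θ atBot (nhds 0)
  tendsto_atTop : Tendsto θ atTop (nhds e)

theorem IsAutoignitionFront.frontSystem {q h a b e R c : ℝ} {θ : ℝ → ℝ}
    (H : IsAutoignitionFront q h a b e R c θ) :
    FrontSystem (fun y => h * ((1 + y) ^ 4 - 1) - q) q a b e R c θ (deriv θ) := by
  obtain ⟨h1, h2, h3, h4, h5, h6, h7, h8, h9, h10, h11, h12⟩ := H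
  have hd : ∀ U : Set ℝ, IsOpen U → ContDiffOn ℝ 2 θ U → ∀ x ∈ U,
      HasDerivAt (deriv θ) (deriv (deriv θ) x) x := fun U hU hθ x hx => by
    rw [show (2 : WithTop ℕ∞) = 1 + 1 by norm_num, contDiffOn_succ_iff_deriv_of_isOpen hU] at hθ
    exact ((hθ.2.2.differentiableOn one_ne_zero).differentiableAt (hU.mem_nhds hx)).hasDerivAt
  rw [contDiff_one_iff_deriv] at h1
  refine ⟨fun x => (h1.1 x).hasDerivAt, h1.2, h2, h3, h4, fun x hx => ?_, fun x hx hx' => ?_,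
    fun x hx => ?_, h11, h12⟩
  · exact (hd _ isOpen_Iio h5 x hx).congr_deriv (by linarith [h8 x hx])
  · exact (hd _ isOpen_Ioo h6 x ⟨hx, hx'⟩).congr_deriv (by linarith [h9 x ⟨hx, hx'⟩])
  · exact (hd _ isOpen_Ioi h7 x hx).congr_deriv (by linarith [h10 x hx])

namespace FrontSystem

variable {f : ℝ → ℝ} {q a b e R c : ℝ} {θ p : ℝ → ℝ}

theorem continuous (H : FrontSystem f q a b e R c θ p) : Continuous θ :=
  continuous_iff_continuousAt.2 fun x => (H.hasDerivAt x).continuousAt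

theorem pos (H : FrontSystem f q a b e R c θ p) (x : ℝ) : 0 < θ x :=
  (H.strictMono.monotone.le_of_tendsto H.tendsto_atBot (x - 1)).trans_lt
    (H.strictMono (by linarith))

theorem lt_limit (H : FrontSystem f q a b e R c θ p) (x : ℝ) : θ x < e :=
  (H.strictMono (by linarith : x < x + 1)).trans_le
    (H.strictMono.monotone.ge_of_tendsto H.tendsto_atTop (x + 1))

theorem slope_eq_left (H : FrontSystem f q a b e R c θ p) (hc : 0 < c) {x : ℝ} (hx : x ≤ 0) :
    p x = c * θ x := by
  have hp : ∀ x ≤ 0, p x = p 0 * Real.exp (c * x) := fun x hx => by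
    rw [eq_mul_exp_of_hasDerivAt hx H.continuous_slope.continuousOn fun y hy => H.left y hy.2,
      mul_assoc, ← Real.exp_add]
    ring_nf
    simp
  have hconst : ∀ y ≤ x, p x - c * θ x = p y - c * θ y := fun y hy =>
    eq_of_hasDerivAt_zero (g := fun x => p x - c * θ x) hy
      (H.continuous_slope.sub (H.continuous.const_mul c)).continuousOn fun z hz =>
        ((H.left z (hz.2.trans_le hx)).sub ((H.hasDerivAt z).const_mul c)).congr_deriv (sub_self _)
  have hlim : Tendsto (fun y => p 0 * Real.exp (c * y) - c * θ y) atBot (nhds (p 0 * 0 - c * 0)) :=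
    ((Real.tendsto_exp_atBot.comp (tendsto_id.const_mul_atBot hc)).const_mul (p 0)).sub
      (H.tendsto_atBot.const_mul c)
  have hlim' : Tendsto (fun _ : ℝ => p x - c * θ x) atBot (nhds (p 0 * 0 - c * 0)) := by
    refine hlim.congr' ?_
    filter_upwards [eventually_le_atBot x] with y hy
    rw [hconst y hy, hp y (hy.trans hx)]
  have := tendsto_nhds_unique tendsto_const_nhds hlim'
  linarith

theorem eq_left (H : FrontSystem f q a b e R c θ p) (hc : 0 < c) {x : ℝ} (hx : x ≤ 0) :
    θ x = a * Real.exp (c * x) := by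
  have := eq_mul_exp_of_hasDerivAt (g := θ) hx H.continuous.continuousOn
    fun y hy => H.slope_eq_left hc hy.2.le ▸ H.hasDerivAt y
  rw [← H.map_zero, this, mul_assoc, ← Real.exp_add]
  ring_nf
  simp

theorem slope_eq_middle (H : FrontSystem f q a b e R c θ p) (hc : 0 < c) {x : ℝ} (hx : 0 ≤ x)
    (hxR : x ≤ R) : p x = c * θ x - q * x := by
  have := eq_of_hasDerivAt_zero (g := fun x => p x - c * θ x + q * x) hx
    ((H.continuous_slope.sub (H.continuous.const_mul c)).add (by fun_prop)).continuousOn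
    fun z hz => (((H.middle z hz.1 (hz.2.trans_le hxR)).sub ((H.hasDerivAt z).const_mul c)).add
      ((hasDerivAt_id' z).const_mul q)).congr_deriv (by ring)
  simp only [mul_zero, H.slope_eq_left hc le_rfl] at this
  linarith

theorem slope_pos (H : FrontSystem f q a b e R c θ p) (hc : 0 < c) (hq : 0 < q)
    (hf : Continuous f) (hneg : ∀ y, 0 < y → y < e → f y < 0) (x : ℝ) : 0 < p x := by
  have hnn : ∀ x, 0 ≤ p x := fun x =>
    (H.hasDerivAt x).deriv ▸ H.strictMono.monotone.deriv_nonneg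
  refine (hnn x).lt_of_ne' fun h0 => ?_
  rcases le_or_gt x 0 with hx | hx
  · rw [H.slope_eq_left hc hx] at h0
    exact (mul_pos hc (H.pos x)).ne' h0
  rcases lt_or_ge x R with hxR | hxR
  · have hmin : IsLocalMin p x := Eventually.of_forall fun y => h0 ▸ hnn y
    have := hmin.hasDerivAt_eq_zero (H.middle x hx hxR)
    rw [h0] at this
    linarith
  · have hcont : Continuous fun y => c * p y + f (θ y) :=
      (H.continuous_slope.const_mul c).add (hf.comp H.continuous)
    have hev : ∀ᶠ y in nhds x, c * p y + f (θ y) < 0 :=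
      hcont.continuousAt.eventually_lt_const
        (by simpa [h0] using hneg _ (H.pos x) (H.lt_limit x))
    obtain ⟨l, u, hlu, hsub⟩ := mem_nhds_iff_exists_Ioo_subset.1 hev
    obtain ⟨v, hxv, hvu⟩ := exists_between hlu.2
    obtain ⟨z, hz, hslope⟩ := exists_hasDerivAt_eq_slope p (fun y => c * p y + f (θ y)) hxv
      H.continuous_slope.continuousOn fun y hy => H.right y (hxR.trans_lt hy.1)
    have hz0 : c * p z + f (θ z) < 0 := hsub ⟨hlu.1.trans hz.1, hz.2.trans hvu⟩
    rw [hslope, h0, sub_zero] at hz0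
    exact absurd hz0 (not_lt.2 (div_nonneg (hnn v) (by linarith)))

/-- The slope as a function of the temperature. -/
theorem exists_phase_curve (H : FrontSystem f q a b e R c θ p) (hR : 0 < R)
    (hpos : ∀ x, 0 < p x) :
    ∃ P : ℝ → ℝ, (∀ x, P (θ x) = p x) ∧ (∀ y ∈ Ico a e, ContinuousAt P y) ∧
      (∀ y ∈ Ico a e, ∃ x, 0 ≤ x ∧ θ x = y) ∧
      (∀ y ∈ Ioo a b, HasDerivAt P (c + -q / P y) y) ∧
      (∀ y ∈ Ioo b e, HasDerivAt P (c + f y / P y) y) := by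
  have hinv : Function.LeftInverse (Function.invFun θ) θ :=
    Function.leftInverse_invFun H.strictMono.injective
  set X := Function.invFun θ
  have hX : ∀ x, HasDerivAt X (p x)⁻¹ (θ x) := fun x => by
    have hs : HasStrictDerivAt θ (p x) x :=
      hasStrictDerivAt_of_hasDerivAt_of_continuousAt (Eventually.of_forall H.hasDerivAt)
        H.continuous_slope.continuousAt
    exact (hs.to_local_left_inverse (hpos x).ne' (Eventually.of_forall hinv)).hasDerivAt
  have hPx : ∀ x, p (X (θ x)) = p x := fun x => by rw [hinv x]
  have hsurj : ∀ y ∈ Ico a e, ∃ x, 0 ≤ x ∧ θ x = y := fun y hy => by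
    obtain ⟨u, hu⟩ := (H.tendsto_atTop.eventually_const_lt hy.2).exists
    have h0u : 0 ≤ u := H.strictMono.le_iff_le.1 (by rw [H.map_zero]; exact hy.1.trans hu.le)
    obtain ⟨x, hx, rfl⟩ := intermediate_value_Icc h0u H.continuous.continuousOn
      ⟨H.map_zero ▸ hy.1, hu.le⟩
    exact ⟨x, hx.1, rfl⟩
  have hderiv : ∀ x F, HasDerivAt p (c * p x + F) x →
      HasDerivAt (fun y => p (X y)) (c + F / p (X (θ x))) (θ x) := fun x F hF => by
    rw [← hinv x] at hF
    refine (hF.comp (θ x) (hX x)).congr_deriv ?_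
    rw [hinv x]
    field_simp [(hpos x).ne']
  have hbe : b < e := H.map_interface ▸ H.lt_limit R
  have hab : a < b := by rw [← H.map_zero, ← H.map_interface]; exact H.strictMono hR
  refine ⟨fun y => p (X y), hPx, fun y hy => ?_, hsurj, fun y hy => ?_, fun y hy => ?_⟩
  · obtain ⟨x, _, rfl⟩ := hsurj y hy
    exact H.continuous_slope.continuousAt.comp (hX x).continuousAt
  · obtain ⟨x, _, rfl⟩ := hsurj y ⟨hy.1.le, hy.2.trans hbe⟩
    rw [← H.map_zero, ← H.map_interface, mem_Ioo, H.strictMono.lt_iff_lt,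
      H.strictMono.lt_iff_lt] at hy
    exact hderiv x _ (H.middle x hy.1 hy.2)
  · obtain ⟨x, _, rfl⟩ := hsurj y ⟨hab.le.trans hy.1.le, hy.2⟩
    rw [← H.map_interface, mem_Ioo, H.strictMono.lt_iff_lt] at hy
    exact hderiv x _ (H.right x hy.1)

theorem speed_le {R' c' : ℝ} {θ' p' : ℝ → ℝ} (H : FrontSystem f q a b e R c θ p)
    (H' : FrontSystem f q a b e R' c' θ' p') (hR : 0 < R) (hR' : 0 < R') (hc : 0 < c)
    (hc' : 0 < c') (hq : 0 < q) (hf : Continuous f) (hneg : ∀ y, 0 < y → y < e → f y < 0) :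
    c' ≤ c := by
  by_contra! hlt
  have hpos := H.slope_pos hc hq hf hneg
  have hpos' := H'.slope_pos hc' hq hf hneg
  obtain ⟨P, hP, hPc, hPs, hPm, hPr⟩ := H.exists_phase_curve hR hpos
  obtain ⟨P', hP', hPc', hPs', hPm', hPr'⟩ := H'.exists_phase_curve hR' hpos'
  have hbe : b < e := H.map_interface ▸ H.lt_limit R
  have ha : 0 < a := H.map_zero ▸ H.pos 0
  have hab : a < b := by rw [← H.map_zero, ← H.map_interface]; exact H.strictMono hR
  have hPpos : ∀ y ∈ Ico a e, 0 < P y := fun y hy => by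
    obtain ⟨x, _, rfl⟩ := hPs y hy
    exact hP x ▸ hpos x
  have hDc : ∀ u v, a ≤ u → v < e → ContinuousOn (fun y => P' y - P y) (Icc u v) :=
    fun u v hu hv y hy => ((hPc' y ⟨hu.trans hy.1, hy.2.trans_lt hv⟩).sub
      (hPc y ⟨hu.trans hy.1, hy.2.trans_lt hv⟩)).continuousWithinAt
  have hsign : ∀ F y, F < 0 → y ∈ Ico a e → 0 < P' y - P y →
      0 ≤ (c' + F / P' y) - (c + F / P y) := fun F y hF hy hD => by
    have h1 : -F / P' y ≤ -F / P y :=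
      div_le_div_of_nonneg_left (by linarith) (hPpos y hy) (by linarith)
    rw [neg_div, neg_div] at h1
    linarith
  have hD0 : P' a - P a = (c' - c) * a := by
    have h1 := hP 0
    have h2 := hP' 0
    rw [H.slope_eq_left hc le_rfl, H.map_zero] at h1
    rw [H'.slope_eq_left hc' le_rfl, H'.map_zero] at h2
    rw [h1, h2]
    ring
  have hδ : 0 < (c' - c) * a := mul_pos (by linarith) ha
  have hm : ∀ y ∈ Icc a b, (c' - c) * a ≤ P' y - P y := hD0 ▸
    le_of_deriv_nonneg_of_pos (hDc a b le_rfl hbe) (fun y hy => (hPm' y hy).sub (hPm y hy))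
      (hD0 ▸ hδ) fun y hy => hsign _ y (by linarith) ⟨hy.1.le, hy.2.trans hbe⟩
  have hDb := hm b ⟨hab.le, le_rfl⟩
  have hall : ∀ y ∈ Ico a e, (c' - c) * a ≤ P' y - P y := fun y hy => by
    rcases le_total y b with hyb | hyb
    · exact hm y ⟨hy.1, hyb⟩
    · refine hDb.trans (le_of_deriv_nonneg_of_pos (hDc b y hab.le hy.2)
        (fun z hz => (hPr' z ⟨hz.1, hz.2.trans hy.2⟩).sub (hPr z ⟨hz.1, hz.2.trans hy.2⟩))
        (hδ.trans_le hDb) (fun z hz => hsign _ z ?_ ⟨hab.le.trans hz.1.le, hz.2.trans hy.2⟩)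
        y ⟨hyb, le_rfl⟩)
      exact hneg z (ha.trans (hab.trans hz.1)) (hz.2.trans hy.2)
  obtain ⟨x, _, hx⟩ := exists_gt_of_le_deriv (a := 0) hδ (fun x _ => H'.hasDerivAt x)
    (fun x hx => by
      have hmem : θ' x ∈ Ico a e :=
        ⟨by rw [← H'.map_zero]; exact H'.strictMono.monotone hx, H'.lt_limit x⟩
      linarith [hall _ hmem, hPpos _ hmem, hP' x]) e
  exact lt_asymm hx (H'.lt_limit x)

theorem eqOn_middle {R' : ℝ} {θ' p' : ℝ → ℝ} (H : FrontSystem f q a b e R c θ p)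
    (H' : FrontSystem f q a b e R' c θ' p') (hc : 0 < c) {x : ℝ} (hx : 0 ≤ x) (hxR : x ≤ R)
    (hxR' : x ≤ R') : θ x = θ' x := by
  have := eq_mul_exp_of_hasDerivAt (g := fun x => θ x - θ' x) (c := c) hx
    (H.continuous.sub H'.continuous).continuousOn fun y hy => by
      refine ((H.hasDerivAt y).sub (H'.hasDerivAt y)).congr_deriv ?_
      rw [H.slope_eq_middle hc hy.1.le (hy.2.le.trans hxR),
        H'.slope_eq_middle hc hy.1.le (hy.2.le.trans hxR')]
      ring
  simp only [H.map_zero, H'.map_zero, sub_self, zero_mul] at this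
  linarith

theorem interface_le {R' : ℝ} {θ' p' : ℝ → ℝ} (H : FrontSystem f q a b e R c θ p)
    (H' : FrontSystem f q a b e R' c θ' p') (hc : 0 < c) (hR : 0 ≤ R) : R' ≤ R := by
  by_contra! hlt
  have h1 := H.eqOn_middle H' hc hR le_rfl hlt.le
  rw [H.map_interface, ← H'.map_interface] at h1
  exact hlt.ne' (H'.strictMono.injective h1)

theorem hasDerivWithinAt_slope (H : FrontSystem f q a b e R c θ p) (hf : Continuous f) {x : ℝ}
    (hx : R ≤ x) : HasDerivWithinAt p (c * p x + f (θ x)) (Ici x) x := by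
  refine hasDerivWithinAt_Ici_of_tendsto_deriv (s := Ioi x)
    (fun y hy => (H.right y (hx.trans_lt hy)).differentiableAt.differentiableWithinAt)
    H.continuous_slope.continuousWithinAt self_mem_nhdsWithin ?_
  have hcont : Continuous fun y => c * p y + f (θ y) :=
    (H.continuous_slope.const_mul c).add (hf.comp H.continuous)
  refine (hcont.continuousAt.tendsto.mono_left nhdsWithin_le_nhds).congr' ?_
  filter_upwards [self_mem_nhdsWithin] with y hy using (H.right y (hx.trans_lt hy)).deriv.symm

theorem eqOn_right {θ' p' : ℝ → ℝ} (H : FrontSystem f q a b e R c θ p)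
    (H' : FrontSystem f q a b e R c θ' p') (hc : 0 < c) (hR : 0 ≤ R) (hf : ContDiff ℝ 1 f) {x : ℝ}
    (hx : R ≤ x) : θ x = θ' x := by
  let V : ℝ × ℝ → ℝ × ℝ := fun z => (z.2, c * z.2 + f z.1)
  have hV : ContDiff ℝ 1 V := by
    simp only [V]
    fun_prop
  have := eqOn_Ici_of_locallyLipschitz hV.locallyLipschitz
    (γ₁ := fun x => (θ x, p x)) (γ₂ := fun x => (θ' x, p' x)) (a := R)
    (H.continuous.prodMk H.continuous_slope) (H'.continuous.prodMk H'.continuous_slope)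
    (fun t ht => (H.hasDerivAt t).hasDerivWithinAt.prodMk
      (H.hasDerivWithinAt_slope hf.continuous ht))
    (fun t ht => (H'.hasDerivAt t).hasDerivWithinAt.prodMk
      (H'.hasDerivWithinAt_slope hf.continuous ht))
    (by simp only [H.slope_eq_middle hc hR le_rfl, H'.slope_eq_middle hc hR le_rfl,
      H.map_interface, H'.map_interface]) hx
  exact congrArg Prod.fst this

theorem unique {R' c' : ℝ} {θ' p' : ℝ → ℝ} (H : FrontSystem f q a b e R c θ p)
    (H' : FrontSystem f q a b e R' c' θ' p') (hR : 0 < R) (hR' : 0 < R') (hc : 0 < c)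
    (hc' : 0 < c') (hq : 0 < q) (hf : ContDiff ℝ 1 f) (hneg : ∀ y, 0 < y → y < e → f y < 0) :
    R' = R ∧ c' = c ∧ θ' = θ := by
  obtain rfl : c' = c := le_antisymm (H.speed_le H' hR hR' hc hc' hq hf.continuous hneg)
    (H'.speed_le H hR' hR hc' hc hq hf.continuous hneg)
  obtain rfl : R' = R := le_antisymm (H.interface_le H' hc hR.le) (H'.interface_le H hc hR'.le)
  refine ⟨rfl, rfl, funext fun x => ?_⟩
  rcases le_total x 0 with hx | hx
  · rw [H.eq_left hc hx, H'.eq_left hc hx]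
  rcases le_total x R' with hxR | hxR
  · exact H'.eqOn_middle H hc hx hxR hxR
  · exact H'.eqOn_right H hc hR.le hf hxR

end FrontSystem

/-- Existence and uniqueness of the traveling front: there are `R* > 0`, `c* > 0`
and a profile `θ*`, and any other front (normalized by `θ(0) = θ_ig`) coincides
with it. -/
theorem stmt0 (q h θig θhl θp : ℝ) (hq : 0 < q) (hh : 0 < h)
    (hθp : θp = (1 + q / h) ^ ((1 : ℝ) / 4) - 1)
    (h1 : 0 < θig) (h2 : θig < θhl) (h3 : θhl < θp) :
    ∃ R c : ℝ, ∃ θ : ℝ → ℝ, 0 < R ∧ 0 < c ∧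
      IsAutoignitionFront q h θig θhl θp R c θ ∧
      ∀ R' c' : ℝ, ∀ θ' : ℝ → ℝ, 0 < R' → 0 < c' →
        IsAutoignitionFront q h θig θhl θp R' c' θ' →
        R' = R ∧ c' = c ∧ θ' = θ := by
  have hpow : (1 + θp) ^ 4 = 1 + q / h := by
    rw [hθp, add_sub_cancel, ← Real.rpow_natCast, ← Real.rpow_mul (by positivity)]
    norm_num
  have he : h * ((1 + θp) ^ 4 - 1) = q := by
    rw [hpow]
    field_simp
    ring
  obtain ⟨R, c, θ, hR, hc, H⟩ := exists_front hq hh he h1 h2 h3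
  refine ⟨R, c, θ, hR, hc, H, fun R' c' θ' hR' hc' H' =>
    H.frontSystem.unique H'.frontSystem hR hR' hc hc' hq (by fun_prop) fun y hy hye => ?_⟩
  have hlt : (1 + y) ^ 4 < (1 + θp) ^ 4 :=
    pow_lt_pow_left₀ (by linarith) (by linarith) (by norm_num)
  have := mul_lt_mul_of_pos_left hlt hh
  linarith
end

section
/- There exist R₀ > 0 and c₀ > 0 with c₀·θ_hl = q·R₀ and G(R₀, c₀) = 0, and a function φ : (0, R₀] → ℝ such that: φ is C^∞ on (0, R₀] and strictly decreasing; φ(R₀) = c₀; φ(R) → +∞ as R → 0⁺; for every R ∈ (0, R₀] one has φ(R)·θ_hl ≥ q·R and G(R, φ(R)) = 0; and conversely, every pair (R, c) with R > 0, c·θ_hl ≥ q·R and G(R, c) = 0 satisfies R ≤ R₀ and c = φ(R). In particular, the level set {(R,c) : R > 0, c·θ_hl ≥ q·R, G(R,c) = 0} is the graph of the smooth decreasing function φ, with right endpoint (R₀, c₀) on the line cθ_hl = qR and the axis R = 0 as asymptote on the left. -/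
open Set Filter

/-- The transcendental function `G(R,c) = q(e^{cR} − 1 − cR) − c²(θ_ig e^{cR} − θ_hl)`. -/
noncomputable def G (q θig θhl R c : ℝ) : ℝ :=
  q * (Real.exp (c * R) - 1 - c * R) - c ^ 2 * (θig * Real.exp (c * R) - θhl)

open Real in
theorem mul_one_sub_exp_neg_lt {x y : ℝ} (hx : 0 < x) (hxy : x < y) :
    x * (1 - exp (-y)) < y * (1 - exp (-x)) := by
  have hy : 0 < y := hx.trans hxy
  have h := strictConvexOn_exp.2 (mem_univ (-y)) (mem_univ 0) (by linarith)
    (div_pos hx hy) (sub_pos.2 ((div_lt_one hy).2 hxy)) (by ring)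
  have e : x / y * -y = -x := by field_simp
  simp only [smul_eq_mul, mul_zero, add_zero, exp_zero, mul_one, e] at h
  have h' := mul_lt_mul_of_pos_left h hy
  have e' : y * (x / y * exp (-y) + (1 - x / y)) = x * exp (-y) + (y - x) := by
    field_simp
  rw [e'] at h'
  linarith

/-- A right inverse with the regularity of `f`, near a point where `f` has nonzero derivative. -/
theorem ContDiffAt.exists_local_rightInverse {n : WithTop ℕ∞} {f : ℝ → ℝ} {f' a : ℝ}
    (hf : ContDiffAt ℝ n f a) (hf' : HasDerivAt f f' a) (h : f' ≠ 0) (hn : n ≠ 0) :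
    ∃ g : ℝ → ℝ, ContDiffAt ℝ n g (f a) ∧ g (f a) = a ∧
      ∀ᶠ y in nhds (f a), f (g y) = y :=
  ⟨hf.localInverse (hf'.hasFDerivAt_equiv h) hn, hf.to_localInverse _ hn,
    hf.localInverse_apply_image _ hn,
    (hf.hasStrictFDerivAt' (hf'.hasFDerivAt_equiv h) hn).eventually_right_inverse⟩

/-- On the level set `{G = 0}`, the value of `R ^ 2` in terms of `x = c * R`. -/
noncomputable def radiusSq (q θig θhl x : ℝ) : ℝ :=
  x ^ 2 * (θig * Real.exp x - θhl) / (q * (Real.exp x - 1 - x))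

/-- On the level set `{G = 0}`, the value of `c ^ 2` in terms of `x = c * R`. -/
noncomputable def speedSq (q θig θhl x : ℝ) : ℝ :=
  q * (Real.exp x - 1 - x) / (θig * Real.exp x - θhl)

theorem exp_sub_one_sub_pos {x : ℝ} (hx : x ≠ 0) : 0 < Real.exp x - 1 - x := by
  linarith [Real.add_one_lt_exp hx]

section

variable {q θig θhl : ℝ}

theorem ignition_excess_pos_iff (h1 : 0 < θig) (h2 : 0 < θhl) {x : ℝ} :
    0 < θig * Real.exp x - θhl ↔ Real.log (θhl / θig) < x := by
  rw [sub_pos, Real.log_lt_iff_lt_exp (div_pos h2 h1), div_lt_iff₀ h1, mul_comm]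

theorem contDiffAt_radiusSq (hq : 0 < q) {n : WithTop ℕ∞} {x : ℝ} (hx : x ≠ 0) :
    ContDiffAt ℝ n (radiusSq q θig θhl) x := by
  unfold radiusSq
  exact ContDiffAt.div (by fun_prop) (by fun_prop) (mul_pos hq (exp_sub_one_sub_pos hx)).ne'

theorem exists_hasDerivAt_radiusSq_pos (hq : 0 < q) (h2 : 0 < θhl) {x : ℝ} (hx : 0 < x)
    (hN : 0 < θig * Real.exp x - θhl) :
    ∃ d, 0 < d ∧ HasDerivAt (radiusSq q θig θhl) d x := by
  have hD := exp_sub_one_sub_pos hx.ne'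
  have hnum : HasDerivAt (fun x : ℝ => x ^ 2 * (θig * Real.exp x - θhl))
      (2 * x * (θig * Real.exp x - θhl) + x ^ 2 * (θig * Real.exp x)) x := by
    have := (hasDerivAt_pow 2 x).fun_mul (((Real.hasDerivAt_exp x).const_mul θig).sub_const θhl)
    simpa using this
  have hden : HasDerivAt (fun x : ℝ => q * (Real.exp x - 1 - x)) (q * (Real.exp x - 1)) x :=
    (((Real.hasDerivAt_exp x).sub_const 1).sub (hasDerivAt_id x)).const_mul q
  refine ⟨_, ?_, hnum.div hden (mul_pos hq hD).ne'⟩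
  refine div_pos ?_ (by positivity)
  have hquad := Real.quadratic_le_exp_of_nonneg hx.le
  have e : (2 * x * (θig * Real.exp x - θhl) + x ^ 2 * (θig * Real.exp x)) *
        (q * (Real.exp x - 1 - x)) -
      x ^ 2 * (θig * Real.exp x - θhl) * (q * (Real.exp x - 1)) =
      q * x * ((θig * Real.exp x - θhl) * (2 * (Real.exp x - 1 - x) - x ^ 2) +
        x * θhl * (Real.exp x - 1 - x)) := by ring
  rw [e]
  exact mul_pos (mul_pos hq hx) (add_pos_of_nonneg_of_pos
    (mul_nonneg hN.le (by linarith)) (by positivity))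

theorem strictMonoOn_radiusSq (hq : 0 < q) (h1 : 0 < θig) (h2 : θig < θhl) :
    StrictMonoOn (radiusSq q θig θhl) (Ici (Real.log (θhl / θig))) := by
  have hL : 0 < Real.log (θhl / θig) := Real.log_pos ((one_lt_div h1).2 h2)
  refine strictMonoOn_of_deriv_pos (convex_Ici _) (fun x hx => ?_) (fun x hx => ?_)
  · exact (contDiffAt_radiusSq (n := 0) hq (hL.trans_le hx).ne').continuousAt.continuousWithinAt
  · rw [interior_Ici] at hx
    obtain ⟨d, hd, h⟩ := exists_hasDerivAt_radiusSq_pos hq (h1.trans h2) (hL.trans hx)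
      ((ignition_excess_pos_iff h1 (h1.trans h2)).2 hx)
    rwa [h.deriv]

theorem strictAntiOn_speedSq (hq : 0 < q) (h1 : 0 < θig) (h2 : θig < θhl) {b : ℝ}
    (hb : θhl * (1 - Real.exp (-b)) = θig * b) :
    StrictAntiOn (speedSq q θig θhl) (Ioc (Real.log (θhl / θig)) b) := by
  have hL : 0 < Real.log (θhl / θig) := Real.log_pos ((one_lt_div h1).2 h2)
  have hder : ∀ x, Real.log (θhl / θig) < x → HasDerivAt (speedSq q θig θhl)
      ((q * (Real.exp x - 1) * (θig * Real.exp x - θhl) -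
        q * (Real.exp x - 1 - x) * (θig * Real.exp x)) / (θig * Real.exp x - θhl) ^ 2) x := by
    intro x hx
    exact ((((Real.hasDerivAt_exp x).sub_const 1).sub (hasDerivAt_id x)).const_mul q).div
      (((Real.hasDerivAt_exp x).const_mul θig).sub_const θhl)
      ((ignition_excess_pos_iff h1 (h1.trans h2)).2 hx).ne'
  refine strictAntiOn_of_deriv_neg (convex_Ioc _ _) (fun x hx => ?_) (fun x hx => ?_)
  · exact (hder x hx.1).continuousAt.continuousWithinAt
  · rw [interior_Ioc] at hx
    rw [(hder x hx.1).deriv]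
    have hx0 : 0 < x := hL.trans hx.1
    have hN := (ignition_excess_pos_iff h1 (h1.trans h2)).2 hx.1
    refine div_neg_of_neg_of_pos ?_ (by positivity)
    have hk : θig * x < θhl * (1 - Real.exp (-x)) := by
      have hlt := mul_lt_mul_of_pos_left (mul_one_sub_exp_neg_lt hx0 hx.2) (h1.trans h2)
      have : b * (θig * x) < b * (θhl * (1 - Real.exp (-x))) := by nlinarith
      exact lt_of_mul_lt_mul_left this (hx0.trans hx.2).le
    have hk' := mul_lt_mul_of_pos_right hk (Real.exp_pos x)
    have he : Real.exp (-x) * Real.exp x = 1 := by rw [← Real.exp_add]; simp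
    have e : θhl * (1 - Real.exp (-x)) * Real.exp x = θhl * (Real.exp x - 1) := by
      linear_combination -θhl * he
    rw [e] at hk'
    have := mul_lt_mul_of_pos_left hk' hq
    linarith

/-- The value of `c * R` at the endpoint of the level set. -/
theorem exists_endpoint (h1 : 0 < θig) (h2 : θig < θhl) :
    ∃ b, Real.log (θhl / θig) < b ∧ θhl * (1 - Real.exp (-b)) = θig * b := by
  have hr : 1 < θhl / θig := (one_lt_div h1).2 h2
  have hr0 : 0 < θhl / θig := one_pos.trans hr
  have hlt : Real.log (θhl / θig) < θhl / θig - 1 := Real.log_lt_sub_one_of_pos hr0 hr.ne'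
  let p : ℝ → ℝ := fun x => θhl * (1 - Real.exp (-x)) - θig * x
  have hθ : θig * (θhl / θig) = θhl := by field_simp
  have hpL : 0 < p (Real.log (θhl / θig)) := by
    simp only [p]
    rw [Real.exp_neg, Real.exp_log hr0]
    have e : θhl * (1 - (θhl / θig)⁻¹) = θhl - θig := by
      have := h1.trans h2
      field_simp
    rw [e]
    have := mul_lt_mul_of_pos_left hlt h1
    linarith
  have hpr : p (θhl / θig) < 0 := by
    simp only [p]
    rw [hθ]
    linarith [mul_pos (h1.trans h2) (Real.exp_pos (-(θhl / θig)))]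
  have hcont : ContinuousOn p (Icc (Real.log (θhl / θig)) (θhl / θig)) := by fun_prop
  obtain ⟨b, hb, hpb⟩ := intermediate_value_Ioo' (by linarith) hcont ⟨hpr, hpL⟩
  exact ⟨b, hb.1, sub_eq_zero.1 hpb⟩

end

/-- The level set `{G = 0}` inside `Q₊` is the graph of a smooth decreasing function
`φ : (0, R₀] → ℝ` with right endpoint `(R₀, c₀)` on the line `cθ_hl = qR` and the
axis `R = 0` as asymptote on the left. -/
theorem stmt1 (q θig θhl : ℝ) (hq : 0 < q) (h1 : 0 < θig) (h2 : θig < θhl) :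
    ∃ R₀ c₀ : ℝ, 0 < R₀ ∧ 0 < c₀ ∧ c₀ * θhl = q * R₀ ∧ G q θig θhl R₀ c₀ = 0 ∧
      ∃ φ : ℝ → ℝ,
        ContDiffOn ℝ (⊤ : ℕ∞) φ (Ioc 0 R₀) ∧
        StrictAntiOn φ (Ioc 0 R₀) ∧
        φ R₀ = c₀ ∧
        Tendsto φ (nhdsWithin 0 (Ioi 0)) atTop ∧
        (∀ R ∈ Ioc (0 : ℝ) R₀, q * R ≤ φ R * θhl ∧ G q θig θhl R (φ R) = 0) ∧
        (∀ R c : ℝ, 0 < R → q * R ≤ c * θhl → G q θig θhl R c = 0 →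
          R ≤ R₀ ∧ c = φ R) := by
  have h3 : 0 < θhl := h1.trans h2
  have hL : 0 < Real.log (θhl / θig) := Real.log_pos ((one_lt_div h1).2 h2)
  obtain ⟨b, hLb, hb⟩ := exists_endpoint h1 h2
  set L := Real.log (θhl / θig) with hLdef
  have hN : ∀ {x}, L < x → 0 < θig * Real.exp x - θhl :=
    fun h => (ignition_excess_pos_iff h1 h3).2 h
  have hD : ∀ {x}, L < x → 0 < Real.exp x - 1 - x := fun h => exp_sub_one_sub_pos (hL.trans h).ne'
  have hmono := strictMonoOn_radiusSq hq h1 h2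
  have hanti := strictAntiOn_speedSq hq h1 h2 hb
  have hb0 : 0 < b := hL.trans hLb
  have hHL : radiusSq q θig θhl L = 0 := by
    rw [radiusSq, hLdef, Real.exp_log (div_pos h3 h1)]
    field_simp
    simp
  have hHb : 0 < radiusSq q θig θhl b := by
    rw [← hHL]; exact hmono self_mem_Ici hLb.le hLb
  -- the constraint defining `Q₊`, in terms of `x = c * R`
  have hcon : ∀ x, L < x → (q * radiusSq q θig θhl x ≤ x * θhl ↔
      θig * x ≤ θhl * (1 - Real.exp (-x))) := by
    intro x hx
    have hx0 := hL.trans hx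
    have hDx := hD hx
    have he : Real.exp (-x) * Real.exp x = 1 := by rw [← Real.exp_add]; simp
    have e1 : q * radiusSq q θig θhl x =
        x * (x * (θig * Real.exp x - θhl)) / (Real.exp x - 1 - x) := by
      unfold radiusSq; field_simp
    rw [e1, div_le_iff₀ hDx, mul_assoc, mul_le_mul_iff_right₀ hx0,
      ← mul_le_mul_iff_left₀ (b := θig * x) (Real.exp_pos x)]
    have e2 : θhl * (1 - Real.exp (-x)) * Real.exp x = θhl * (Real.exp x - 1) := by
      linear_combination -θhl * he
    rw [e2]
    constructor <;> intro h <;> linarith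
  have hcon_le : ∀ x, L < x → (θig * x ≤ θhl * (1 - Real.exp (-x)) ↔ x ≤ b) := by
    intro x hx
    have hx0 := hL.trans hx
    constructor
    · intro h
      by_contra! hlt
      have := mul_lt_mul_of_pos_left (mul_one_sub_exp_neg_lt hb0 hlt) h3
      nlinarith
    · intro h
      rcases h.eq_or_lt with rfl | hlt
      · exact hb.ge
      · have := mul_lt_mul_of_pos_left (mul_one_sub_exp_neg_lt hx0 hlt) h3
        have : b * (θig * x) ≤ b * (θhl * (1 - Real.exp (-x))) := by nlinarith
        exact le_of_mul_le_mul_left this hb0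
  have hzero : ∀ R x, 0 < R → L < x → radiusSq q θig θhl x = R ^ 2 →
      G q θig θhl R (x / R) = 0 := by
    intro R x hR hx h
    have hDx := hD hx
    rw [radiusSq, div_eq_iff (mul_pos hq hDx).ne'] at h
    rw [G, div_mul_cancel₀ _ hR.ne', div_pow, sub_eq_zero, div_mul_eq_mul_div,
      eq_div_iff (pow_pos hR 2).ne', h]
    ring
  set R₀ := √(radiusSq q θig θhl b)
  have hR₀pos : 0 < R₀ := Real.sqrt_pos.2 hHb
  have hR₀sq : radiusSq q θig θhl b = R₀ ^ 2 := (Real.sq_sqrt hHb.le).symm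
  have hex : ∀ R ∈ Ioc 0 R₀, ∃ x ∈ Ioc L b, radiusSq q θig θhl x = R ^ 2 := by
    intro R hR
    have hc : ContinuousOn (radiusSq q θig θhl) (Icc L b) := fun x hx =>
      (contDiffAt_radiusSq (n := 0) hq (hL.trans_le hx.1).ne').continuousAt.continuousWithinAt
    refine intermediate_value_Ioc hLb.le hc ⟨?_, ?_⟩
    · rw [hHL]; exact pow_pos hR.1 2
    · rw [hR₀sq]; exact pow_le_pow_left₀ hR.1.le hR.2 2
  choose! g hgmem hg using hex
  have hg_eq : ∀ R ∈ Ioc 0 R₀, ∀ x, L < x → radiusSq q θig θhl x = R ^ 2 → g R = x :=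
    fun R hR x hx h => hmono.injOn (hgmem R hR).1.le hx.le ((hg R hR).trans h.symm)
  have hR₀mem : R₀ ∈ Ioc 0 R₀ := ⟨hR₀pos, le_rfl⟩
  have hgR₀ : g R₀ = b := hg_eq R₀ hR₀mem b hLb hR₀sq
  have hspeed : ∀ R ∈ Ioc 0 R₀, (g R / R) ^ 2 = speedSq q θig θhl (g R) := by
    intro R hR
    have hx := (hgmem R hR).1
    have hx0 := hL.trans hx
    have hNx := hN hx
    have hDx := hD hx
    rw [div_pow, ← hg R hR, radiusSq, speedSq]
    field_simp
  refine ⟨R₀, b / R₀, hR₀pos, div_pos hb0 hR₀pos, ?_, hzero _ _ hR₀pos hLb hR₀sq,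
    fun R => g R / R, ?_, ?_, ?_, ?_, ?_, ?_⟩
  · have hDb := hD hLb
    have he : Real.exp (-b) * Real.exp b = 1 := by rw [← Real.exp_add]; simp
    rw [div_mul_eq_mul_div, div_eq_iff hR₀pos.ne', mul_assoc, ← sq, ← hR₀sq, radiusSq]
    field_simp
    linear_combination Real.exp b * hb + θhl * he
  · intro R hR
    obtain ⟨d, hd, hder⟩ := exists_hasDerivAt_radiusSq_pos hq h3
      (hL.trans (hgmem R hR).1) (hN (hgmem R hR).1)
    obtain ⟨k, hk, hka, hkr⟩ := (contDiffAt_radiusSq (n := ((⊤ : ℕ∞) : WithTop ℕ∞)) hq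
      (hL.trans (hgmem R hR).1).ne').exists_local_rightInverse hder hd.ne' (by simp)
    rw [hg R hR] at hk hka hkr
    have hks : ContDiffAt ℝ ((⊤ : ℕ∞) : WithTop ℕ∞) (fun y : ℝ => k (y ^ 2)) R :=
      ContDiffAt.comp (g := k) (f := fun y : ℝ => y ^ 2) R hk (by fun_prop)
    have hsq : Tendsto (fun y : ℝ => y ^ 2) (nhds R) (nhds (R ^ 2)) :=
      (continuous_pow 2).tendsto R
    have hgt : ∀ᶠ y in nhds R, L < k (y ^ 2) := by
      refine hks.continuousAt.eventually (lt_mem_nhds ?_)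
      simpa only [hka] using (hgmem R hR).1
    have hev : ∀ᶠ y in nhdsWithin R (Ioc 0 R₀), g y / y = k (y ^ 2) / y := by
      filter_upwards [self_mem_nhdsWithin, nhdsWithin_le_nhds hgt,
        nhdsWithin_le_nhds (hsq.eventually hkr)] with y hy hLy hry
      rw [hg_eq y hy _ hLy hry]
    refine ContDiffWithinAt.congr_of_eventuallyEq_of_mem ?_ hev hR
    exact (hks.div contDiffAt_id hR.1.ne').contDiffWithinAt
  · intro R hR S hS hRS
    have hlt : g R < g S := by
      rw [← hmono.lt_iff_lt (hgmem R hR).1.le (hgmem S hS).1.le, hg R hR, hg S hS]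
      exact pow_lt_pow_left₀ hRS hR.1.le two_ne_zero
    have h := hanti (hgmem R hR) (hgmem S hS) hlt
    rw [← hspeed R hR, ← hspeed S hS] at h
    exact lt_of_pow_lt_pow_left₀ 2 (div_pos (hL.trans (hgmem R hR).1) hR.1).le h
  · simp only [hgR₀]
  · have hlim : Tendsto (fun R : ℝ => L * R⁻¹) (nhdsWithin 0 (Ioi 0)) atTop :=
      tendsto_inv_nhdsGT_zero.const_mul_atTop hL
    refine tendsto_atTop_mono' _ ?_ hlim
    filter_upwards [Ioc_mem_nhdsGT hR₀pos] with R hR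
    rw [← div_eq_mul_inv]
    exact div_le_div_of_nonneg_right (hgmem R hR).1.le hR.1.le
  · intro R hR
    have hx := (hgmem R hR).1
    refine ⟨?_, hzero R _ hR.1 hx (hg R hR)⟩
    have h := (hcon _ hx).2 ((hcon_le _ hx).2 (hgmem R hR).2)
    rw [hg R hR] at h
    rw [div_mul_eq_mul_div, le_div_iff₀ hR.1]
    linarith
  · intro R c hR hc hG
    have hc0 : 0 < c := by
      have : 0 < c * θhl := (mul_pos hq hR).trans_le hc
      exact pos_of_mul_pos_left this h3.le
    have hx0 : 0 < c * R := mul_pos hc0 hR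
    have hDx := exp_sub_one_sub_pos hx0.ne'
    rw [G, sub_eq_zero] at hG
    have hNx : 0 < θig * Real.exp (c * R) - θhl := by
      have : 0 < c ^ 2 * (θig * Real.exp (c * R) - θhl) := hG ▸ mul_pos hq hDx
      exact pos_of_mul_pos_right this (sq_nonneg c)
    have hx : L < c * R := (ignition_excess_pos_iff h1 h3).1 hNx
    have hH : radiusSq q θig θhl (c * R) = R ^ 2 := by
      rw [radiusSq, hG]
      field_simp
    have hle : c * R ≤ b := by
      rw [← hcon_le _ hx, ← hcon _ hx, hH]
      nlinarith
    have hRle : R ≤ R₀ := by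
      have : R ^ 2 ≤ R₀ ^ 2 := by
        rw [← hH, ← hR₀sq]; exact hmono.monotoneOn hx.le hLb.le hle
      exact le_of_sq_le_sq this hR₀pos.le
    refine ⟨hRle, ?_⟩
    simp only [hg_eq R ⟨hR, hRle⟩ _ hx hH]
    rw [mul_div_cancel_right₀ _ hR.ne']
end

section
/- There exists a function ψ : [0, +∞) → ℝ with the following properties: (a) ψ is C^∞ and strictly increasing, with ψ(0) > 0, mapping [0, +∞) diffeomorphically onto [ψ(0), +∞); (b) for every R ≥ 0 and c > 0, one has c = ψ(R) if and only if there exists a twice continuously differentiable function θ : [R, +∞) → ℝ with θ'' − c·θ' + F(θ) = 0 on [R, +∞), θ(R) = θ_hl, θ'(R) = c·θ_hl − q·R, θ'(x) > 0 for all x ≥ R, and θ(x) → θ₊ as x → +∞; (c) for every R ≥ 0, q·R/θ_hl < ψ(R) < c₊(R) where c₊(R) = (1/θ_hl)·(√(2·∫_{θ_hl}^{θ₊} F(u) du) + q·R); (d) ψ(R) − q·R/θ_hl → 0 as R → +∞, i.e. the line c = qR/θ_hl is an asymptote of the graph of ψ. -/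
open Set Filter

open scoped BoundedContinuousFunction

theorem norm_integral_pow_mul_le (n : ℕ) (f : ℝ →ᵇ ℝ) (s : ℝ) :
    ‖∫ t in (0 : ℝ)..1, t ^ n * f (t * s)‖ ≤ ‖f‖ / (n + 1) := by
  have h := intervalIntegral.norm_integral_le_of_norm_le (μ := MeasureTheory.volume)
    (f := fun t => t ^ n * f (t * s)) (g := fun t => t ^ n * ‖f‖) (zero_le_one' ℝ)
    (Eventually.of_forall fun t ht => by
      rw [norm_mul, Real.norm_of_nonneg (pow_nonneg ht.1.le n)]
      exact mul_le_mul_of_nonneg_left (f.norm_coe_le_norm _) (pow_nonneg ht.1.le n))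
    (Continuous.intervalIntegrable (by fun_prop) _ _)
  refine h.trans (le_of_eq ?_)
  rw [intervalIntegral.integral_mul_const, integral_pow]
  simp
  ring

/-- The operator `f ↦ ∫₀¹ tⁿ f(t s) dt` on bounded continuous functions. -/
noncomputable def powerMean (n : ℕ) : (ℝ →ᵇ ℝ) →L[ℝ] (ℝ →ᵇ ℝ) :=
  LinearMap.mkContinuous
    { toFun := fun f => BoundedContinuousFunction.ofNormedAddCommGroup
        (fun s => ∫ t in (0 : ℝ)..1, t ^ n * f (t * s))
        (intervalIntegral.continuous_parametric_intervalIntegral_of_continuous'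
          (by simp only [Function.uncurry_def]; fun_prop) 0 1)
        (‖f‖ / (n + 1)) (norm_integral_pow_mul_le n f)
      map_add' := fun f g => by
        ext s
        simp only [BoundedContinuousFunction.coe_ofNormedAddCommGroup,
          BoundedContinuousFunction.add_apply, mul_add]
        exact intervalIntegral.integral_add (Continuous.intervalIntegrable (by fun_prop) _ _)
          (Continuous.intervalIntegrable (by fun_prop) _ _)
      map_smul' := fun r f => by
        ext s
        simp only [BoundedContinuousFunction.coe_ofNormedAddCommGroup,
          BoundedContinuousFunction.smul_apply, smul_eq_mul, RingHom.id_apply]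
        rw [← intervalIntegral.integral_const_mul]
        congr 1
        ext t
        ring }
    (1 / (n + 1)) fun f => by
      rw [BoundedContinuousFunction.norm_le (by positivity)]
      intro s
      exact (norm_integral_pow_mul_le n f s).trans (le_of_eq (by ring))

theorem powerMean_apply (n : ℕ) (f : ℝ →ᵇ ℝ) (s : ℝ) :
    powerMean n f s = ∫ t in (0 : ℝ)..1, t ^ n * f (t * s) := rfl

theorem norm_powerMean_le (n : ℕ) : ‖powerMean n‖ ≤ 1 / (n + 1) :=
  LinearMap.mkContinuous_norm_le _ (by positivity) _

theorem powerMean_mono (n : ℕ) {f g : ℝ →ᵇ ℝ} (h : ∀ s, f s ≤ g s) (s : ℝ) :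
    powerMean n f s ≤ powerMean n g s := by
  simp only [powerMean_apply]
  refine intervalIntegral.integral_mono_on zero_le_one
    (Continuous.intervalIntegrable (by fun_prop) _ _)
    (Continuous.intervalIntegrable (by fun_prop) _ _) fun t ht => ?_
  exact mul_le_mul_of_nonneg_left (h _) (pow_nonneg ht.1 n)

theorem powerMean_const (n : ℕ) (r s : ℝ) :
    powerMean n (BoundedContinuousFunction.const ℝ r) s = r / (n + 1) := by
  simp only [powerMean_apply, BoundedContinuousFunction.const_apply]
  rw [intervalIntegral.integral_mul_const, integral_pow]
  simp
  ring

theorem pow_mul_powerMean (n : ℕ) (f : ℝ →ᵇ ℝ) (s : ℝ) :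
    s ^ (n + 1) * powerMean n f s = ∫ t in (0 : ℝ)..s, t ^ n * f t := by
  have h := intervalIntegral.smul_integral_comp_mul_right (a := 0) (b := 1)
    (fun t => t ^ n * f t) s
  simp only [zero_mul, one_mul, smul_eq_mul] at h
  rw [← h, powerMean_apply, pow_succ', mul_assoc, ← intervalIntegral.integral_const_mul]
  congr 2
  ext t
  rw [mul_pow]
  ring

theorem hasDerivAt_mul_powerMean (n : ℕ) (f : ℝ →ᵇ ℝ) {s : ℝ} (hs : 0 < s) :
    HasDerivAt (fun s => s * powerMean n f s) (f s - n * powerMean n f s) s := by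
  have h : HasDerivAt (fun s : ℝ => ∫ t in (0 : ℝ)..s, t ^ n * f t) (s ^ n * f s) s :=
    intervalIntegral.integral_hasDerivAt_right
      (Continuous.intervalIntegrable (by fun_prop) _ _)
      (Continuous.stronglyMeasurableAtFilter (by fun_prop) _ _)
      (by fun_prop)
  have h2 := h.div (hasDerivAt_pow n s) (pow_ne_zero n hs.ne')
  refine (h2.congr_of_eventuallyEq ?_).congr_deriv ?_
  · filter_upwards [lt_mem_nhds hs] with r hr
    rw [Pi.div_apply, ← pow_mul_powerMean, pow_succ]
    field_simp
  · rw [← pow_mul_powerMean]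
    rcases n with _ | n
    · simp
    · simp only [Nat.add_sub_cancel]
      field_simp
      ring

/-- The right-hand side `G / p(Z) - c + n p(Z)` of the fixed point equation, where `p` is the
projection to `[m, M]`. -/
noncomputable def clampedRhs (G : ℝ →ᵇ ℝ) (c : ℝ) (n : ℕ) {m M : ℝ} (hm : 0 < m) (h : m ≤ M)
    (Z : ℝ →ᵇ ℝ) : ℝ →ᵇ ℝ :=
  BoundedContinuousFunction.ofNormedAddCommGroup
    (fun s => G s / projIcc m M h (Z s) - c + n * projIcc m M h (Z s))
    (by
      have h1 : Continuous fun s => (projIcc m M h (Z s) : ℝ) :=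
        continuous_subtype_val.comp (continuous_projIcc.comp Z.continuous)
      exact ((G.continuous.div h1 fun s => (hm.trans_le (projIcc m M h (Z s)).2.1).ne').sub
        continuous_const).add (continuous_const.mul h1))
    (‖G‖ / m + |c| + n * M) fun s => by
      obtain ⟨h1, h2⟩ := (projIcc m M h (Z s)).2
      have h3 := hm.trans_le h1
      refine (norm_add_le _ _).trans (add_le_add ((norm_sub_le _ _).trans (add_le_add ?_ le_rfl)) ?_)
      · rw [norm_div, Real.norm_of_nonneg h3.le]
        exact div_le_div₀ (norm_nonneg _) (G.norm_coe_le_norm s) hm h1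
      · rw [Real.norm_of_nonneg (by positivity)]
        gcongr

theorem exists_fixedPoint_clamped {G : ℝ →ᵇ ℝ} {b : ℝ} (hGpos : ∀ s, 0 < G s) (hb : ∀ s, G s ≤ b)
    (c : ℝ) {n : ℕ} {m M : ℝ} (hm : 0 < m) (h : m ≤ M) (hn : b / m ^ 2 ≤ n) :
    ∃ Z : ℝ →ᵇ ℝ, powerMean n (clampedRhs G c n hm h Z) = Z := by
  have hlip : LipschitzWith n (clampedRhs G c n hm h) := by
    refine LipschitzWith.of_dist_le_mul fun Z Y => ?_
    rw [BoundedContinuousFunction.dist_le (by positivity)]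
    intro s
    have hp : |(projIcc m M h (Z s) : ℝ) - projIcc m M h (Y s)| ≤ dist Z Y :=
      (abs_projIcc_sub_projIcc h).trans
        (by simpa only [Real.dist_eq] using
          BoundedContinuousFunction.dist_coe_le_dist (f := Z) (g := Y) s)
    change |(G s / projIcc m M h (Z s) - c + n * projIcc m M h (Z s)) -
      (G s / projIcc m M h (Y s) - c + n * projIcc m M h (Y s))| ≤ _
    have hz := (projIcc m M h (Z s)).2.1
    have hy := (projIcc m M h (Y s)).2.1
    generalize (projIcc m M h (Z s) : ℝ) = z at *
    generalize (projIcc m M h (Y s) : ℝ) = y at *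
    have hz0 := hm.trans_le hz
    have hy0 := hm.trans_le hy
    have e : G s / z - c + n * z - (G s / y - c + n * y) = (n - G s / (z * y)) * (z - y) := by
      field_simp
      ring
    have h1 : G s / (z * y) ≤ n := by
      refine le_trans ?_ hn
      have := hGpos s
      apply div_le_div₀ ((hGpos s).le.trans (hb s)) (hb s) (by positivity)
      nlinarith
    have h2 : 0 < G s / (z * y) := div_pos (hGpos s) (by positivity)
    rw [e, abs_mul, abs_of_nonneg (by linarith)]
    exact mul_le_mul (by simpa using h2.le) hp (abs_nonneg _) (by positivity)
  have hcontr : ContractingWith (1 / (n + 1) * n) fun Z => powerMean n (clampedRhs G c n hm h Z) := by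
    constructor
    · rw [one_div_mul_eq_div, div_lt_one (by positivity)]
      exact lt_add_one _
    · have h1 : LipschitzWith (1 / (n + 1)) (powerMean n) :=
        (powerMean n).lipschitz.weaken (by
          rw [← NNReal.coe_le_coe]; simpa using norm_powerMean_le n)
      exact h1.comp hlip
  exact ⟨_, hcontr.fixedPoint_isFixedPt⟩

theorem exists_fixedPoint {G : ℝ →ᵇ ℝ} {a b : ℝ} (ha : 0 < a) (hGa : ∀ s, a ≤ G s)
    (hGb : ∀ s, G s ≤ b) (c : ℝ) {n : ℕ} {m M : ℝ} (hm : 0 < m) (h : m ≤ M)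
    (hn : b / m ^ 2 ≤ n) (hma : m ^ 2 + c * m ≤ a) (hMb : b ≤ M ^ 2 + c * M) :
    ∃ Z f : ℝ →ᵇ ℝ, (∀ s, m ≤ Z s ∧ Z s ≤ M) ∧ (∀ s, f s = G s / Z s - c + n * Z s) ∧
      powerMean n f = Z := by
  obtain ⟨Z, hZ⟩ := exists_fixedPoint_clamped (fun s => ha.trans_le (hGa s)) hGb c hm h hn
  have hbn : b ≤ n * m ^ 2 := by rwa [div_le_iff₀ (by positivity)] at hn
  have hM := hm.trans_le h
  have key : ∀ s, (n + 1) * m ≤ clampedRhs G c n hm h Z s ∧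
      clampedRhs G c n hm h Z s ≤ (n + 1) * M := by
    intro s
    change _ ≤ G s / projIcc m M h (Z s) - c + n * projIcc m M h (Z s) ∧
      G s / projIcc m M h (Z s) - c + n * projIcc m M h (Z s) ≤ _
    obtain ⟨h1, h2⟩ := (projIcc m M h (Z s)).2
    generalize (projIcc m M h (Z s) : ℝ) = z at *
    have hz := hm.trans_le h1
    have hn0 : (0 : ℝ) ≤ n := n.cast_nonneg
    have hG1 := hGa s
    have hG2 := hGb s
    have e : G s / z * z = G s := by field_simp
    constructor
    · have : m + c ≤ a / m := by rw [le_div_iff₀ hm]; linarith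
      have h3 : a / m + n * m ≤ a / z + n * z := by
        have : a / z + n * z - (a / m + n * m) = (n * (m * z) - a) * (z - m) / (m * z) := by
          field_simp
          ring
        have h4 : 0 ≤ (n * (m * z) - a) * (z - m) / (m * z) := by
          refine div_nonneg (mul_nonneg ?_ (by linarith)) (by positivity)
          nlinarith [mul_le_mul_of_nonneg_left (mul_le_mul_of_nonneg_left h1 hm.le) hn0]
        linarith
      have h5 : a / z ≤ G s / z := by gcongr
      linarith
    · have : b / M ≤ M + c := by rw [div_le_iff₀ hM]; linarith
      have h3 : b / z + n * z ≤ b / M + n * M := by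
        have : b / M + n * M - (b / z + n * z) = (n * (M * z) - b) * (M - z) / (M * z) := by
          field_simp
          ring
        have h4 : 0 ≤ (n * (M * z) - b) * (M - z) / (M * z) := by
          refine div_nonneg (mul_nonneg ?_ (by linarith)) (by positivity)
          have : m * m ≤ M * z := mul_le_mul h h1 hm.le hM.le
          nlinarith [mul_le_mul_of_nonneg_left this hn0]
        linarith
      have h5 : G s / z ≤ b / z := by gcongr
      linarith
  have hZb : ∀ s, m ≤ Z s ∧ Z s ≤ M := by
    intro s
    have hn1 : (0 : ℝ) < n + 1 := by positivity
    have h1 := powerMean_mono n (f := .const ℝ ((n + 1) * m)) (fun s => (key s).1) s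
    have h2 := powerMean_mono n (g := .const ℝ ((n + 1) * M)) (fun s => (key s).2) s
    rw [powerMean_const, hZ] at h1 h2
    rw [mul_div_cancel_left₀ _ hn1.ne'] at h1 h2
    exact ⟨h1, h2⟩
  refine ⟨Z, _, hZb, fun s => ?_, hZ⟩
  change G s / projIcc m M h (Z s) - c + n * projIcc m M h (Z s) = _
  rw [projIcc_of_mem h (hZb s)]

theorem exists_smooth_fixedPoint_near {G : ℝ →ᵇ ℝ} {b : ℝ} (hGpos : ∀ s, 0 < G s)
    (hGb : ∀ s, G s ≤ b) (c₀ : ℝ) {n : ℕ} {m : ℝ} (hm : 0 < m) (hn : b / m ^ 2 ≤ n)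
    {Z f : ℝ →ᵇ ℝ} (hmZ : ∀ s, m ≤ Z s) (hf : ∀ s, f s = G s / Z s - c₀ + n * Z s)
    (hZ : powerMean n f = Z) :
    ∃ Y : ℝ → ℝ →ᵇ ℝ, ContDiffAt ℝ (⊤ : ℕ∞) Y c₀ ∧ Y c₀ = Z ∧
      ∀ᶠ c in nhds c₀, (∀ s, 0 < Y c s) ∧ ∃ g : ℝ →ᵇ ℝ,
        (∀ s, g s = G s / Y c s - c + n * Y c s) ∧ powerMean n g = Y c := by
  have hZpos : ∀ s, 0 < Z s := fun s => hm.trans_le (hmZ s)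
  let V : ℝ →ᵇ ℝ := BoundedContinuousFunction.ofNormedAddCommGroup (fun s => (Z s)⁻¹)
    (Z.continuous.inv₀ fun s => (hZpos s).ne') m⁻¹ fun s => by
      rw [norm_inv, Real.norm_of_nonneg (hZpos s).le]
      exact inv_anti₀ hm (hmZ s)
  have hV : ∀ s, V s = (Z s)⁻¹ := fun s => rfl
  have hZV : Z * V = 1 := by
    ext s
    simp [hV, (hZpos s).ne']
  let u : (ℝ →ᵇ ℝ)ˣ := ⟨Z, V, hZV, by rw [mul_comm, hZV]⟩
  let Φ : ℝ × (ℝ →ᵇ ℝ) → (ℝ →ᵇ ℝ) := fun p =>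
    p.2 - powerMean n (G * Ring.inverse p.2 - p.1 • 1 + (n : ℝ) • p.2)
  have hinv_apply : ∀ Y : ℝ →ᵇ ℝ, IsUnit Y → ∀ s, Ring.inverse Y s = (Y s)⁻¹ := by
    intro Y hY s
    have h := congrArg (fun g : ℝ →ᵇ ℝ => g s) (Ring.mul_inverse_cancel Y hY)
    exact eq_inv_of_mul_eq_one_right h
  have hΦ0 : Φ (c₀, Z) = 0 := by
    have : G * Ring.inverse Z - c₀ • 1 + (n : ℝ) • Z = f := by
      ext s
      have := hinv_apply Z u.isUnit s
      simp [this, hf, div_eq_mul_inv]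
    simp only [Φ, this, hZ, sub_self]
  have hΦ : ContDiffAt ℝ (⊤ : ℕ∞) Φ (c₀, Z) := by
    have h1 : ContDiffAt ℝ (⊤ : ℕ∞) (fun p : ℝ × (ℝ →ᵇ ℝ) => Ring.inverse p.2) (c₀, Z) :=
      ContDiffAt.comp (c₀, Z) (g := Ring.inverse) (contDiffAt_ringInverse ℝ u) contDiffAt_snd
    exact contDiffAt_snd.sub ((powerMean n).contDiff.contDiffAt.comp _
      (((contDiffAt_const.mul h1).sub (contDiffAt_fst.smul contDiffAt_const)).add
        (contDiffAt_const.fun_smul contDiffAt_snd)))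
  let K : (ℝ →ᵇ ℝ) →L[ℝ] (ℝ →ᵇ ℝ) :=
    powerMean n ∘L ContinuousLinearMap.mul ℝ (ℝ →ᵇ ℝ) ((n : ℝ) • 1 - G * (V * V))
  have hK : ‖K‖ < 1 := by
    have h1 : ‖(n : ℝ) • 1 - G * (V * V)‖ ≤ n := by
      rw [BoundedContinuousFunction.norm_le (by positivity)]
      intro s
      have e : ((n : ℝ) • 1 - G * (V * V) : ℝ →ᵇ ℝ) s = n - G s / (Z s * Z s) := by
        simp [hV, div_eq_mul_inv]
      have h2 : 0 < G s / (Z s * Z s) := div_pos (hGpos s) (mul_pos (hZpos s) (hZpos s))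
      have h3 : G s / (Z s * Z s) ≤ n := by
        refine le_trans ?_ hn
        have := hmZ s
        exact div_le_div₀ ((hGpos s).le.trans (hGb s)) (hGb s) (by positivity) (by nlinarith)
      rw [e, Real.norm_of_nonneg (by linarith)]
      linarith
    calc ‖K‖ ≤ ‖powerMean n‖ * ‖ContinuousLinearMap.mul ℝ (ℝ →ᵇ ℝ) ((n : ℝ) • 1 - G * (V * V))‖ :=
          ContinuousLinearMap.opNorm_comp_le _ _
      _ ≤ 1 / (n + 1) * n := mul_le_mul (norm_powerMean_le n)
          ((ContinuousLinearMap.opNorm_mul_apply_le _ _ _).trans h1) (norm_nonneg _) (by positivity)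
      _ < 1 := by
          rw [one_div_mul_eq_div, div_lt_one (by positivity)]
          exact lt_add_one _
  have hder : fderiv ℝ Φ (c₀, Z) ∘L .inr ℝ ℝ (ℝ →ᵇ ℝ) = 1 - K := by
    have h1 : HasFDerivAt (fun Y => Φ (c₀, Y))
        (fderiv ℝ Φ (c₀, Z) ∘L .inr ℝ ℝ (ℝ →ᵇ ℝ)) Z :=
      HasFDerivAt.comp Z (g := Φ) (hΦ.differentiableAt (by simp)).hasFDerivAt
        (hasFDerivAt_prodMk_right c₀ Z)
    have h2 : HasFDerivAt (fun Y => G * Ring.inverse Y - c₀ • 1 + (n : ℝ) • Y)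
        (ContinuousLinearMap.mul ℝ (ℝ →ᵇ ℝ) G ∘L
          (-ContinuousLinearMap.mulLeftRight ℝ (ℝ →ᵇ ℝ) V V) +
            (n : ℝ) • ContinuousLinearMap.id ℝ (ℝ →ᵇ ℝ)) Z :=
      (((ContinuousLinearMap.mul ℝ (ℝ →ᵇ ℝ) G).hasFDerivAt.comp Z
          (hasFDerivAt_ringInverse (𝕜 := ℝ) u)).sub_const (c₀ • 1)).fun_add
        ((hasFDerivAt_id Z).fun_const_smul (n : ℝ))
    have h3 : HasFDerivAt (fun Y => Φ (c₀, Y)) (ContinuousLinearMap.id ℝ (ℝ →ᵇ ℝ) - powerMean n ∘L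
        (ContinuousLinearMap.mul ℝ (ℝ →ᵇ ℝ) G ∘L
          (-ContinuousLinearMap.mulLeftRight ℝ (ℝ →ᵇ ℝ) V V) +
            (n : ℝ) • ContinuousLinearMap.id ℝ (ℝ →ᵇ ℝ))) Z :=
      (hasFDerivAt_id Z).fun_sub ((powerMean n).hasFDerivAt.comp Z h2)
    rw [h1.unique h3]
    ext1 W
    simp only [K, sub_apply, ContinuousLinearMap.comp_apply,
      ContinuousLinearMap.id_apply, one_apply_eq_self]
    congr 2
    ext s
    simp
    ring
  have hinv : (fderiv ℝ Φ (c₀, Z) ∘L .inr ℝ ℝ (ℝ →ᵇ ℝ)).IsInvertible := by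
    rw [hder]
    obtain ⟨w, hw⟩ := isUnit_one_sub_of_norm_lt_one
      (R := (ℝ →ᵇ ℝ) →L[ℝ] (ℝ →ᵇ ℝ)) hK
    exact ⟨ContinuousLinearEquiv.unitsEquiv ℝ (ℝ →ᵇ ℝ) w, hw⟩
  have hne : ((⊤ : ℕ∞) : WithTop ℕ∞) ≠ 0 := by simp
  have hY0 : hΦ.implicitFunction hne hinv c₀ = Z := hΦ.implicitFunction_apply_self hne hinv
  have hYs : ContDiffAt ℝ (⊤ : ℕ∞) (hΦ.implicitFunction hne hinv) c₀ :=
    hΦ.contDiffAt_implicitFunction hne hinv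
  refine ⟨hΦ.implicitFunction hne hinv, hYs, hY0, ?_⟩
  have hcont := hYs.continuousAt
  have hball := hcont.eventually_mem (by rw [hY0]; exact Metric.ball_mem_nhds Z hm)
  have hunit := hcont.eventually_mem (by rw [hY0]; exact Units.nhds u)
  filter_upwards [hball, hunit, hΦ.eventually_apply_implicitFunction hne hinv] with c hc1 hc2 hc3
  generalize hΦ.implicitFunction hne hinv c = Y at *
  refine ⟨fun s => ?_, G * Ring.inverse Y - c • 1 + (n : ℝ) • Y, fun s => ?_, ?_⟩
  · have h1 := (BoundedContinuousFunction.dist_coe_le_dist (f := Y) (g := Z) s).trans_lt hc1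
    rw [Real.dist_eq, abs_lt] at h1
    linarith [hmZ s]
  · simp [hinv_apply Y hc2, div_eq_mul_inv]
  · rw [hΦ0, sub_eq_zero] at hc3
    exact hc3.symm

theorem exists_lt_left_of_hasDerivAt_neg {E : ℝ → ℝ} {e s : ℝ} (h : HasDerivAt E e s) (he : e < 0)
    (hs : 0 < s) : ∃ r ∈ Ioo 0 s, E s < E r := by
  have h1 := (hasDerivAt_iff_tendsto_slope.1 h).mono_left (nhdsLT_le_nhdsNE s)
  obtain ⟨r, hr1, hr2⟩ := ((h1.eventually_lt_const he).and (Ioo_mem_nhdsLT hs)).exists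
  refine ⟨r, hr2, ?_⟩
  rw [slope_def_field, div_neg_iff] at hr1
  rcases hr1 with hr1 | hr1 <;> linarith [hr1.1, hr1.2, hr2.2]

/-- Comparison principle for positive continuous solutions of `(s Z)' = G / Z - c`. -/
theorem profile_comparison {G Z₁ Z₂ : ℝ → ℝ} {c₁ c₂ : ℝ} (hG : ∀ s, 0 < G s)
    (hZ₁ : Continuous Z₁) (hZ₂ : Continuous Z₂) (hpos₁ : ∀ s, 0 < Z₁ s)
    (hder₁ : ∀ s, 0 < s → HasDerivAt (fun s => s * Z₁ s) (G s / Z₁ s - c₁) s)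
    (hder₂ : ∀ s, 0 < s → HasDerivAt (fun s => s * Z₂ s) (G s / Z₂ s - c₂) s)
    (hc : c₁ ≤ c₂) {s : ℝ} (hs : 0 < s) (hle : Z₁ s ≤ Z₂ s) : c₁ = c₂ ∧ Z₁ s = Z₂ s := by
  by_contra hne
  have hlt : c₁ < c₂ ∨ Z₁ s < Z₂ s := by
    by_contra! h
    exact hne ⟨hc.antisymm h.1, hle.antisymm h.2⟩
  set E : ℝ → ℝ := fun s => s * Z₂ s - s * Z₁ s with hE
  have hEs : 0 ≤ E s := by
    have : 0 ≤ s * (Z₂ s - Z₁ s) := mul_nonneg hs.le (by linarith)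
    simp only [hE]
    linarith
  obtain ⟨r, hr, hmax⟩ := isCompact_Icc.exists_isMaxOn (nonempty_Icc.2 hs.le)
    (f := E) (s := Icc 0 s) (by fun_prop)
  have key : ∀ r, 0 < r → (c₁ < c₂ ∧ 0 ≤ E r ∨ 0 < E r) → ∃ x ∈ Ioo 0 r, E r < E x := by
    intro r hr h
    refine exists_lt_left_of_hasDerivAt_neg ((hder₂ r hr).fun_sub (hder₁ r hr)) ?_ hr
    have hEr : E r = r * (Z₂ r - Z₁ r) := by simp only [hE]; ring
    rw [hEr] at h
    have h1 := hpos₁ r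
    rcases h with ⟨h, h'⟩ | h
    · have h2 : Z₁ r ≤ Z₂ r := by linarith [nonneg_of_mul_nonneg_right h' hr]
      have : G r / Z₂ r ≤ G r / Z₁ r := div_le_div_of_nonneg_left (hG r).le h1 h2
      linarith
    · have h2 : Z₁ r < Z₂ r := by linarith [pos_of_mul_pos_right h hr.le]
      have : G r / Z₂ r < G r / Z₁ r := div_lt_div_of_pos_left (hG r) h1 h2
      linarith
  have hmax' : ∀ x ∈ Icc 0 s, E x ≤ E r := hmax
  have hsr := hmax' s ⟨hs.le, le_rfl⟩
  have hE0 : E 0 = 0 := by simp [hE]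
  rcases hr.1.eq_or_lt with h0 | h0
  · have hs0 : E s = 0 := le_antisymm (by rwa [← h0, hE0] at hsr) hEs
    rcases hlt with h | h
    · obtain ⟨x, hx, hx'⟩ := key s hs (Or.inl ⟨h, hEs⟩)
      have := hmax' x ⟨hx.1.le, hx.2.le⟩
      rw [← h0, hE0] at this
      linarith
    · have : 0 < s * (Z₂ s - Z₁ s) := mul_pos hs (by linarith)
      simp only [hE] at hs0
      linarith
  · obtain ⟨x, hx, hx'⟩ := key r h0 (by
      rcases hlt with h | h
      · exact Or.inl ⟨h, hEs.trans hsr⟩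
      · have : 0 < s * (Z₂ s - Z₁ s) := mul_pos hs (by linarith)
        refine Or.inr (lt_of_lt_of_le ?_ hsr)
        simp only [hE]
        linarith)
    exact (hmax' x ⟨hx.1.le, hx.2.le.trans hr.2⟩).not_gt hx'

theorem exists_pos_root_quadratic {a : ℝ} (ha : 0 < a) (c : ℝ) : ∃ m, 0 < m ∧ m ^ 2 + c * m = a := by
  have h1 : Real.sqrt (c ^ 2 + 4 * a) ^ 2 = c ^ 2 + 4 * a := Real.sq_sqrt (by positivity)
  refine ⟨(-c + Real.sqrt (c ^ 2 + 4 * a)) / 2, ?_, by linarith⟩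
  have : c < Real.sqrt (c ^ 2 + 4 * a) := Real.lt_sqrt_of_sq_lt (by linarith)
  linarith

/-- The family of positive solutions of `(s Z)' = G / Z - c` that are regular at `s = 0`, together
with its smooth dependence on `c`. -/
theorem exists_profile (G : ℝ →ᵇ ℝ) {a b : ℝ} (ha : 0 < a) (hGa : ∀ s, a ≤ G s)
    (hGb : ∀ s, G s ≤ b) :
    ∃ Z : ℝ → ℝ → ℝ, (∀ c, Continuous (Z c)) ∧
      (∀ c, ∃ m M, 0 < m ∧ ∀ s, m ≤ Z c s ∧ Z c s ≤ M) ∧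
      (∀ c s, 0 ≤ c → c * Z c s ≤ b) ∧
      (∀ c s, 0 < s → HasDerivAt (fun s => s * Z c s) (G s / Z c s - c) s) ∧
      (∀ s, 0 < s → ContDiff ℝ (⊤ : ℕ∞) fun c => Z c s) := by
  have hGpos : ∀ s, 0 < G s := fun s => ha.trans_le (hGa s)
  have hex : ∀ c, ∃ (n : ℕ) (m M : ℝ) (Z f : ℝ →ᵇ ℝ), 0 < m ∧ b / m ^ 2 ≤ n ∧ M ^ 2 + c * M = b ∧
      (∀ s, m ≤ Z s ∧ Z s ≤ M) ∧ (∀ s, f s = G s / Z s - c + n * Z s) ∧ powerMean n f = Z := by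
    intro c
    obtain ⟨m, hm, hma⟩ := exists_pos_root_quadratic ha c
    obtain ⟨M, hM, hMb⟩ := exists_pos_root_quadratic (ha.trans_le ((hGa 0).trans (hGb 0))) c
    obtain ⟨n, hn⟩ := exists_nat_ge (b / m ^ 2)
    have hmM : m ≤ M := by
      by_contra! h
      have : a ≤ b := (hGa 0).trans (hGb 0)
      have h2 : 0 < M + c := by
        have : 0 < M * (M + c) := by nlinarith
        exact pos_of_mul_pos_right this hM.le
      nlinarith [mul_pos (sub_pos.2 h) h2]
    obtain ⟨Z, f, h1, h2, h3⟩ := exists_fixedPoint ha hGa hGb c hm hmM hn hma.le hMb.ge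
    exact ⟨n, m, M, Z, f, hm, hn, hMb, h1, h2, h3⟩
  choose n m M Z f hm hn hM hZ hf hTf using hex
  have hder : ∀ (c : ℝ) (n : ℕ) (Z f : ℝ →ᵇ ℝ), (∀ s, f s = G s / Z s - c + n * Z s) →
      powerMean n f = Z → ∀ s, 0 < s → HasDerivAt (fun s => s * Z s) (G s / Z s - c) s := by
    intro c n Z f h1 h2 s hs
    have h3 := hasDerivAt_mul_powerMean n f hs
    rw [h2, h1] at h3
    exact h3.congr_deriv (by ring)
  refine ⟨fun c => Z c, fun c => (Z c).continuous, fun c => ⟨m c, M c, hm c, hZ c⟩, fun c s hc => ?_,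
    fun c => hder c _ _ _ (hf c) (hTf c), fun s hs => contDiff_iff_contDiffAt.2 fun c₀ => ?_⟩
  · have := mul_le_mul_of_nonneg_left (hZ c s).2 hc
    nlinarith [sq_nonneg (M c), hM c]
  · obtain ⟨Y, hY, -, hev⟩ := exists_smooth_fixedPoint_near hGpos hGb c₀ (hm c₀) (hn c₀)
      (fun s => (hZ c₀ s).1) (hf c₀) (hTf c₀)
    have heval := (BoundedContinuousFunction.evalCLM ℝ s).contDiff.contDiffAt.comp c₀ hY
    refine heval.congr_of_eventuallyEq ?_
    filter_upwards [hev] with c ⟨hpos, g, hg, hTg⟩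
    have hZpos : ∀ s, 0 < Z c s := fun s => (hm c).trans_le (hZ c s).1
    rcases le_total (Z c s) (Y c s) with h | h
    · exact (profile_comparison hGpos (Z c).continuous (Y c).continuous hZpos
        (hder c _ _ _ (hf c) (hTf c)) (hder c _ _ _ hg hTg) le_rfl hs h).2
    · exact (profile_comparison hGpos (Y c).continuous (Z c).continuous hpos
        (hder c _ _ _ hg hTg) (hder c _ _ _ (hf c) (hTf c)) le_rfl hs h).2.symm

theorem exists_inverse_of_le_deriv {f f' : ℝ → ℝ} {m : ℝ} (hm : 0 < m)
    (hf : ∀ x, HasDerivAt f (f' x) x) (hf' : ∀ x, m ≤ f' x) :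
    ∃ g : ℝ → ℝ, (∀ x, g (f x) = x) ∧ (∀ y, f (g y) = y) ∧ StrictMono g ∧
      (∀ y, HasDerivAt g (f' (g y))⁻¹ y) ∧
      ∀ n : WithTop ℕ∞, ContDiff ℝ n f → ContDiff ℝ n g := by
  have hmono : StrictMono f := strictMono_of_deriv_pos fun x => by
    rw [(hf x).deriv]
    exact hm.trans_le (hf' x)
  have hcont : Continuous f := continuous_iff_continuousAt.2 fun x => (hf x).continuousAt
  have hlin : Monotone fun x => f x - m * x := by
    refine monotone_of_deriv_nonneg
      (fun x => ((hf x).fun_sub ((hasDerivAt_id' x).const_mul m)).differentiableAt) fun x => ?_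
    rw [((hf x).fun_sub ((hasDerivAt_id' x).const_mul m)).deriv]
    linarith [hf' x]
  have htop : Tendsto f atTop atTop := by
    refine tendsto_atTop_mono' atTop ?_ (tendsto_atTop_add_const_left atTop (f 0)
      (tendsto_id.const_mul_atTop hm))
    filter_upwards [eventually_ge_atTop 0] with x hx
    have := hlin hx
    simp only [id] at *
    linarith
  have hbot : Tendsto f atBot atBot := by
    refine tendsto_atBot_mono' atBot ?_ (tendsto_atBot_add_const_left atBot (f 0)
      (tendsto_id.const_mul_atBot hm))
    filter_upwards [eventually_le_atBot 0] with x hx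
    have := hlin hx
    simp only [id] at *
    linarith
  let e : ℝ ≃o ℝ := hmono.orderIsoOfSurjective f (hcont.surjective htop hbot)
  have he : ∀ x, e x = f x := fun x => rfl
  have hder : ∀ y, HasDerivAt e.symm (f' (e.symm y))⁻¹ y := fun y =>
    (hf (e.symm y)).of_local_left_inverse e.symm.continuous.continuousAt
      (hm.trans_le (hf' _)).ne' (Eventually.of_forall fun z => e.apply_symm_apply z)
  refine ⟨e.symm, e.symm_apply_apply, e.apply_symm_apply, e.symm.strictMono, hder, fun n hn => ?_⟩
  exact e.toHomeomorph.contDiff_symm_deriv (fun x => (hm.trans_le (hf' x)).ne') hf hn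

theorem exists_decaying_orbit {Z : ℝ → ℝ} (hZ : Continuous Z) {m M L : ℝ} (hm : 0 < m)
    (hmM : ∀ s, m ≤ Z s ∧ Z s ≤ M) (hL : 0 < L) (R : ℝ) :
    ∃ s : ℝ → ℝ, s R = L ∧ (∀ x, 0 < s x) ∧ (∀ x, HasDerivAt s (-(s x * Z (s x))) x) ∧
      Tendsto s atTop (nhds 0) := by
  have hpos : ∀ s, 0 < Z s := fun s => hm.trans_le (hmM s).1
  have hM : 0 < M := (hpos 0).trans_le (hmM 0).2
  have hc : Continuous fun t => (Z (L * Real.exp (-t)))⁻¹ :=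
    Continuous.inv₀ (by fun_prop) fun t => (hpos _).ne'
  obtain ⟨g, hgf, hfg, -, hg, -⟩ := exists_inverse_of_le_deriv
    (f := fun τ => R + ∫ t in (0 : ℝ)..τ, (Z (L * Real.exp (-t)))⁻¹) (inv_pos.2 hM)
    (fun x => (hc.integral_hasStrictDerivAt 0 x).hasDerivAt.const_add R)
    (fun x => inv_anti₀ (hpos _) (hmM _).2)
  simp only [inv_inv] at hg
  have hgR : g R = 0 := by simpa using hgf 0
  have hgtop : Tendsto g atTop atTop := by
    have hlin : Monotone fun x => g x - m * x := by
      refine monotone_of_deriv_nonneg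
        (fun x => ((hg x).fun_sub ((hasDerivAt_id' x).const_mul m)).differentiableAt) fun x => ?_
      rw [((hg x).fun_sub ((hasDerivAt_id' x).const_mul m)).deriv]
      linarith [(hmM (L * Real.exp (-g x))).1]
    refine tendsto_atTop_mono' atTop ?_ (tendsto_atTop_add_const_left atTop (g 0)
      (tendsto_id.const_mul_atTop hm))
    filter_upwards [eventually_ge_atTop 0] with x hx
    have := hlin hx
    simp only [id] at *
    linarith
  refine ⟨fun x => L * Real.exp (-g x), by simp [hgR], fun x => by positivity, fun x => ?_, ?_⟩
  · exact ((hg x).fun_neg.exp.const_mul L).congr_deriv (by ring)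
  · have := (Real.tendsto_exp_neg_atTop_nhds_zero.comp hgtop).const_mul L
    simpa using this

/-- A `C²` solution on `[R, ∞)` of `θ'' - c θ' + F(θ) = 0` increasing from `θhl` to `θp`. -/
def IsMonotoneConnection (F : ℝ → ℝ) (θhl θp R c : ℝ) (θ : ℝ → ℝ) : Prop :=
  ContDiffOn ℝ 2 θ (Ici R) ∧
    (∀ x ∈ Ici R, derivWithin (derivWithin θ (Ici R)) (Ici R) x
      - c * derivWithin θ (Ici R) x + F (θ x) = 0) ∧
    θ R = θhl ∧ (∀ x ∈ Ici R, 0 < derivWithin θ (Ici R) x) ∧ Tendsto θ atTop (nhds θp)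

theorem exists_isMonotoneConnection {F G Z : ℝ → ℝ} {θhl θp c m M : ℝ} (h1 : θhl < θp)
    (hFG : ∀ s ∈ Icc 0 (θp - θhl), F (θp - s) = s * G s) (hG : Continuous G) (hZ : Continuous Z)
    (hm : 0 < m) (hmM : ∀ s, m ≤ Z s ∧ Z s ≤ M)
    (hder : ∀ s, 0 < s → HasDerivAt (fun s => s * Z s) (G s / Z s - c) s) (R : ℝ) :
    ∃ θ, IsMonotoneConnection F θhl θp R c θ ∧
      derivWithin θ (Ici R) R = (θp - θhl) * Z (θp - θhl) := by
  obtain ⟨s, hsR, hspos, hs, hs0⟩ := exists_decaying_orbit hZ hm hmM (sub_pos.2 h1) R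
  have hpos : ∀ s, 0 < Z s := fun s => hm.trans_le (hmM s).1
  have hscont : Continuous s := continuous_iff_continuousAt.2 fun x => (hs x).continuousAt
  have hθ : ∀ x, HasDerivAt (fun x => θp - s x) (s x * Z (s x)) x := fun x => by
    simpa using (hs x).const_sub θp
  have hθ2 : ∀ x, HasDerivAt (fun x => s x * Z (s x)) (c * (s x * Z (s x)) - s x * G (s x)) x := by
    intro x
    refine ((hder (s x) (hspos x)).comp x (hs x)).congr_deriv ?_
    have := (hpos (s x)).ne'
    field_simp
    ring
  have hw : ∀ x ∈ Ici R, derivWithin (fun x => θp - s x) (Ici R) x = s x * Z (s x) := fun x hx =>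
    (hθ x).hasDerivWithinAt.derivWithin (uniqueDiffOn_Ici R x hx)
  have hanti : Antitone s := antitone_of_deriv_nonpos (fun x => (hs x).differentiableAt) fun x => by
    rw [(hs x).deriv]
    have := mul_pos (hspos x) (hpos (s x))
    linarith
  refine ⟨fun x => θp - s x, ⟨?_, fun x hx => ?_, by simp [hsR], fun x hx => ?_, ?_⟩, ?_⟩
  · refine ContDiff.contDiffOn ?_
    rw [show (2 : WithTop ℕ∞) = 1 + 1 by norm_num, contDiff_succ_iff_deriv]
    refine ⟨fun x => (hθ x).differentiableAt, by simp, ?_⟩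
    rw [funext fun x => (hθ x).deriv, contDiff_one_iff_deriv]
    refine ⟨fun x => (hθ2 x).differentiableAt, ?_⟩
    rw [funext fun x => (hθ2 x).deriv]
    fun_prop
  · rw [derivWithin_congr hw (hw x hx),
      (hθ2 x).hasDerivWithinAt.derivWithin (uniqueDiffOn_Ici R x hx), hw x hx,
      hFG (s x) ⟨(hspos x).le, by rw [← hsR]; exact hanti hx⟩]
    ring
  · rw [hw x hx]
    exact mul_pos (hspos x) (hpos _)
  · simpa using hs0.const_sub θp
  · rw [hw R self_mem_Ici, hsR]

theorem IsMonotoneConnection.derivWithin_left {F G Z θ : ℝ → ℝ} {θhl θp c m M R : ℝ}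
    (hFG : ∀ s ∈ Icc 0 (θp - θhl), F (θp - s) = s * G s) (hG : ∀ s, 0 < G s) (hZ : Continuous Z)
    (hm : 0 < m) (hmM : ∀ s, m ≤ Z s ∧ Z s ≤ M)
    (hder : ∀ s, 0 < s → HasDerivAt (fun s => s * Z s) (G s / Z s - c) s)
    (hθ : IsMonotoneConnection F θhl θp R c θ) :
    derivWithin θ (Ici R) R = (θp - θhl) * Z (θp - θhl) := by
  obtain ⟨hC2, hode, hθR, hpos', hlim⟩ := hθ
  have hpos : ∀ s, 0 < Z s := fun s => hm.trans_le (hmM s).1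
  have hu : UniqueDiffOn ℝ (Ici R) := uniqueDiffOn_Ici R
  have hθd : ∀ x ∈ Ici R, HasDerivWithinAt θ (derivWithin θ (Ici R) x) (Ici R) x := fun x hx =>
    (hC2.differentiableOn (by norm_num) x hx).hasDerivWithinAt
  have hC1 : ContDiffOn ℝ 1 (derivWithin θ (Ici R)) (Ici R) :=
    hC2.derivWithin hu (by norm_num)
  have hθdd : ∀ x ∈ Ici R, HasDerivWithinAt (derivWithin θ (Ici R))
      (c * derivWithin θ (Ici R) x - F (θ x)) (Ici R) x := fun x hx => by
    refine (hC1.differentiableOn (by norm_num) x hx).hasDerivWithinAt.congr_deriv ?_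
    linarith [hode x hx]
  set v := derivWithin θ (Ici R) with hv
  have hmono : StrictMonoOn θ (Ici R) := by
    refine strictMonoOn_of_deriv_pos (convex_Ici R) hC2.continuousOn fun x hx => ?_
    have hx' := interior_subset hx
    rw [((hθd x hx').hasDerivAt (mem_interior_iff_mem_nhds.1 hx)).deriv]
    exact hpos' x hx'
  have hlt : ∀ x ∈ Ici R, θ x < θp := by
    intro x hx
    have hx1 : x + 1 ∈ Ici R := (mem_Ici.1 hx).trans (lt_add_one x).le
    refine (hmono hx hx1 (by linarith)).trans_le (ge_of_tendsto hlim ?_)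
    filter_upwards [eventually_ge_atTop (x + 1)] with y hy
    exact hmono.monotoneOn hx1 (le_trans hx1 hy) hy
  have hge : ∀ x ∈ Ici R, θhl ≤ θ x := fun x hx => by
    rw [← hθR]
    exact hmono.monotoneOn self_mem_Ici hx hx
  set D : ℝ → ℝ := fun x => v x - (θp - θ x) * Z (θp - θ x) with hD
  have hDd : ∀ x ∈ Ici R, HasDerivWithinAt D (G (θp - θ x) / Z (θp - θ x) * D x) (Ici R) x := by
    intro x hx
    have h1 : HasDerivWithinAt (fun x => θp - θ x) (-v x) (Ici R) x := (hθd x hx).const_sub θp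
    have h2 := (hder (θp - θ x) (sub_pos.2 (hlt x hx))).comp_hasDerivWithinAt x h1
    refine ((hθdd x hx).fun_sub h2).congr_deriv ?_
    have h3 := hFG (θp - θ x) ⟨(sub_pos.2 (hlt x hx)).le, by linarith [hge x hx]⟩
    rw [sub_sub_cancel] at h3
    rw [h3]
    have := (hpos (θp - θ x)).ne'
    simp only [hD]
    field_simp
    ring
  have hDsq : MonotoneOn (fun x => D x ^ 2) (Ici R) := by
    have hd : ∀ x ∈ Ici R, HasDerivWithinAt (fun x => D x ^ 2)
        (2 * (G (θp - θ x) / Z (θp - θ x)) * D x ^ 2) (Ici R) x := fun x hx =>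
      ((hDd x hx).fun_pow 2).congr_deriv (by norm_num; ring)
    refine monotoneOn_of_deriv_nonneg (convex_Ici R) (fun x hx => (hd x hx).continuousWithinAt)
      (fun x hx => ((hd x (interior_subset hx)).mono interior_subset).differentiableWithinAt)
      fun x hx => ?_
    rw [((hd x (interior_subset hx)).hasDerivAt (mem_interior_iff_mem_nhds.1 hx)).deriv]
    have := div_pos (hG (θp - θ x)) (hpos (θp - θ x))
    positivity
  have hseq : ∀ k : ℕ, ∃ ξ ∈ Ioo (R + k) (R + k + 1), v ξ = θ (R + k + 1) - θ (R + k) := by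
    intro k
    have hk : (0 : ℝ) ≤ k := k.cast_nonneg
    have hsub : Icc (R + k) (R + k + 1) ⊆ Ici R := fun x hx => le_trans (by linarith) hx.1
    obtain ⟨ξ, h1, h2⟩ := exists_hasDerivAt_eq_slope θ v (by linarith : R + k < R + k + 1)
      (hC2.continuousOn.mono hsub) fun x hx =>
        (hθd x (hsub ⟨hx.1.le, hx.2.le⟩)).hasDerivAt (Ici_mem_nhds (by linarith [hx.1]))
    exact ⟨ξ, h1, by rw [h2]; simp⟩
  choose ξ hξ hvξ using hseq
  have hktop : Tendsto (fun k : ℕ => R + k) atTop atTop :=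
    tendsto_atTop_add_const_left atTop R tendsto_natCast_atTop_atTop
  have hξtop : Tendsto ξ atTop atTop := tendsto_atTop_mono (fun k => (hξ k).1.le) hktop
  have hvlim : Tendsto (fun k => v (ξ k)) atTop (nhds 0) := by
    simp only [hvξ]
    rw [← sub_self θp]
    exact (hlim.comp (tendsto_atTop_add_const_right atTop 1 hktop)).sub (hlim.comp hktop)
  have hDlim : Tendsto (fun k => D (ξ k) ^ 2) atTop (nhds 0) := by
    have h1 : Tendsto (fun k => θp - θ (ξ k)) atTop (nhds 0) := by
      simpa using (hlim.comp hξtop).const_sub θp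
    have h2 := h1.mul ((hZ.tendsto 0).comp h1)
    simpa using (hvlim.sub h2).pow 2
  have hD0 : D R ^ 2 ≤ 0 := ge_of_tendsto' hDlim fun k => by
    have hk : (0 : ℝ) ≤ k := k.cast_nonneg
    have h : R ≤ ξ k := by linarith [(hξ k).1]
    exact hDsq self_mem_Ici h h
  have : D R = 0 := pow_eq_zero_iff two_ne_zero |>.1 (le_antisymm hD0 (sq_nonneg _))
  simp only [hD, hθR] at this
  linarith

theorem exists_quotient_at_zero {F : ℝ → ℝ} {W : Set ℝ} {θhl θp : ℝ} (h1 : θhl < θp)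
    (hW : IsOpen W) (hWsub : Icc θhl θp ⊆ W) (hF : ContDiffOn ℝ (⊤ : ℕ∞) F W) (hFzero : F θp = 0)
    (hFpos : ∀ u ∈ Ico θhl θp, 0 < F u) (hF' : deriv F θp < 0) :
    ∃ (G : ℝ →ᵇ ℝ) (a b : ℝ), 0 < a ∧ (∀ s, a ≤ G s) ∧ (∀ s, G s ≤ b) ∧
      ∀ s ∈ Icc 0 (θp - θhl), F (θp - s) = s * G s := by
  have hL : 0 ≤ θp - θhl := by linarith
  have hWp : W ∈ nhds θp := hW.mem_nhds (hWsub ⟨h1.le, le_rfl⟩)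
  set g : ℝ → ℝ := fun s => -dslope F θp (θp - s) with hg
  have hgF : ∀ s, F (θp - s) = s * g s := by
    intro s
    have := sub_smul_dslope F θp (θp - s)
    simp only [smul_eq_mul, hFzero, hg] at *
    linarith
  have hgc : ContinuousOn g (Icc 0 (θp - θhl)) := by
    have h2 : ContinuousOn (dslope F θp) W := (continuousOn_dslope hWp).2
      ⟨hF.continuousOn, (hF.contDiffAt hWp).differentiableAt (by simp)⟩
    refine (h2.comp (by fun_prop) fun s hs => hWsub ?_).fun_neg
    exact ⟨by linarith [hs.2], by linarith [hs.1]⟩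
  have hgpos : ∀ s ∈ Icc 0 (θp - θhl), 0 < g s := by
    intro s hs
    rcases hs.1.eq_or_lt with h | h
    · simp only [hg, ← h, sub_zero, dslope_same]
      linarith
    · have := hFpos (θp - s) ⟨by linarith [hs.2], by linarith⟩
      rw [hgF] at this
      exact pos_of_mul_pos_right this h.le
  have hne : (Icc 0 (θp - θhl)).Nonempty := nonempty_Icc.2 hL
  obtain ⟨x, hx, hmin⟩ := isCompact_Icc.exists_isMinOn hne hgc
  obtain ⟨y, hy, hmax⟩ := isCompact_Icc.exists_isMaxOn hne hgc
  have hp : ∀ s, (projIcc 0 (θp - θhl) hL s : ℝ) ∈ Icc 0 (θp - θhl) := fun s => Subtype.prop _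
  refine ⟨BoundedContinuousFunction.ofNormedAddCommGroup
    (fun s => g (projIcc 0 (θp - θhl) hL s)) ?_ (g y) fun s => ?_, g x, g y, hgpos x hx,
    fun s => hmin (hp s), fun s => hmax (hp s), fun s hs => ?_⟩
  · exact hgc.comp_continuous (continuous_subtype_val.comp continuous_projIcc) hp
  · rw [Real.norm_of_nonneg (hgpos _ (hp s)).le]
    exact hmax (hp s)
  · change _ = s * g (projIcc 0 (θp - θhl) hL s)
    rw [projIcc_of_mem hL hs, hgF]

theorem profile_zero_speed {F G Z : ℝ → ℝ} {θhl θp : ℝ} (h1 : θhl < θp)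
    (hFG : ∀ s ∈ Icc 0 (θp - θhl), F (θp - s) = s * G s) (hG : Continuous G) (hZ : Continuous Z)
    (hpos : ∀ s, 0 < Z s)
    (hder : ∀ s, 0 < s → HasDerivAt (fun s => s * Z s) (G s / Z s - 0) s) :
    (θp - θhl) * Z (θp - θhl) = Real.sqrt (2 * ∫ u in θhl..θp, F u) := by
  have hL : 0 < θp - θhl := sub_pos.2 h1
  have h2 : ∫ s in (0 : ℝ)..(θp - θhl), s * G s = ∫ u in θhl..θp, F u := by
    have := intervalIntegral.integral_comp_sub_left (a := 0) (b := θp - θhl) F θp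
    rw [sub_zero, sub_sub_cancel] at this
    rw [← this]
    refine intervalIntegral.integral_congr fun s hs => ?_
    rw [uIcc_of_le hL.le] at hs
    exact (hFG s hs).symm
  have h3 := intervalIntegral.integral_eq_sub_of_hasDerivAt_of_le
    (f := fun s => (s * Z s) ^ 2 / 2) (f' := fun s => s * G s) hL.le (by fun_prop)
    (fun s hs => (((hder s hs.1).fun_pow 2).div_const 2).congr_deriv (by
      have := (hpos s).ne'
      field_simp
      norm_num
      ring))
    (Continuous.intervalIntegrable (by fun_prop) _ _)
  rw [← h2, h3]
  simp only [zero_mul, ne_eq, OfNat.ofNat_ne_zero, not_false_eq_true, zero_pow, zero_div, sub_zero]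
  rw [mul_div_cancel₀ _ two_ne_zero, Real.sqrt_sq (mul_pos hL (hpos _)).le]

/-- The curve `c = ψ(R)` selecting, for each `R ≥ 0`, the unique speed for which
the solution starting at the heat-loss interface with slope `cθ_hl − qR` is the
monotone heteroclinic connection to `θ₊`: `ψ` is smooth, strictly increasing with
positive derivative, maps `[0, ∞)` onto `[ψ(0), ∞)`, satisfies the bounds
`qR/θ_hl < ψ(R) < c₊(R)`, and has the line `c = qR/θ_hl` as asymptote.
(Derivatives on closed half-lines are taken within them.) -/
theorem stmt18 (q θhl θp : ℝ) (hq : 0 < q) (h0 : 0 < θhl) (h1 : θhl < θp)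
    (F : ℝ → ℝ) (W : Set ℝ) (hW : IsOpen W) (hWsub : Icc θhl θp ⊆ W)
    (hF : ContDiffOn ℝ (⊤ : ℕ∞) F W) (hFzero : F θp = 0)
    (hFpos : ∀ u ∈ Ico θhl θp, 0 < F u) (hF' : deriv F θp < 0) :
    ∃ ψ : ℝ → ℝ,
      ContDiffOn ℝ (⊤ : ℕ∞) ψ (Ici 0) ∧
      StrictMonoOn ψ (Ici 0) ∧
      (∀ R ∈ Ici (0 : ℝ), 0 < derivWithin ψ (Ici 0) R) ∧
      0 < ψ 0 ∧
      ψ '' Ici 0 = Ici (ψ 0) ∧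
      (∀ R : ℝ, 0 ≤ R → ∀ c : ℝ, 0 < c →
        (c = ψ R ↔ ∃ θ : ℝ → ℝ,
          ContDiffOn ℝ 2 θ (Ici R) ∧
          (∀ x ∈ Ici R, derivWithin (derivWithin θ (Ici R)) (Ici R) x
              - c * derivWithin θ (Ici R) x + F (θ x) = 0) ∧
          θ R = θhl ∧
          derivWithin θ (Ici R) R = c * θhl - q * R ∧
          (∀ x ∈ Ici R, 0 < derivWithin θ (Ici R) x) ∧
          Tendsto θ atTop (nhds θp))) ∧
      (∀ R : ℝ, 0 ≤ R →
        q * R / θhl < ψ R ∧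
        ψ R < (1 / θhl) * (Real.sqrt (2 * ∫ u in θhl..θp, F u) + q * R)) ∧
      Tendsto (fun R => ψ R - q * R / θhl) atTop (nhds 0) := by
  obtain ⟨G, a, b, ha, hGa, hGb, hFG⟩ :=
    exists_quotient_at_zero h1 hW hWsub hF hFzero hFpos hF'
  obtain ⟨Z, hZc, hZb, hZs, hZd, hZsm⟩ := exists_profile G ha hGa hGb
  have hGpos : ∀ s, 0 < G s := fun s => ha.trans_le (hGa s)
  have hZpos : ∀ c s, 0 < Z c s := fun c s => by
    obtain ⟨m, M, hm, hmM⟩ := hZb c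
    exact hm.trans_le (hmM s).1
  have hL : 0 < θp - θhl := sub_pos.2 h1
  set h : ℝ → ℝ := fun c => (θp - θhl) * Z c (θp - θhl) with hh
  have hpos : ∀ c, 0 < h c := fun c => mul_pos hL (hZpos _ _)
  have hanti : StrictAnti h := fun c₁ c₂ hc => by
    refine mul_lt_mul_of_pos_left ?_ hL
    by_contra! hle
    exact hc.ne (profile_comparison hGpos (hZc c₁) (hZc c₂) (hZpos c₁) (hZd c₁) (hZd c₂)
      hc.le hL hle).1
  have hsm : ContDiff ℝ (⊤ : ℕ∞) h := contDiff_const.mul (hZsm _ hL)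
  have hd : ∀ c, HasDerivAt h (deriv h c) c := fun c =>
    (hsm.differentiable (by simp) c).hasDerivAt
  obtain ⟨ψ, hψg, hgψ, hψmono, hψd, hψsm⟩ := exists_inverse_of_le_deriv (div_pos h0 hq)
    (f := fun c => (c * θhl - h c) / q)
    (fun c => (((hasDerivAt_id' c).mul_const θhl).fun_sub (hd c)).div_const q) fun c => by
      have : deriv h c ≤ 0 := hanti.antitone.deriv_nonpos
      gcongr
      linarith
  have hψeq : ∀ R, ψ R * θhl - h (ψ R) = q * R := fun R => by
    have := hgψ R
    rw [div_eq_iff hq.ne'] at this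
    linarith
  have hiff : ∀ R c, c = ψ R ↔ h c = c * θhl - q * R := fun R c => by
    constructor
    · rintro rfl
      linarith [hψeq R]
    · intro hc
      rw [← hψg c]
      congr 1
      rw [div_eq_iff hq.ne']
      linarith
  have hψ0 : 0 < ψ 0 := by
    have := hψeq 0
    have := hpos (ψ 0)
    exact pos_of_mul_pos_left (b := θhl) (by linarith) h0.le
  have hψpos : ∀ R, 0 ≤ R → 0 < ψ R := fun R hR => hψ0.trans_le (hψmono.monotone hR)
  have hψform : ∀ R, ψ R - q * R / θhl = h (ψ R) / θhl := fun R => by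
    have := hψeq R
    field_simp
    linarith
  have hψgt : ∀ R, q * R / θhl < ψ R := fun R => by
    have := div_pos (hpos (ψ R)) h0
    linarith [hψform R]
  have hψsm' : ContDiff ℝ (⊤ : ℕ∞) ψ :=
    hψsm _ (((contDiff_id.mul contDiff_const).sub hsm).div_const q)
  refine ⟨ψ, hψsm'.contDiffOn, hψmono.strictMonoOn _, fun R hR => ?_, hψ0, ?_, fun R hR c hc => ?_,
    fun R hR => ⟨hψgt R, ?_⟩, ?_⟩
  · rw [(hψd R).hasDerivWithinAt.derivWithin (uniqueDiffOn_Ici 0 R hR)]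
    have : deriv h (ψ R) ≤ 0 := hanti.antitone.deriv_nonpos
    exact inv_pos.2 (div_pos (by linarith) hq)
  · refine Subset.antisymm (image_subset_iff.2 fun R hR => hψmono.monotone hR) fun c hc => ?_
    refine ⟨(c * θhl - h c) / q, ?_, hψg c⟩
    rw [mem_Ici, ← hψmono.le_iff_le]
    rwa [hψg c]
  · obtain ⟨m, M, hm, hmM⟩ := hZb c
    rw [hiff]
    constructor
    · intro hc'
      obtain ⟨θ, ⟨h2, h3, h4, h5, h6⟩, h7⟩ := exists_isMonotoneConnection h1 hFG G.continuous
        (hZc c) hm hmM (hZd c) R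
      exact ⟨θ, h2, h3, h4, h7.trans hc', h5, h6⟩
    · rintro ⟨θ, h2, h3, h4, h7, h5, h6⟩
      have hθ : IsMonotoneConnection F θhl θp R c θ := ⟨h2, h3, h4, h5, h6⟩
      exact (hθ.derivWithin_left hFG hGpos (hZc c) hm hmM (hZd c)).symm.trans h7
  · rw [← profile_zero_speed h1 hFG G.continuous (hZc 0) (hZpos 0) (hZd 0), one_div,
      inv_mul_eq_div, lt_div_iff₀ h0]
    have : h (ψ R) < h 0 := hanti (hψpos R hR)
    linarith [hψeq R]
  · have hψtop : Tendsto ψ atTop atTop := by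
      refine tendsto_atTop_mono (fun R => (hψgt R).le) ?_
      exact (tendsto_id.const_mul_atTop hq).atTop_div_const h0
    have hb : Tendsto (fun R => (θp - θhl) * b / ψ R / θhl) atTop (nhds 0) := by
      simpa using (hψtop.const_div_atTop ((θp - θhl) * b)).div_const θhl
    refine squeeze_zero' (Eventually.of_forall fun R => (sub_pos.2 (hψgt R)).le) ?_ hb
    filter_upwards [eventually_ge_atTop 0] with R hR
    rw [hψform]
    refine div_le_div_of_nonneg_right ?_ h0.le
    rw [le_div_iff₀ (hψpos R hR)]
    have := mul_le_mul_of_nonneg_left (hZs (ψ R) (θp - θhl) (hψpos R hR).le) hL.le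
    simp only [hh]
    linarith
end

section
/- There exists a unique pair (R*, c*) with R* > 0, c* > 0 and c*·θ_hl > q·R* such that both: (a) G(R*, c*) = 0, and (b) there exists a twice continuously differentiable function θ : [R*, +∞) → ℝ with θ'' − c*·θ' + F(θ) = 0 on [R*, +∞), θ(R*) = θ_hl, θ'(R*) = c*·θ_hl − q·R*, θ'(x) > 0 for all x ≥ R*, and θ(x) → θ₊ as x → +∞. Equivalently, the decreasing curve φ defined by {G = 0} and the increasing curve ψ defined by the stable-separatrix condition intersect at exactly one point, and this point lies in the interior of Q₊ = {(R,c) : R > 0, c·θ_hl ≥ q·R}. -/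
open Set Filter

section GlobalExistence

variable {E : Type*} [NormedAddCommGroup E] [NormedSpace ℝ E] [CompleteSpace E]

/-- A globally Lipschitz vector field has local forward solutions on intervals of uniform length. -/
lemma LipschitzWith.exists_uniform_forward_solution {X : E → E} {K : NNReal}
    (hX : LipschitzWith K X) :
    ∃ ε : ℝ, 0 < ε ∧ ∀ z : E, ∃ γ : ℝ → E, γ 0 = z ∧
      ∀ t ∈ Icc 0 ε, HasDerivWithinAt γ (X (γ t)) (Icc 0 ε) t := by
  have hK : (0 : ℝ) < 1 + K := by positivity
  have hε : (0 : ℝ) < 1 / (1 + K) := by positivity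
  refine ⟨1 / (1 + K), hε, fun z ↦ ?_⟩
  have hPL : IsPicardLindelof (fun _ ↦ X) (⟨0, le_rfl, hε.le⟩ : Icc (0 : ℝ) (1 / (1 + K))) z
      (‖X z‖₊ + 1) 0 (‖X z‖₊ + K * (‖X z‖₊ + 1)) K := by
    refine IsPicardLindelof.of_time_independent (fun x hx ↦ ?_) hX.lipschitzOnWith ?_
    · have h1 := hX.norm_sub_le x z
      have h2 : ‖x - z‖ ≤ ‖X z‖ + 1 := by simpa [dist_eq_norm] using hx
      have h3 : ‖X x‖ ≤ ‖X z‖ + ‖X x - X z‖ := norm_le_norm_add_norm_sub' _ _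
      have h4 := mul_le_mul_of_nonneg_left h2 K.coe_nonneg
      push_cast
      linarith
    · have h0 := norm_nonneg (X z)
      have hK0 := K.coe_nonneg
      simp only [sub_zero, sub_self, max_eq_left hε.le]
      push_cast
      rw [mul_one_div, div_le_iff₀ hK]
      nlinarith
  simpa using hPL.exists_eq_forall_mem_Icc_hasDerivWithinAt₀

lemma LipschitzWith.exists_forward_solution {X : E → E} {K : NNReal}
    (hX : LipschitzWith K X) (z₀ : E) :
    ∃ γ : ℝ → E, γ 0 = z₀ ∧ ∀ t, 0 ≤ t → HasDerivWithinAt γ (X (γ t)) (Ici 0) t := by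
  obtain ⟨ε, hε, h⟩ := hX.exists_uniform_forward_solution
  choose Φ hΦ0 hΦ using h
  let z : ℕ → E := fun n ↦ Nat.rec z₀ (fun _ w ↦ Φ w ε) n
  have hz : ∀ n, z (n + 1) = Φ (z n) ε := fun n ↦ rfl
  let γ : ℝ → E := fun t ↦ Φ (z ⌊t / ε⌋₊) (t - ⌊t / ε⌋₊ * ε)
  have hγ : ∀ n : ℕ, ∀ t ∈ Icc (n * ε) ((n + 1) * ε), γ t = Φ (z n) (t - n * ε) := by
    intro n t ht
    rcases ht.2.lt_or_eq with h | h
    · have : ⌊t / ε⌋₊ = n := by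
        rw [Nat.floor_eq_iff (div_nonneg (le_trans (by positivity) ht.1) hε.le)]
        exact ⟨(le_div_iff₀ hε).2 ht.1, (div_lt_iff₀ hε).2 h⟩
      simp only [γ, this]
    · have : ⌊t / ε⌋₊ = n + 1 := by
        rw [h, mul_div_cancel_right₀ _ hε.ne']
        exact_mod_cast Nat.floor_natCast (n + 1)
      simp only [γ, this, hz]
      rw [h]
      push_cast
      rw [sub_self, hΦ0]
      congr 1
      ring
  have hd : ∀ n : ℕ, ∀ t ∈ Icc (n * ε) ((n + 1) * ε),
      HasDerivWithinAt γ (X (γ t)) (Icc (n * ε) ((n + 1) * ε)) t := by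
    intro n t ht
    have hm : MapsTo (fun t : ℝ ↦ t - n * ε) (Icc (n * ε) ((n + 1) * ε)) (Icc 0 ε) := by
      intro s hs
      exact ⟨by linarith [hs.1], by linarith [hs.2]⟩
    have h1 := (hΦ (z n) (t - n * ε) (hm ht)).scomp t
      ((hasDerivWithinAt_id t _).sub_const (n * ε)) hm
    rw [one_smul, ← hγ n t ht] at h1
    exact h1.congr_of_mem (hγ n) ht
  refine ⟨γ, by simp [γ, hΦ0, z], fun t ht ↦ ?_⟩
  set n := ⌊t / ε⌋₊ with hn
  have hnt : n * ε ≤ t := (le_div_iff₀ hε).1 (Nat.floor_le (div_nonneg ht hε.le))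
  have htn : t < (n + 1) * ε := (div_lt_iff₀ hε).1 (Nat.lt_floor_add_one _)
  have h1 := hd n t ⟨hnt, htn.le⟩
  rcases hnt.lt_or_eq with h | h
  · exact (h1.hasDerivAt (Icc_mem_nhds h htn)).hasDerivWithinAt
  · rcases n with _ | m
    · refine h1.mono_of_mem_nhdsWithin ?_
      simp only [Nat.cast_zero, zero_mul, zero_add, one_mul] at h htn ⊢
      rw [← h]
      exact Icc_mem_nhdsGE hε
    · have h2 := hd m t ⟨by push_cast at h; nlinarith, by push_cast at h; exact h.ge⟩
      refine ((h2.union h1).hasDerivAt ?_).hasDerivWithinAt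
      push_cast at h htn ⊢
      rw [Icc_union_Icc_eq_Icc (by nlinarith) (by nlinarith)]
      exact Icc_mem_nhds (by nlinarith) htn

theorem LipschitzWith.exists_global_solution {X : E → E} {K : NNReal}
    (hX : LipschitzWith K X) (z₀ : E) :
    ∃ γ : ℝ → E, γ 0 = z₀ ∧ ∀ t, HasDerivAt γ (X (γ t)) t := by
  obtain ⟨f, hf0, hf⟩ := hX.exists_forward_solution z₀
  obtain ⟨g, hg0, hg⟩ := (show LipschitzWith K (fun x ↦ -X x) from hX.neg).exists_forward_solution z₀
  let γ : ℝ → E := fun t ↦ if 0 ≤ t then f t else g (-t)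
  have hγf : ∀ t ∈ Ici (0 : ℝ), γ t = f t := fun t ht ↦ if_pos ht
  have hγg : ∀ t ∈ Iic (0 : ℝ), γ t = g (-t) := by
    intro t ht
    rcases (mem_Iic.1 ht).lt_or_eq with h | h
    · exact if_neg h.not_ge
    · simp [γ, h, hf0, hg0]
  have h1 : ∀ t ∈ Ici (0 : ℝ), HasDerivWithinAt γ (X (γ t)) (Ici 0) t := by
    intro t ht
    rw [hγf t ht]
    exact (hf t ht).congr_of_mem hγf ht
  have h2 : ∀ t ∈ Iic (0 : ℝ), HasDerivWithinAt γ (X (γ t)) (Iic 0) t := by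
    intro t ht
    rw [hγg t ht]
    have hm : MapsTo (fun t : ℝ ↦ -t) (Iic 0) (Ici 0) := fun s hs ↦ by simpa using hs
    have h := (hg (-t) (hm ht)).scomp t (hasDerivWithinAt_id t _).neg hm
    simp only [neg_smul, one_smul, neg_neg] at h
    exact h.congr_of_mem hγg ht
  refine ⟨γ, by simp [γ, hf0], fun t ↦ ?_⟩
  rcases lt_trichotomy t 0 with h | h | h
  · exact (h2 t h.le).hasDerivAt (Iic_mem_nhds h)
  · have := (h2 t h.le).union (h1 t h.ge)
    rwa [Iic_union_Ici, hasDerivWithinAt_univ] at this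
  · exact (h1 t h.le).hasDerivAt (Ici_mem_nhds h)

end GlobalExistence

section Shooting

/-- `(Θ, V)` solves the first-order system of the equation `Θ'' = Θ' - l f(Θ)` on the whole line. -/
def IsOrbit (f : ℝ → ℝ) (l : ℝ) (Θ V : ℝ → ℝ) : Prop :=
  (∀ t, HasDerivAt Θ (V t) t) ∧ ∀ t, HasDerivAt V (V t - l * f (Θ t)) t

/-- The planar vector field of the equation `Θ'' = Θ' - l f(Θ)`. -/
def planarField (f : ℝ → ℝ) (l : ℝ) (z : ℝ × ℝ) : ℝ × ℝ := (z.2, z.2 - l * f z.1)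

variable {f : ℝ → ℝ} {K : NNReal} {l b M : ℝ} {Θ V : ℝ → ℝ}

lemma lipschitzWith_planarField (hf : LipschitzWith K f) (l : ℝ) :
    LipschitzWith (max 1 (1 + ‖l‖₊ * K)) (planarField f l) := by
  have hsnd : LipschitzWith 1 (Prod.snd : ℝ × ℝ → ℝ) := LipschitzWith.prod_snd
  have hfst : LipschitzWith 1 (Prod.fst : ℝ × ℝ → ℝ) := LipschitzWith.prod_fst
  have h : LipschitzWith (‖l‖₊ * K) fun z : ℝ × ℝ ↦ l * f z.1 := by
    simpa [Function.comp_def] using (lipschitzWith_smul l).comp (hf.comp hfst)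
  exact hsnd.prodMk (hsnd.sub h)

lemma IsOrbit.hasDerivAt_prodMk (h : IsOrbit f l Θ V) (t : ℝ) :
    HasDerivAt (fun t ↦ (Θ t, V t)) (planarField f l (Θ t, V t)) t :=
  (h.1 t).prodMk (h.2 t)

lemma exists_isOrbit (hf : LipschitzWith K f) (l a y : ℝ) :
    ∃ Θ V : ℝ → ℝ, IsOrbit f l Θ V ∧ Θ 0 = a ∧ V 0 = y := by
  obtain ⟨γ, h0, h⟩ := (lipschitzWith_planarField hf l).exists_global_solution (a, y)
  exact ⟨fun t ↦ (γ t).1, fun t ↦ (γ t).2, ⟨fun t ↦ (h t).fst, fun t ↦ (h t).snd⟩,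
    by simp [h0], by simp [h0]⟩

lemma IsOrbit.eq_of_eq_at (hf : LipschitzWith K f) {Θ' V' : ℝ → ℝ} (h : IsOrbit f l Θ V)
    (h' : IsOrbit f l Θ' V') {t₀ : ℝ} (hΘ : Θ t₀ = Θ' t₀) (hV : V t₀ = V' t₀) :
    ∀ t, Θ t = Θ' t ∧ V t = V' t := by
  have key := ODE_solution_unique_univ (v := fun _ ↦ planarField f l) (s := fun _ ↦ univ)
    (fun _ ↦ (lipschitzWith_planarField hf l).lipschitzOnWith)
    (fun t ↦ ⟨h.hasDerivAt_prodMk t, mem_univ _⟩) (fun t ↦ ⟨h'.hasDerivAt_prodMk t, mem_univ _⟩)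
    (t₀ := t₀) (by simp [hΘ, hV])
  intro t
  simpa using congrFun key t

lemma continuous_gronwallBound (K x : ℝ) :
    Continuous fun p : ℝ × ℝ ↦ gronwallBound p.1 K p.2 x := by
  by_cases hK : K = 0
  · simp only [gronwallBound_K0, hK]
    fun_prop
  · simp only [gronwallBound_of_K_ne_0 hK]
    fun_prop

lemma continuous_orbit_parameter {P : Type*} [TopologicalSpace P] (hf : LipschitzWith K f)
    (hM : ∀ u, |f u| ≤ M) {a : ℝ} {lam y : P → ℝ} (hlam : Continuous lam) (hy : Continuous y)
    {Θ V : P → ℝ → ℝ} (h : ∀ p, IsOrbit f (lam p) (Θ p) (V p)) (hΘ : ∀ p, Θ p 0 = a)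
    (hV : ∀ p, V p 0 = y p) {t : ℝ} (ht : 0 ≤ t) :
    Continuous fun p ↦ (Θ p t, V p t) := by
  refine continuous_iff_continuousAt.2 fun p₀ ↦ ?_
  rw [ContinuousAt, tendsto_iff_dist_tendsto_zero]
  have hbound : ∀ p, dist (Θ p t, V p t) (Θ p₀ t, V p₀ t) ≤
      gronwallBound |y p - y p₀| (max 1 (1 + ‖lam p₀‖₊ * K) : NNReal)
        (|lam p - lam p₀| * M + 0) (t - 0) := by
    intro p
    refine dist_le_of_approx_trajectories_ODE (v := fun _ ↦ planarField f (lam p₀))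
      (fun _ ↦ lipschitzWith_planarField hf _)
      (f := fun t ↦ (Θ p t, V p t)) (g := fun t ↦ (Θ p₀ t, V p₀ t)) (a := 0) (b := t)
      (fun s _ ↦ ((h p).hasDerivAt_prodMk s).continuousAt.continuousWithinAt)
      (fun s _ ↦ ((h p).hasDerivAt_prodMk s).hasDerivWithinAt) (fun s _ ↦ ?_)
      (fun s _ ↦ ((h p₀).hasDerivAt_prodMk s).continuousAt.continuousWithinAt)
      (fun s _ ↦ ((h p₀).hasDerivAt_prodMk s).hasDerivWithinAt) (fun s _ ↦ (dist_self _).le)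
      ?_ t ⟨ht, le_rfl⟩
    · simp only [planarField, Prod.dist_eq, dist_self, Real.dist_eq]
      refine max_le (mul_nonneg (abs_nonneg _) ((abs_nonneg _).trans (hM 0))) ?_
      rw [show V p s - lam p * f (Θ p s) - (V p s - lam p₀ * f (Θ p s)) =
        -((lam p - lam p₀) * f (Θ p s)) by ring, abs_neg, abs_mul]
      exact mul_le_mul_of_nonneg_left (hM _) (abs_nonneg _)
    · simp [Prod.dist_eq, hΘ, hV, Real.dist_eq]
  refine squeeze_zero (fun _ ↦ dist_nonneg) hbound ?_
  have hc : Continuous fun p ↦ gronwallBound |y p - y p₀|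
      (max 1 (1 + ‖lam p₀‖₊ * K) : NNReal) (|lam p - lam p₀| * M + 0) (t - 0) :=
    (continuous_gronwallBound _ _).comp (f := fun p ↦ (|y p - y p₀|, |lam p - lam p₀| * M + 0))
      (by fun_prop)
  have := hc.tendsto p₀
  simpa [gronwallBound_ε0] using this

lemma IsOrbit.antitone_mul_exp (h : IsOrbit f l Θ V) (hl : 0 ≤ l) (hf0 : ∀ u, 0 ≤ f u) :
    Antitone fun t ↦ V t * Real.exp (-t) := by
  have hd : ∀ t, HasDerivAt (fun t ↦ V t * Real.exp (-t))
      (-(l * f (Θ t) * Real.exp (-t))) t := by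
    intro t
    exact ((h.2 t).mul (hasDerivAt_neg t).exp).congr_deriv (by ring)
  refine antitone_of_deriv_nonpos (fun t ↦ (hd t).differentiableAt) fun t ↦ ?_
  rw [(hd t).deriv]
  have := mul_nonneg (mul_nonneg hl (hf0 (Θ t))) (Real.exp_pos (-t)).le
  linarith

/-- Once the orbit is at rest or moves backwards, it never moves forward again. -/
lemma IsOrbit.velocity_nonpos (h : IsOrbit f l Θ V) (hl : 0 ≤ l) (hf0 : ∀ u, 0 ≤ f u)
    {s t : ℝ} (hst : s ≤ t) (hs : V s ≤ 0) : V t ≤ 0 := by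
  have h1 := h.antitone_mul_exp hl hf0 hst
  have h2 : V s * Real.exp (-s) ≤ 0 := mul_nonpos_of_nonpos_of_nonneg hs (Real.exp_pos _).le
  by_contra! hc
  have := mul_pos hc (Real.exp_pos (-t))
  dsimp only at h1
  linarith

/-- An orbit moving forward beyond the threshold `b` moves forward for all times. -/
lemma IsOrbit.velocity_pos_of_beyond (hf : LipschitzWith K f) (h : IsOrbit f l Θ V) (hl : 0 ≤ l)
    (hf0 : ∀ u, 0 ≤ f u) (hfb : ∀ u, b ≤ u → f u = 0) {t₀ : ℝ} (hΘ : b ≤ Θ t₀)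
    (hV : 0 < V t₀) (t : ℝ) : 0 < V t := by
  rcases le_total t t₀ with htt | htt
  · by_contra! hc
    exact hV.not_ge (h.velocity_nonpos hl hf0 htt hc)
  · let T : ℝ → ℝ := fun s ↦ Θ t₀ + V t₀ * (Real.exp (s - t₀) - 1)
    let W : ℝ → ℝ := fun s ↦ V t₀ * Real.exp (s - t₀)
    have hE : ∀ s, HasDerivAt (fun s : ℝ ↦ Real.exp (s - t₀)) (Real.exp (s - t₀)) s := by
      intro s
      simpa using ((hasDerivAt_id s).sub_const t₀).exp
    have key := ODE_solution_unique (v := fun _ ↦ planarField f l) (a := t₀) (b := t)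
      (f := fun s ↦ (Θ s, V s)) (g := fun s ↦ (T s, W s))
      (fun _ ↦ lipschitzWith_planarField hf _)
      (fun s _ ↦ (h.hasDerivAt_prodMk s).continuousAt.continuousWithinAt)
      (fun s _ ↦ (h.hasDerivAt_prodMk s).hasDerivWithinAt)
      (Continuous.continuousOn (by fun_prop)) (fun s hs ↦ ?_) (by simp [T, W])
    · have h2 : V t = W t := congrArg Prod.snd (key ⟨htt, le_rfl⟩)
      rw [h2]
      exact mul_pos hV (Real.exp_pos _)
    · have hbT : b ≤ T s := by
        have : 0 ≤ V t₀ * (Real.exp (s - t₀) - 1) :=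
          mul_nonneg hV.le (sub_nonneg.2 (Real.one_le_exp (sub_nonneg.2 hs.1)))
        simp only [T]
        linarith
      have h1 : HasDerivAt T (W s) s := by
        simpa [T, W] using (((hE s).sub_const 1).const_mul (V t₀)).const_add (Θ t₀)
      have h2 : HasDerivAt W (W s - l * f (T s)) s := by
        rw [hfb _ hbT, mul_zero, sub_zero]
        exact (hE s).const_mul (V t₀)
      exact (h1.prodMk h2).hasDerivWithinAt

/-- If the orbit never moves backwards and never goes beyond `b`, it increases to `b`. -/
lemma IsOrbit.tendsto_of_trapped (hf : LipschitzWith K f) (h : IsOrbit f l Θ V) (hl : 0 < l)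
    (hf0 : ∀ u, 0 ≤ f u) (hfpos : ∀ u, u < b → 0 < f u)
    (hanti : Antitone f) (h0 : Θ 0 < b)
    (hV : ∀ t, 0 ≤ t → 0 ≤ V t) (hΘ : ∀ t, 0 ≤ t → b < Θ t → V t ≤ 0) :
    (∀ t, 0 ≤ t → 0 < V t) ∧ (∀ t, 0 ≤ t → Θ t ≤ b) ∧ Tendsto Θ atTop (nhds b) := by
  have hVpos : ∀ t, 0 ≤ t → 0 < V t := by
    intro t ht
    refine (hV t ht).lt_of_ne' fun h0t ↦ ?_
    have hzero : ∀ s, t ≤ s → V s = 0 := fun s hs ↦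
      le_antisymm (h.velocity_nonpos hl.le hf0 hs h0t.le) (hV s (ht.trans hs))
    have hd : V t - l * f (Θ t) = 0 := by
      have h1 : HasDerivWithinAt V 0 (Ici t) t :=
        (hasDerivWithinAt_const t (Ici t) (0 : ℝ)).congr_of_mem hzero self_mem_Ici
      exact (uniqueDiffWithinAt_Ici t).eq_deriv _ (h.2 t).hasDerivWithinAt h1
    have hfz : f (Θ t) = 0 := by
      rw [h0t, zero_sub, neg_eq_zero] at hd
      exact (mul_eq_zero.1 hd).resolve_left hl.ne'
    have hconst : IsOrbit f l (fun _ ↦ Θ t) (fun _ ↦ 0) :=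
      ⟨fun s ↦ hasDerivAt_const s _, fun s ↦ by simpa [hfz] using hasDerivAt_const s (0 : ℝ)⟩
    have hΘ0 := (h.eq_of_eq_at hf hconst (t₀ := t) rfl h0t 0).1
    have := hfpos _ h0
    rw [hΘ0] at this
    exact this.ne' hfz
  have hle : ∀ t, 0 ≤ t → Θ t ≤ b := fun t ht ↦ by
    by_contra! hc
    exact (hVpos t ht).not_ge (hΘ t ht hc)
  have hmono : MonotoneOn Θ (Ici 0) := by
    refine monotoneOn_of_deriv_nonneg (convex_Ici 0)
      (fun s _ ↦ (h.1 s).continuousAt.continuousWithinAt)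
      (fun s _ ↦ (h.1 s).differentiableAt.differentiableWithinAt) fun s hs ↦ ?_
    rw [(h.1 s).deriv]
    rw [interior_Ici] at hs
    exact hV s (le_of_lt hs)
  refine ⟨hVpos, hle, ?_⟩
  rw [tendsto_order]
  refine ⟨fun c hc ↦ ?_, fun c hc ↦ ?_⟩
  swap
  · filter_upwards [eventually_ge_atTop 0] with t ht
    exact (hle t ht).trans_lt hc
  by_contra hcon
  have hbelow : ∀ t, 0 ≤ t → Θ t ≤ c := by
    intro t ht
    by_contra! hlt
    refine hcon ?_
    filter_upwards [eventually_ge_atTop t] with s hs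
    exact hlt.trans_le (hmono ht (ht.trans hs) hs)
  have hδ : 0 < l * f c := mul_pos hl (hfpos c hc)
  have hdec : AntitoneOn (fun t ↦ V t - Θ t + l * f c * t) (Ici 0) := by
    have hd : ∀ t, HasDerivAt (fun t ↦ V t - Θ t + l * f c * t)
        (V t - l * f (Θ t) - V t + l * f c * 1) t :=
      fun t ↦ ((h.2 t).sub (h.1 t)).add ((hasDerivAt_id t).const_mul (l * f c))
    refine antitoneOn_of_deriv_nonpos (convex_Ici 0)
      (fun s _ ↦ (hd s).continuousAt.continuousWithinAt)
      (fun s _ ↦ (hd s).differentiableAt.differentiableWithinAt) fun s hs ↦ ?_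
    rw [(hd s).deriv]
    rw [interior_Ici] at hs
    have := mul_le_mul_of_nonneg_left (hanti (hbelow s (le_of_lt hs))) hl.le
    linarith
  have hT : 0 ≤ (|V 0 - Θ 0| + |b| + 1) / (l * f c) := by positivity
  have h1 := hdec self_mem_Ici hT hT
  have h2 : l * f c * ((|V 0 - Θ 0| + |b| + 1) / (l * f c)) = |V 0 - Θ 0| + |b| + 1 :=
    mul_div_cancel₀ _ hδ.ne'
  have h3 := hle _ hT
  have h4 := hVpos _ hT
  have h5 := le_abs_self (V 0 - Θ 0)
  have h6 := le_abs_self b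
  dsimp only at h1
  rw [h2] at h1
  linarith

/-- Shooting: along a connected family of parameters and initial velocities, some orbit
converges monotonically to the threshold `b`. -/
theorem exists_connecting_orbit {P : Type*} [TopologicalSpace P] [PreconnectedSpace P]
    (hf : LipschitzWith K f) (hM : ∀ u, f u ≤ M) (hf0 : ∀ u, 0 ≤ f u)
    (hfb : ∀ u, b ≤ u → f u = 0) (hfpos : ∀ u, u < b → 0 < f u) (hanti : Antitone f)
    {a : ℝ} (hab : a < b) {lam y : P → ℝ} (hlam : Continuous lam) (hy : Continuous y)
    (hlam0 : ∀ p, 0 ≤ lam p) (hfree : ∀ p, lam p = 0 → 0 < y p)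
    (hneg : ∃ p, y p < 0) (hzero : ∃ p, lam p = 0) :
    ∃ p, 0 < lam p ∧ ∃ Θ V : ℝ → ℝ, IsOrbit f (lam p) Θ V ∧ Θ 0 = a ∧ V 0 = y p ∧
      (∀ t, 0 ≤ t → 0 < V t) ∧ (∀ t, 0 ≤ t → Θ t ≤ b) ∧ Tendsto Θ atTop (nhds b) := by
  choose Θ V h hΘ0 hV0 using fun p ↦ exists_isOrbit hf (lam p) a (y p)
  have hM' : ∀ u, |f u| ≤ M := fun u ↦ by rw [abs_of_nonneg (hf0 u)]; exact hM u
  have hcont : ∀ t, 0 ≤ t → Continuous fun p ↦ (Θ p t, V p t) := fun t ht ↦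
    continuous_orbit_parameter hf hM' hlam hy h hΘ0 hV0 ht
  let A : Set P := ⋃ t ∈ Ici (0 : ℝ), {p | V p t < 0}
  let B : Set P := ⋃ t ∈ Ici (0 : ℝ), {p | b < Θ p t ∧ 0 < V p t}
  have hA : IsOpen A := isOpen_biUnion fun t ht ↦
    isOpen_lt (hcont t ht).snd continuous_const
  have hB : IsOpen B := isOpen_biUnion fun t ht ↦
    (isOpen_lt continuous_const (hcont t ht).fst).inter
      (isOpen_lt continuous_const (hcont t ht).snd)
  have hBfree : ∀ p, lam p = 0 → p ∈ B := by
    intro p hp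
    have hyp := hfree p hp
    have hfl : IsOrbit f (lam p) (fun t ↦ a + y p * (Real.exp t - 1))
        (fun t ↦ y p * Real.exp t) := by
      refine ⟨fun t ↦ ?_, fun t ↦ ?_⟩
      · exact (((Real.hasDerivAt_exp t).sub_const 1).const_mul (y p)).const_add a
      · simpa [hp] using (Real.hasDerivAt_exp t).const_mul (y p)
    have heq := (h p).eq_of_eq_at hf hfl (t₀ := 0) (by simp [hΘ0]) (by simp [hV0])
    have hT : 0 ≤ (b - a) / y p + 1 := by
      have := div_nonneg (sub_nonneg.2 hab.le) hyp.le
      linarith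
    refine mem_biUnion (x := (b - a) / y p + 1) hT ⟨?_, ?_⟩
    · rw [(heq _).1]
      have h1 := Real.add_one_le_exp ((b - a) / y p + 1)
      have h2 : y p * ((b - a) / y p + 1) = b - a + y p := by field_simp
      nlinarith
    · rw [(heq _).2]
      exact mul_pos hyp (Real.exp_pos _)
  have hAB : ¬ (A ∩ B).Nonempty := by
    rintro ⟨p, hpA, hpB⟩
    obtain ⟨t, ht, hpt⟩ := mem_iUnion₂.1 hpA
    obtain ⟨s, hs, hps⟩ := mem_iUnion₂.1 hpB
    exact ((h p).velocity_pos_of_beyond hf (hlam0 p) hf0 hfb hps.1.le hps.2 t).not_gt hpt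
  have hcover : ¬ (univ : Set P) ⊆ A ∪ B := by
    intro hsub
    obtain ⟨p, hp⟩ := hneg
    obtain ⟨p', hp'⟩ := hzero
    have hpA : p ∈ A := mem_biUnion (x := (0 : ℝ)) self_mem_Ici (by simpa [hV0] using hp)
    obtain ⟨x, -, hx⟩ := isPreconnected_univ A B hA hB hsub ⟨p, mem_univ _, hpA⟩
      ⟨p', mem_univ _, hBfree p' hp'⟩
    exact hAB ⟨x, hx⟩
  obtain ⟨p, -, hp⟩ := not_subset.1 hcover
  rw [mem_union, not_or] at hp
  have hl : 0 < lam p := (hlam0 p).lt_of_ne' fun hl ↦ hp.2 (hBfree p hl)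
  refine ⟨p, hl, Θ p, V p, h p, hΘ0 p, hV0 p, ?_⟩
  refine (h p).tendsto_of_trapped hf hl hf0 hfpos hanti (by rwa [hΘ0 p])
    (fun t ht ↦ ?_) (fun t ht hbt ↦ ?_)
  · by_contra! hc
    exact hp.1 (mem_biUnion (x := t) ht hc)
  · by_contra! hc
    exact hp.2 (mem_biUnion (x := t) ht ⟨hbt, hc⟩)

end Shooting

section Reaction

/-- The heat balance `F(u) = q − h((1 + u)⁴ − 1)`. -/
def heatBalance (q h u : ℝ) : ℝ := q - h * ((1 + u) ^ 4 - 1)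

lemma heatBalance_strictAntiOn {q h : ℝ} (hh : 0 < h) :
    StrictAntiOn (heatBalance q h) (Ici 0) := by
  intro u hu v hv huv
  have hu' : 0 ≤ u := hu
  have : (1 + u) ^ 4 < (1 + v) ^ 4 := pow_lt_pow_left₀ (by linarith) (by linarith) (by norm_num)
  unfold heatBalance
  nlinarith

lemma heatBalance_equilibrium {q h : ℝ} (hq : 0 < q) (hh : 0 < h) :
    heatBalance q h ((1 + q / h) ^ ((1 : ℝ) / 4) - 1) = 0 := by
  have h0 : 0 ≤ 1 + q / h := by positivity
  have h1 : ((1 + q / h) ^ ((1 : ℝ) / 4)) ^ 4 = 1 + q / h := by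
    rw [← Real.rpow_natCast, ← Real.rpow_mul h0]
    norm_num
  rw [heatBalance, add_sub_cancel, h1]
  field_simp
  ring

lemma contDiff_heatBalance (q h : ℝ) {n : WithTop ℕ∞} : ContDiff ℝ n (heatBalance q h) := by
  unfold heatBalance
  fun_prop

/-- The heat balance frozen outside of `[a, b]`. -/
def truncatedBalance (q h a b u : ℝ) : ℝ := heatBalance q h (max a (min u b))

lemma exists_lipschitzWith_truncatedBalance (q h : ℝ) {a b : ℝ} (hab : a ≤ b) :
    ∃ K, LipschitzWith K (truncatedBalance q h a b) := by
  obtain ⟨K, hK⟩ := ((contDiff_heatBalance q h).locallyLipschitz.locallyLipschitzOn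
    (s := Icc a b)).exists_lipschitzOnWith_of_compact isCompact_Icc
  refine ⟨K * 1, ?_⟩
  have hl : LipschitzWith 1 fun u : ℝ ↦ max a (min u b) := (LipschitzWith.id.min_const b).const_max a
  rw [← lipschitzOnWith_univ]
  exact hK.comp hl.lipschitzOnWith fun u _ ↦ ⟨le_max_left _ _, max_le hab (min_le_right _ _)⟩

lemma truncatedBalance_of_mem {q h a b u : ℝ} (hu : u ∈ Icc a b) :
    truncatedBalance q h a b u = heatBalance q h u := by
  rw [truncatedBalance, min_eq_left hu.2, max_eq_right hu.1]

lemma truncatedBalance_antitone {q h a b : ℝ} (hh : 0 < h) (ha : 0 ≤ a) :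
    Antitone (truncatedBalance q h a b) := fun _ _ huv ↦
  (heatBalance_strictAntiOn hh).antitoneOn (ha.trans (le_max_left _ _)) (ha.trans (le_max_left _ _))
    (max_le_max le_rfl (min_le_min_right _ huv))

end Reaction

section Ignition

open Real

/-- The function `s ↦ B(eˢ - 1) - A s eˢ` is positive on an initial interval of `(0, ∞)`. -/
lemma slope_pos_of_le {A B s t : ℝ} (hB : 0 < B) (hs : 0 < s) (hst : s ≤ t)
    (ht : 0 < B * (exp t - 1) - A * t * exp t) : 0 < B * (exp s - 1) - A * s * exp s := by
  have ht0 : 0 < t := hs.trans_le hst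
  have h1 : exp ((s / t) • -t + (1 - s / t) • 0) ≤ (s / t) • exp (-t) + (1 - s / t) • exp 0 :=
    convexOn_exp.2 (mem_univ _) (mem_univ _) (by positivity)
      (by rw [sub_nonneg, div_le_one ht0]; exact hst) (by ring)
  simp only [smul_eq_mul, mul_zero, add_zero, exp_zero, mul_one] at h1
  have h2 : s / t * -t = -s := by field_simp
  rw [h2] at h1
  have e1 : exp t * exp (-t) = 1 := by rw [← exp_add]; simp
  have e2 : exp s * exp (-s) = 1 := by rw [← exp_add]; simp
  have h3 : 0 < B * (1 - exp (-t)) - A * t := by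
    have := mul_pos ht (exp_pos (-t))
    have e : (B * (exp t - 1) - A * t * exp t) * exp (-t)
        = B * (exp t * exp (-t) - exp (-t)) - A * t * (exp t * exp (-t)) := by ring
    rw [e, e1] at this
    linarith
  have h4 : 0 < B * (1 - exp (-s)) - A * s := by
    have h5 : s / t * (1 - exp (-t)) ≤ 1 - exp (-s) := by linarith
    have h6 := mul_le_mul_of_nonneg_left h5 hB.le
    have h7 := mul_pos (div_pos hs ht0) h3
    have h8 : s / t * (B * (1 - exp (-t)) - A * t) = B * (s / t * (1 - exp (-t))) - A * s := by
      field_simp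
    linarith
  have := mul_pos h4 (exp_pos s)
  have e : (B * (1 - exp (-s)) - A * s) * exp s
      = B * (exp s - exp s * exp (-s)) - A * s * exp s := by ring
  rw [e, e2] at this
  exact this

lemma exp_sub_one_sub_pos_s19 {s : ℝ} (hs : 0 < s) : 0 < exp s - 1 - s := by
  have := add_one_lt_exp hs.ne'
  linarith

/-- The value `c⁻²` on the curve `G = 0`, as a function of `s = cR`. -/
noncomputable def ignitionParameter (q A B s : ℝ) : ℝ :=
  (A * exp s - B) / (q * (exp s - 1 - s))

lemma hasDerivAt_ignitionParameter {q A B s : ℝ} (hq : 0 < q) (hs : 0 < s) :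
    HasDerivAt (ignitionParameter q A B)
      (q * (B * (exp s - 1) - A * s * exp s) / (q * (exp s - 1 - s)) ^ 2) s := by
  have hne : q * (exp s - 1 - s) ≠ 0 := (mul_pos hq (exp_sub_one_sub_pos_s19 hs)).ne'
  have h1 : HasDerivAt (fun s ↦ A * exp s - B) (A * exp s) s :=
    ((hasDerivAt_exp s).const_mul A).sub_const B
  have h2 : HasDerivAt (fun s ↦ q * (exp s - 1 - s)) (q * (exp s - 1)) s :=
    (((hasDerivAt_exp s).sub_const 1).sub (hasDerivAt_id s)).const_mul q
  refine (h1.div h2 hne).congr_deriv ?_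
  congr 1
  ring

lemma ignitionParameter_lt {q A B s t : ℝ} (hq : 0 < q) (hB : 0 < B) (hs : 0 < s) (hst : s < t)
    (ht : 0 < B * (exp t - 1) - A * t * exp t) :
    ignitionParameter q A B s < ignitionParameter q A B t := by
  refine strictMonoOn_of_deriv_pos (convex_Icc s t)
    (fun u hu ↦ (hasDerivAt_ignitionParameter hq (hs.trans_le hu.1)).continuousAt.continuousWithinAt)
    (fun u hu ↦ ?_) ⟨le_rfl, hst.le⟩ ⟨hst.le, le_rfl⟩ hst
  rw [interior_Icc] at hu
  have hu0 : 0 < u := hs.trans hu.1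
  rw [(hasDerivAt_ignitionParameter hq hu0).deriv]
  have h1 := slope_pos_of_le hB hu0 hu.2.le ht
  have h2 := mul_pos hq (exp_sub_one_sub_pos_s19 hu0)
  positivity

end Ignition

section Uniqueness

variable {F : ℝ → ℝ} {a b : ℝ}

/-- `(Θ, V)` is a forward profile of `Θ'' = Θ' - l F(Θ)` staying in `[a, b]`, starting at `a` and
converging to `b`. -/
structure IsProfile (F : ℝ → ℝ) (a b l : ℝ) (Θ V : ℝ → ℝ) : Prop where
  deriv_pos : ∀ t ∈ Ici (0 : ℝ), HasDerivWithinAt Θ (V t) (Ici 0) t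
  deriv_vel : ∀ t ∈ Ici (0 : ℝ), HasDerivWithinAt V (V t - l * F (Θ t)) (Ici 0) t
  mem_Icc : ∀ t ∈ Ici (0 : ℝ), Θ t ∈ Icc a b
  initial : Θ 0 = a
  tendsto : Tendsto Θ atTop (nhds b)

/-- Comparison principle: a larger reaction rate forces a larger initial velocity. -/
lemma IsProfile.velocity_le {l₁ l₂ : ℝ} {Θ₁ V₁ Θ₂ V₂ : ℝ → ℝ} (hF : StrictAntiOn F (Icc a b))
    (hFb : 0 ≤ F b) (h₁ : IsProfile F a b l₁ Θ₁ V₁) (h₂ : IsProfile F a b l₂ Θ₂ V₂)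
    (hl₁ : 0 < l₁) (hl : l₁ ≤ l₂) : V₁ 0 ≤ V₂ 0 := by
  by_contra! h0
  let D : ℝ → ℝ := fun t ↦ Θ₁ t - Θ₂ t
  let E : ℝ → ℝ := fun t ↦ V₁ t - V₂ t
  have hD : ∀ t ∈ Ici (0 : ℝ), HasDerivWithinAt D (E t) (Ici 0) t := fun t ht ↦
    (h₁.deriv_pos t ht).sub (h₂.deriv_pos t ht)
  have hE : ∀ t ∈ Ici (0 : ℝ), HasDerivWithinAt E
      (E t + (l₂ * F (Θ₂ t) - l₁ * F (Θ₁ t))) (Ici 0) t := fun t ht ↦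
    ((h₁.deriv_vel t ht).sub (h₂.deriv_vel t ht)).congr_deriv (by simp only [E]; ring)
  have hEc : ContinuousOn E (Ici 0) := fun t ht ↦ (hE t ht).continuousWithinAt
  have hDc : ContinuousOn D (Ici 0) := fun t ht ↦ (hD t ht).continuousWithinAt
  have hD0 : D 0 = 0 := by simp [D, h₁.initial, h₂.initial]
  have hDmono : ∀ T, (∀ t ∈ Ico 0 T, 0 < E t) → StrictMonoOn D (Icc 0 T) := by
    intro T hT
    refine strictMonoOn_of_deriv_pos (convex_Icc 0 T) (hDc.mono Icc_subset_Ici_self) fun t ht ↦ ?_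
    rw [interior_Icc] at ht
    rw [((hD t ht.1.le).hasDerivAt (Ici_mem_nhds ht.1)).deriv]
    exact hT t ⟨ht.1.le, ht.2⟩
  have hEpos : ∀ t ∈ Ici (0 : ℝ), 0 < E t := by
    intro T hT
    by_contra! hneg
    have hcomp : IsCompact {t ∈ Icc 0 T | E t ≤ 0} :=
      isCompact_Icc.of_isClosed_subset
        ((hEc.mono Icc_subset_Ici_self).preimage_isClosed_of_isClosed isClosed_Icc isClosed_Iic)
        (fun _ ht ↦ ht.1)
    obtain ⟨τ, ⟨hτ, hEτ⟩, hmin⟩ := hcomp.exists_isLeast ⟨T, ⟨hT, le_rfl⟩, hneg⟩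
    have hbefore : ∀ t ∈ Ico 0 τ, 0 < E t := by
      intro t ht
      by_contra! hc
      exact ht.2.not_ge (hmin ⟨⟨ht.1, ht.2.le.trans hτ.2⟩, hc⟩)
    have hDm := hDmono τ hbefore
    have hexp : ∀ t ∈ Ici (0 : ℝ), HasDerivWithinAt (fun t ↦ E t * Real.exp (-t))
        ((l₂ * F (Θ₂ t) - l₁ * F (Θ₁ t)) * Real.exp (-t)) (Ici 0) t := fun t ht ↦
      ((hE t ht).mul (hasDerivAt_neg t).exp.hasDerivWithinAt).congr_deriv (by ring)
    have hmono : MonotoneOn (fun t ↦ E t * Real.exp (-t)) (Icc 0 τ) := by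
      refine monotoneOn_of_deriv_nonneg (convex_Icc 0 τ)
        (fun t ht ↦ (hexp t ht.1).continuousWithinAt.mono Icc_subset_Ici_self)
        (fun t ht ↦ ?_) fun t ht ↦ ?_
      all_goals
        rw [interior_Icc] at ht
        have hat := (hexp t ht.1.le).hasDerivAt (Ici_mem_nhds ht.1)
      · exact hat.differentiableAt.differentiableWithinAt
      · rw [hat.deriv]
        have hDt : 0 < D t := by
          rw [← hD0]
          exact hDm ⟨le_rfl, hτ.1⟩ ⟨ht.1.le, ht.2.le⟩ ht.1
        have hm₁ := h₁.mem_Icc t ht.1.le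
        have hm₂ := h₂.mem_Icc t ht.1.le
        have hb := right_mem_Icc.2 (hm₁.1.trans hm₁.2)
        have hF₁ : 0 ≤ F (Θ₁ t) := hFb.trans (hF.antitoneOn hm₁ hb hm₁.2)
        have hF₂ : F (Θ₁ t) < F (Θ₂ t) := hF hm₂ hm₁ (sub_pos.1 hDt)
        have h3 := mul_le_mul hl hF₂.le hF₁ (hl₁.le.trans hl)
        exact mul_nonneg (sub_nonneg.2 h3) (Real.exp_pos _).le
    have h4 := hmono ⟨le_rfl, hτ.1⟩ ⟨hτ.1, le_rfl⟩ hτ.1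
    have h5 : E τ * Real.exp (-τ) ≤ 0 := mul_nonpos_of_nonpos_of_nonneg hEτ (Real.exp_pos _).le
    have h6 : 0 < E 0 := sub_pos.2 h0
    simp only [neg_zero, Real.exp_zero, mul_one] at h4
    linarith
  have hD1 : 0 < D 1 := by
    rw [← hD0]
    exact hDmono 1 (fun t ht ↦ hEpos t ht.1) ⟨le_rfl, zero_le_one⟩ ⟨zero_le_one, le_rfl⟩ one_pos
  have hlim : Tendsto D atTop (nhds 0) := by simpa using h₁.tendsto.sub h₂.tendsto
  have hge : D 1 ≤ 0 := by
    refine ge_of_tendsto hlim ?_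
    filter_upwards [eventually_ge_atTop 1] with t ht
    exact (hDmono t fun s hs ↦ hEpos s hs.1).monotoneOn ⟨zero_le_one, ht⟩
      ⟨zero_le_one.trans ht, le_rfl⟩ ht
  exact hD1.not_ge hge

end Uniqueness

section Profiles

/-- The boundary value problem of the theorem on `[R, ∞)`, with reaction term `heatBalance q h`. -/
def IsHalfLineSolution (q h θhl θp R c : ℝ) (θ : ℝ → ℝ) : Prop :=
  ContDiffOn ℝ 2 θ (Ici R) ∧
    (∀ x ∈ Ici R, derivWithin (derivWithin θ (Ici R)) (Ici R) x
        - c * derivWithin θ (Ici R) x + (q - h * ((1 + θ x) ^ 4 - 1)) = 0) ∧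
    θ R = θhl ∧
    derivWithin θ (Ici R) R = c * θhl - q * R ∧
    (∀ x ∈ Ici R, 0 < derivWithin θ (Ici R) x) ∧
    Tendsto θ atTop (nhds θp)

lemma IsHalfLineSolution.exists_isProfile {q h θhl θp R c : ℝ} {θ : ℝ → ℝ} (hc : 0 < c)
    (H : IsHalfLineSolution q h θhl θp R c θ) :
    ∃ Θ V : ℝ → ℝ, IsProfile (heatBalance q h) θhl θp (1 / c ^ 2) Θ V ∧
      V 0 = θhl - q * R / c := by
  obtain ⟨hC, hode, h0, h0', hpos, hlim⟩ := H
  set θ' := derivWithin θ (Ici R) with hθ'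
  have hd : ∀ x ∈ Ici R, HasDerivWithinAt θ (θ' x) (Ici R) x := fun x hx ↦
    (hC.differentiableOn (by norm_num) x hx).hasDerivWithinAt
  have hd' : ∀ x ∈ Ici R, HasDerivWithinAt θ' (c * θ' x - heatBalance q h (θ x)) (Ici R) x := by
    intro x hx
    have h1 := ((hC.derivWithin (uniqueDiffOn_Ici R) (m := 1) (by norm_num)).differentiableOn
      (by norm_num) x hx).hasDerivWithinAt
    refine h1.congr_deriv ?_
    have := hode x hx
    rw [heatBalance, ← hθ']
    linarith
  have hmono : MonotoneOn θ (Ici R) := by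
    refine monotoneOn_of_deriv_nonneg (convex_Ici R) hC.continuousOn ?_ fun x hx ↦ ?_
    · exact (hC.differentiableOn (by norm_num)).mono interior_subset
    · rw [interior_Ici] at hx
      have hx' : x ∈ Ici R := le_of_lt (mem_Ioi.1 hx)
      rw [((hd x hx').hasDerivAt (Ici_mem_nhds hx)).deriv]
      exact (hpos x hx').le
  let φ : ℝ → ℝ := fun t ↦ R + t / c
  have hφ : MapsTo φ (Ici 0) (Ici R) := fun t ht ↦
    le_add_of_nonneg_right (div_nonneg ht hc.le)
  have hφd : ∀ t ∈ Ici (0 : ℝ), HasDerivWithinAt φ (1 / c) (Ici 0) t := fun t _ ↦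
    ((hasDerivWithinAt_id t _).div_const c).const_add R
  have hφlim : Tendsto φ atTop atTop :=
    tendsto_atTop_add_const_left _ _ (tendsto_id.atTop_div_const hc)
  refine ⟨fun t ↦ θ (φ t), fun t ↦ θ' (φ t) / c, ⟨fun t ht ↦ ?_, fun t ht ↦ ?_, fun t ht ↦ ?_, ?_,
    hlim.comp hφlim⟩, ?_⟩
  · exact ((hd _ (hφ ht)).comp t (hφd t ht) hφ).congr_deriv (by ring)
  · refine (((hd' _ (hφ ht)).comp t (hφd t ht) hφ).div_const c).congr_deriv ?_
    field_simp
  · refine ⟨?_, ?_⟩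
    · rw [← h0]
      exact hmono self_mem_Ici (hφ ht) (hφ ht)
    · refine ge_of_tendsto hlim ?_
      filter_upwards [eventually_ge_atTop (φ t)] with x hx
      exact hmono (hφ ht) ((hφ ht).trans hx) hx
  · simp [φ, h0]
  · simp only [φ, zero_div, add_zero, h0']
    field_simp

/-- A smooth orbit on the whole line yields, after scaling and translation of the variable, a
solution of the boundary value problem. -/
lemma isHalfLineSolution_of_orbit {q h θhl θp R c l : ℝ} {f Θ V : ℝ → ℝ} (hc : 0 < c)
    (hl : l * c ^ 2 = 1) (hfc : Continuous f) (hΘ : IsOrbit f l Θ V)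
    (hf : ∀ t, 0 ≤ t → f (Θ t) = heatBalance q h (Θ t)) (h0 : Θ 0 = θhl)
    (hV0 : c * V 0 = c * θhl - q * R) (hpos : ∀ t, 0 ≤ t → 0 < V t)
    (hlim : Tendsto Θ atTop (nhds θp)) :
    IsHalfLineSolution q h θhl θp R c fun x ↦ Θ (c * (x - R)) := by
  have hφ : ∀ x, HasDerivAt (fun x ↦ c * (x - R)) c x := fun x ↦ by
    simpa using ((hasDerivAt_id x).sub_const R).const_mul c
  have hd : ∀ x, HasDerivAt (fun x ↦ Θ (c * (x - R))) (c * V (c * (x - R))) x := fun x ↦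
    ((hΘ.1 _).comp x (hφ x)).congr_deriv (by ring)
  have hd' : ∀ x, HasDerivAt (fun x ↦ c * V (c * (x - R)))
      (c ^ 2 * V (c * (x - R)) - f (Θ (c * (x - R)))) x := by
    intro x
    refine (((hΘ.2 _).comp x (hφ x)).const_mul c).congr_deriv ?_
    linear_combination -f (Θ (c * (x - R))) * hl
  have e : ∀ x ∈ Ici R,
      derivWithin (fun x ↦ Θ (c * (x - R))) (Ici R) x = c * V (c * (x - R)) := fun x hx ↦
    (hd x).hasDerivWithinAt.derivWithin (uniqueDiffOn_Ici R x hx)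
  have hnn : ∀ x ∈ Ici R, 0 ≤ c * (x - R) := fun x hx ↦ mul_nonneg hc.le (sub_nonneg.2 hx)
  have hΘc : Continuous Θ := continuous_iff_continuousAt.2 fun t ↦ (hΘ.1 t).continuousAt
  have hVc : Continuous V := continuous_iff_continuousAt.2 fun t ↦ (hΘ.2 t).continuousAt
  refine ⟨?_, fun x hx ↦ ?_, by simp [h0], ?_, fun x hx ↦ ?_, ?_⟩
  · refine ContDiff.contDiffOn ?_
    rw [show (2 : WithTop ℕ∞) = 1 + 1 from rfl, contDiff_succ_iff_deriv]
    refine ⟨fun x ↦ (hd x).differentiableAt, by simp, ?_⟩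
    rw [show deriv (fun x ↦ Θ (c * (x - R))) = fun x ↦ c * V (c * (x - R)) from
      funext fun x ↦ (hd x).deriv, contDiff_one_iff_deriv]
    refine ⟨fun x ↦ (hd' x).differentiableAt, ?_⟩
    rw [show deriv (fun x ↦ c * V (c * (x - R))) =
      fun x ↦ c ^ 2 * V (c * (x - R)) - f (Θ (c * (x - R))) from funext fun x ↦ (hd' x).deriv]
    fun_prop
  · rw [derivWithin_congr e (e x hx), e x hx,
      (hd' x).hasDerivWithinAt.derivWithin (uniqueDiffOn_Ici R x hx), hf _ (hnn x hx), heatBalance]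
    ring
  · rw [e R self_mem_Ici, sub_self, mul_zero, hV0]
  · rw [e x hx]
    exact mul_pos hc (hpos _ (hnn x hx))
  · exact hlim.comp ((tendsto_atTop_add_const_right _ (-R) tendsto_id).const_mul_atTop hc)

end Profiles

section Existence

variable {q h θig θhl θp : ℝ}

lemma exists_pair (hq : 0 < q) (hh : 0 < h) (hθp : heatBalance q h θp = 0)
    (h1 : 0 < θig) (h2 : θig < θhl) (h3 : θhl < θp) :
    ∃ R c : ℝ, 0 < R ∧ 0 < c ∧ q * R < c * θhl ∧ G q θig θhl R c = 0 ∧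
      ∃ θ, IsHalfLineSolution q h θhl θp R c θ := by
  have hhl : 0 < θhl := h1.trans h2
  set f := truncatedBalance q h θhl θp with hf
  obtain ⟨K, hK⟩ := exists_lipschitzWith_truncatedBalance q h h3.le
  have hanti : Antitone f := truncatedBalance_antitone hh hhl.le
  have hfb : ∀ u, θp ≤ u → f u = 0 := fun u hu ↦ by
    rw [hf, truncatedBalance, min_eq_right hu, max_eq_right h3.le, hθp]
  have hfpos : ∀ u, u < θp → 0 < f u := fun u hu ↦ by
    rw [hf, truncatedBalance, min_eq_left hu.le, ← hθp]
    exact heatBalance_strictAntiOn hh (hhl.le.trans (le_max_left _ _)) (hhl.trans h3).le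
      (max_lt h3 hu)
  have hf0 : ∀ u, 0 ≤ f u := fun u ↦ (lt_or_ge u θp).elim (fun hu ↦ (hfpos u hu).le)
    fun hu ↦ (hfb u hu).ge
  have hM : ∀ u, f u ≤ heatBalance q h θhl := fun u ↦
    (heatBalance_strictAntiOn hh).antitoneOn hhl.le (hhl.le.trans (le_max_left _ _))
      (le_max_left _ _)
  have hratio : 1 < θhl / θig := (one_lt_div h1).2 h2
  set s₀ := Real.log (θhl / θig) with hs₀
  set S := θhl / θig with hS
  have hs₀pos : 0 < s₀ := Real.log_pos hratio
  have hs₀S : s₀ ≤ S := by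
    have := Real.log_le_sub_one_of_pos (one_pos.trans hratio)
    linarith
  have hexp₀ : θig * Real.exp s₀ = θhl := by
    rw [hs₀, Real.exp_log (one_pos.trans hratio), hS]
    field_simp
  have hpos : ∀ p : Icc s₀ S, 0 < (p : ℝ) := fun p ↦ hs₀pos.trans_le p.2.1
  let lam : Icc s₀ S → ℝ := fun p ↦ ignitionParameter q θig θhl p
  let y : Icc s₀ S → ℝ := fun p ↦ θhl - lam p * q * p
  have hlam : Continuous lam := continuous_iff_continuousAt.2 fun p ↦
    (hasDerivAt_ignitionParameter hq (hpos p)).continuousAt.comp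
      (f := fun p : Icc s₀ S ↦ (p : ℝ)) continuousAt_subtype_val
  have hy : Continuous y := by fun_prop
  have hlam0 : ∀ p, 0 ≤ lam p := by
    intro p
    refine div_nonneg ?_ (mul_pos hq (exp_sub_one_sub_pos_s19 (hpos p))).le
    have := mul_le_mul_of_nonneg_left (Real.exp_le_exp.2 p.2.1) h1.le
    linarith
  have : PreconnectedSpace (Icc s₀ S) := isPreconnected_iff_preconnectedSpace.1 isPreconnected_Icc
  obtain ⟨p, hlp, Θ, V, hO, hΘ0, hV0, hVpos, hΘb, hlim⟩ := exists_connecting_orbit hK hM hf0 hfb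
    hfpos hanti h3 hlam hy hlam0 (fun p hp ↦ by simpa [y, hp] using hhl)
    ⟨⟨S, hs₀S, le_rfl⟩, by
      have hSpos := hs₀pos.trans_le hs₀S
      have hm := exp_sub_one_sub_pos_s19 hSpos
      have e1 : θig * S = θhl := by rw [hS]; field_simp
      have e2 : lam ⟨S, hs₀S, le_rfl⟩ * q * (Real.exp S - 1 - S) = θig * Real.exp S - θhl := by
        simp only [lam, ignitionParameter]
        field_simp
      have e3 : y ⟨S, hs₀S, le_rfl⟩ * (Real.exp S - 1 - S) = -θhl := by
        simp only [y]
        linear_combination (-S) * e2 - Real.exp S * e1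
      exact neg_of_mul_neg_left (by linarith) hm.le⟩
    ⟨⟨s₀, le_rfl, hs₀S⟩, by simp [lam, ignitionParameter, hexp₀]⟩
  have hΘa : ∀ t, 0 ≤ t → θhl ≤ Θ t := by
    have hmono : MonotoneOn Θ (Ici 0) := by
      refine monotoneOn_of_deriv_nonneg (convex_Ici 0)
        (fun s _ ↦ (hO.1 s).continuousAt.continuousWithinAt)
        (fun s _ ↦ (hO.1 s).differentiableAt.differentiableWithinAt) fun s hs ↦ ?_
      rw [(hO.1 s).deriv]
      rw [interior_Ici] at hs
      exact (hVpos s (le_of_lt hs)).le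
    intro t ht
    rw [← hΘ0]
    exact hmono self_mem_Ici ht ht
  set r := √(lam p) with hr
  have hrpos : 0 < r := Real.sqrt_pos.2 hlp
  have hrsq : lam p = r ^ 2 := (Real.sq_sqrt hlp.le).symm
  have hyp : 0 < θhl - r ^ 2 * q * p := by
    have := hVpos 0 le_rfl
    rwa [hV0, show y p = θhl - lam p * q * p from rfl, hrsq] at this
  refine ⟨p * r, r⁻¹, mul_pos (hpos p) hrpos, inv_pos.2 hrpos, ?_, ?_,
    fun x ↦ Θ (r⁻¹ * (x - p * r)), ?_⟩
  · rw [inv_mul_eq_div, lt_div_iff₀ hrpos]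
    linarith
  · have hm := exp_sub_one_sub_pos_s19 (hpos p)
    have e1 : r⁻¹ * (p * r) = (p : ℝ) := by field_simp
    have e2 : r ^ 2 * (q * (Real.exp p - 1 - p)) = θig * Real.exp p - θhl := by
      rw [← hrsq]
      simp only [lam, ignitionParameter]
      field_simp
    rw [G, e1, ← e2]
    field_simp
    ring
  · refine isHalfLineSolution_of_orbit (inv_pos.2 hrpos) (by rw [hrsq]; field_simp)
      hK.continuous hO (fun t ht ↦ truncatedBalance_of_mem ⟨hΘa t ht, hΘb t ht⟩) hΘ0 ?_ hVpos hlim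
    rw [hV0, show y p = θhl - lam p * q * p from rfl, hrsq]
    field_simp

end Existence

section PairUniqueness

variable {q h θig θhl θp R c : ℝ}

/-- On the curve `G = 0`, `c⁻²` is determined by `s = cR`. -/
lemma ignitionParameter_eq (hq : 0 < q) (hR : 0 < R) (hc : 0 < c) (hG : G q θig θhl R c = 0) :
    ignitionParameter q θig θhl (c * R) = 1 / c ^ 2 := by
  have hm := mul_pos hq (exp_sub_one_sub_pos_s19 (mul_pos hc hR))
  rw [G] at hG
  rw [ignitionParameter, div_eq_div_iff hm.ne' (by positivity)]
  linarith

lemma slope_pos_of_lt (hR : 0 < R) (hc : 0 < c) (hG : G q θig θhl R c = 0)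
    (hlt : q * R < c * θhl) :
    0 < θhl * (Real.exp (c * R) - 1) - θig * (c * R) * Real.exp (c * R) := by
  have hm := exp_sub_one_sub_pos_s19 (mul_pos hc hR)
  rw [G] at hG
  have hprod := mul_pos (mul_pos hc (sub_pos.2 hlt)) hm
  have hkey : c * (c * θhl - q * R) * (Real.exp (c * R) - 1 - c * R) =
      c ^ 2 * (θhl * (Real.exp (c * R) - 1) - θig * (c * R) * Real.exp (c * R)) := by
    linear_combination (-(c * R)) * hG
  rw [hkey] at hprod
  exact pos_of_mul_pos_right hprod (by positivity)

lemma mul_le_mul_of_solutions {R₁ c₁ R₂ c₂ : ℝ} {θ₁ θ₂ : ℝ → ℝ} (hq : 0 < q) (hh : 0 < h)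
    (hθp : heatBalance q h θp = 0) (hhl : 0 < θhl)
    (hR₁ : 0 < R₁) (hc₁ : 0 < c₁) (hG₁ : G q θig θhl R₁ c₁ = 0)
    (hR₂ : 0 < R₂) (hc₂ : 0 < c₂) (hG₂ : G q θig θhl R₂ c₂ = 0) (hlt₂ : q * R₂ < c₂ * θhl)
    (H₁ : IsHalfLineSolution q h θhl θp R₁ c₁ θ₁) (H₂ : IsHalfLineSolution q h θhl θp R₂ c₂ θ₂) :
    c₂ * R₂ ≤ c₁ * R₁ := by
  by_contra! hs
  have hlam := ignitionParameter_lt hq hhl (mul_pos hc₁ hR₁) hs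
    (slope_pos_of_lt hR₂ hc₂ hG₂ hlt₂)
  rw [ignitionParameter_eq hq hR₁ hc₁ hG₁, ignitionParameter_eq hq hR₂ hc₂ hG₂] at hlam
  obtain ⟨Θ₁, V₁, P₁, hV₁⟩ := H₁.exists_isProfile hc₁
  obtain ⟨Θ₂, V₂, P₂, hV₂⟩ := H₂.exists_isProfile hc₂
  have hle := P₁.velocity_le
    ((heatBalance_strictAntiOn hh).mono fun u hu ↦ hhl.le.trans hu.1) hθp.ge P₂
    (by positivity) hlam.le
  have e₁ : q * R₁ / c₁ = q * (1 / c₁ ^ 2 * (c₁ * R₁)) := by field_simp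
  have e₂ : q * R₂ / c₂ = q * (1 / c₂ ^ 2 * (c₂ * R₂)) := by field_simp
  have h5 : 1 / c₁ ^ 2 * (c₁ * R₁) < 1 / c₂ ^ 2 * (c₂ * R₂) :=
    mul_lt_mul'' hlam hs (by positivity) (by positivity)
  rw [hV₁, hV₂, e₁, e₂] at hle
  have := mul_lt_mul_of_pos_left h5 hq
  linarith

end PairUniqueness

/-- Existence and uniqueness of the pair `(R*, c*)` in the interior of `Q₊`
satisfying both the transcendental equation `G(R*, c*) = 0` and the
stable-separatrix condition: the solution of `θ'' − c*θ' + F(θ) = 0` on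
`[R*, ∞)` with `θ(R*) = θ_hl`, `θ'(R*) = c*θ_hl − qR*` is increasing and tends
to `θ₊`, where `F(u) = q − h((1 + u)⁴ − 1)`.
(Derivatives on `[R*, ∞)` are taken within `[R*, ∞)`.) -/
theorem stmt19 (q h θig θhl θp : ℝ) (hq : 0 < q) (hh : 0 < h)
    (hθp : θp = (1 + q / h) ^ ((1 : ℝ) / 4) - 1)
    (h1 : 0 < θig) (h2 : θig < θhl) (h3 : θhl < θp) :
    ∃! p : ℝ × ℝ,
      0 < p.1 ∧ 0 < p.2 ∧ q * p.1 < p.2 * θhl ∧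
      G q θig θhl p.1 p.2 = 0 ∧
      ∃ θ : ℝ → ℝ,
        ContDiffOn ℝ 2 θ (Ici p.1) ∧
        (∀ x ∈ Ici p.1, derivWithin (derivWithin θ (Ici p.1)) (Ici p.1) x
            - p.2 * derivWithin θ (Ici p.1) x
            + (q - h * ((1 + θ x) ^ 4 - 1)) = 0) ∧
        θ p.1 = θhl ∧
        derivWithin θ (Ici p.1) p.1 = p.2 * θhl - q * p.1 ∧
        (∀ x ∈ Ici p.1, 0 < derivWithin θ (Ici p.1) x) ∧
        Tendsto θ atTop (nhds θp) := by
  have hhl : 0 < θhl := h1.trans h2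
  have hF : heatBalance q h θp = 0 := hθp ▸ heatBalance_equilibrium hq hh
  obtain ⟨R, c, hR, hc, hlt, hG, θ, H⟩ := exists_pair hq hh hF h1 h2 h3
  refine ⟨(R, c), ⟨hR, hc, hlt, hG, θ, H⟩, ?_⟩
  rintro ⟨R', c'⟩ ⟨hR' : 0 < R', hc' : 0 < c', hlt' : q * R' < c' * θhl,
    hG' : G q θig θhl R' c' = 0, θ', H' : IsHalfLineSolution q h θhl θp R' c' θ'⟩
  have hs : c' * R' = c * R := le_antisymm
    (mul_le_mul_of_solutions hq hh hF hhl hR hc hG hR' hc' hG' hlt' H H')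
    (mul_le_mul_of_solutions hq hh hF hhl hR' hc' hG' hR hc hG hlt H' H)
  have hl := ignitionParameter_eq hq hR' hc' hG'
  rw [hs, ignitionParameter_eq hq hR hc hG, one_div, one_div, inv_inj] at hl
  have hcc : c' = c := ((pow_left_inj₀ hc.le hc'.le two_ne_zero).1 hl).symm
  rw [hcc] at hs
  rw [hcc, mul_left_cancel₀ hc.ne' hs]
end
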